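/- Let n and r be positive integers with 2^{n−1} − 1 ≤ r ≤ 2^n − 2, and let (d_i)_{0≤i≤r+1} be a tuple of non-negative integers of the same parity. Suppose one of the following holds: (1) d_0 is even and d_i ≥ m_i for all i; (2) d_0 is odd and d_i ≥ m_i' for all i; (3) d_0 has the same parity as m̃_0 and d_i ≥ m̃_i for all i; (4) d_0 has the same parity as m̃_0' and d_i ≥ m̃_i' for all i. Then a very general complex r-fold quadric bundle of type (d_i)_{0≤i≤r+1} over ℙ^n is not stably rational. -/

import Mathlib

/-!
The coefficients of a very general matrix are algebraically independent, so a place of `ℂ` with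
residue field of characteristic `p` specialises them to any prescribed values in `𝔽_p`
(`exists_special_place`, `exists_special`).  For `p = 3` a diagonal specialisation shows that the
matrix defines a quadric bundle (`isQuadricBundle_of_indep`).  The failure of stable rationality
comes from `p = 2`, by specialisation to a bundle (`Shape.a₀`) whose quadratic form is, up to
squares and a common factor, a subform of
`N(y) + g₁ g₂ N(y') + g₁ y_∅ y'_∅`, where `N(y) = ∑_S ∏_{i ∈ S} (x_i / x₀) y_S²` runs over the
subsets `S` of `{1, …, n - 1}` and `g_j = A² + B_j` with `A` a Fermat form and `B_j` a monomial.

The obstruction is the logarithmic form `∏ dlog (x_i / x₀) · dlog g₁` on the base in characteristic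
two, through its coefficient `Theta`.  The form is nonzero at the generic point.  Over a discretely
valued field in which the quadratic form is isotropic, `Theta` is integral: if the reduction of `x`
satisfies an algebraic relation over the constants, isotropy forces the logarithmic form to be
small (`small_residue_form`), and otherwise integrality is immediate (`Theta_le_one`).  So `Theta`,
set to zero at nongeneric points (`fval`), has no poles along a rational curve over which the
quadratic form is isotropic, and takes the same value at both ends of the curve (`fval_const`).

Let now `L` be a field with a place extending that of `ℂ`.  A polynomial path over `L` in the quadric
bundle reduces, along every edge of its Newton polygon, to a rational curve of the preceding kind
(`edgeConst_of_path`).  Walking along the polygon (`newton_walk`) shows that the reductions of the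
points of the path at `0` and `1` have the same value of `fval` (`endpoints`).  The generic point of
the bundle, times an affine space, lives over such a field `L`, with `fval` nonzero at its reduction
(`Model`, `exists_model`).  If the bundle were stably rational, the line in the parameter space from
a complex point to the generic point would give a path joining the generic point to a point with
complex coordinates.  There `fval` vanishes, because the reduction has coordinates in the constant
field: a contradiction (`no_param`, `geom`).

Each of the four conditions on the degrees leaves enough room for a special bundle, since the forms
`g_j` have degree `2 n ≤ 2 ^ n` (`exists_shape`, `final_aux`).
-/

noncomputable section
open MvPolynomial

/-- The rational function field `ℂ(t₁, …, t_d)`. -/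
abbrev RatFF (d : ℕ) : Type := FractionRing (MvPolynomial (Fin d) ℂ)

/-- An affine ℂ-algebra `R` (a chart, or an affine cone, of a variety `V`) has stably
rational fraction field: `Frac(R)(y₁,…,y_m) ≅ ℂ(t₁,…,t_d)` for some `m`, `d`.
If `R` is the coordinate ring of the affine cone over a projective variety `V`
(so that `Frac R = ℂ(V)(t)` is stably birational to `ℂ(V)`), this holds if and only if
`V` is stably rational, i.e. `V × ℙᵐ` is birational to a projective space for some `m`. -/
def IsStablyRationalSpec (R : Type*) [CommRing R] [Algebra ℂ R] : Prop :=
  ∃ m d : ℕ, Nonempty (FractionRing (MvPolynomial (Fin m) R) ≃ₐ[ℂ] RatFF d)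

/-- The fraction field of the affine ℂ-algebra `R` embeds into a purely transcendental
extension of `ℂ`.  If `R` is the coordinate ring of the affine cone over a projective
variety `V`, this holds if and only if `V` is unirational. -/
def IsUnirationalSpec (R : Type*) [CommRing R] [Algebra ℂ R] : Prop :=
  ∃ d : ℕ, Nonempty (FractionRing R →ₐ[ℂ] RatFF d)

/-- `Z` is an algebraic (Zariski closed) subset of a parameter space `V` with coordinates
`coords`: it is the common zero locus of a set of polynomial functions in the coordinates. -/
def IsAlgSubsetOn {V : Type*} (coords : Set (V → ℂ)) (Z : Set V) : Prop :=
  ∃ S : Set (V → ℂ),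
    S ⊆ ↑(Algebra.adjoin ℂ coords) ∧ Z = {v | ∀ f ∈ S, f v = 0}

/-- `P` holds for a very general point of the parameter space `V`: it holds away from a
countable union of proper algebraic subsets. -/
def VeryGenerallyOn {V : Type*} (coords : Set (V → ℂ)) (P : V → Prop) : Prop :=
  ∃ Z : ℕ → Set V,
    (∀ m, IsAlgSubsetOn coords (Z m) ∧ Z m ≠ Set.univ) ∧ ∀ v, (∀ m, v ∉ Z m) → P v

namespace QB

/-- Homogeneous coordinate ring `ℂ[x₀, …, xₙ]` of `ℙⁿ`. -/
abbrev PolyP (n : ℕ) := MvPolynomial (Fin (n+1)) ℂ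

/-- Coordinate ring `ℂ[x₀,…,xₙ,z₀,…,z_{r+1}]` of the affine double cone over
`ℙ(𝓔)` (`x`'s: base variables, `z`'s: fibre variables). -/
abbrev Amb (n r : ℕ) := MvPolynomial (Fin (n+1) ⊕ Fin (r+2)) ℂ

/-- Homogeneous component of (possibly negative) degree `m`; it is `0` for `m < 0`. -/
def homComp (n : ℕ) (m : ℤ) : Submodule ℂ (PolyP n) :=
  if 0 ≤ m then homogeneousSubmodule (Fin (n+1)) ℂ m.toNat else ⊥

/-- The parameter space of symmetric matrices `A = (a_{ij})`, `0 ≤ i,j ≤ r+1`, of homogeneous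
polynomials with `deg a_{ij} = l_i + l_j + l₀`, i.e. of line bundle valued quadratic forms
`q : 𝓔 → O_{ℙⁿ}(l₀)` on `𝓔 = ⊕_{i=0}^{r+1} O_{ℙⁿ}(-l_i)`.  The corresponding
quadric bundle `X = {q = 0} ⊂ ℙ(𝓔)`, given locally over `ℙⁿ` by
`∑ a_{ij} z_i z_j = 0`, is an `r`-fold quadric bundle over `ℙⁿ` of type `(d_i)` with
`d_i = 2 l_i + l₀`. -/
def SymMat (n r : ℕ) (l : Fin (r+2) → ℤ) (l₀ : ℤ) : Type :=
  {a : Fin (r+2) → Fin (r+2) → PolyP n //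
    (∀ i j, a i j = a j i) ∧ ∀ i j, a i j ∈ homComp n (l i + l j + l₀)}

variable {n r : ℕ} {l : Fin (r+2) → ℤ} {l₀ : ℤ}

/-- The quadratic form `q = ∑_{i,j} a_{ij} z_i z_j` as a polynomial on the double affine cone. -/
def qpoly (A : SymMat n r l l₀) : Amb n r :=
  ∑ i, ∑ j, (rename Sum.inl (A.1 i j)) * X (Sum.inr i) * X (Sum.inr j)

/-- `A` defines a quadric bundle over `ℙⁿ`, i.e. `X = {q = 0} → ℙⁿ` is flat (the quadratic
form is nonzero on each fibre) with generic fibre a smooth quadric (the symmetric matrix is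
generically non-degenerate). -/
def IsQuadricBundle (A : SymMat n r l l₀) : Prop :=
  (Matrix.det (Matrix.of fun i j => A.1 i j) ≠ 0) ∧
    ∀ x : Fin (n+1) → ℂ, x ≠ 0 → ∃ i j, eval x (A.1 i j) ≠ 0

/-- Substitution `x_i = 1`, `z_j = 1`, giving the equation of `X` on the standard affine
chart `{x_i ≠ 0, z_j ≠ 0}` of `ℙ(𝓔)`. -/
def chartSub (i : Fin (n+1)) (j : Fin (r+2)) (p : Amb n r) : Amb n r :=
  aeval (fun v => if v = Sum.inl i ∨ v = Sum.inr j then 1 else X v) p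

/-- The total space `X = {q = 0} ⊂ ℙ(𝓔)` is smooth over `ℂ`: on each standard affine chart
the dehomogenized equation satisfies the Jacobian criterion. -/
def SmoothTotalSpace (A : SymMat n r l l₀) : Prop :=
  ∀ (i : Fin (n+1)) (j : Fin (r+2)) (p : Fin (n+1) ⊕ Fin (r+2) → ℂ),
    eval p (chartSub i j (qpoly A)) = 0 →
      ∃ v, eval p (pderiv v (chartSub i j (qpoly A))) ≠ 0

/-- Coordinate ring of the affine double cone over `X = {q = 0} ⊂ ℙ(𝓔)`; the corresponding
affine variety is stably birational to `X` (its fraction field is `ℂ(X)(t, s)`). -/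
def ConeRing (A : SymMat n r l l₀) : Type :=
  Amb n r ⧸ Ideal.span {qpoly A}

instance (A : SymMat n r l l₀) : CommRing (ConeRing A) := Ideal.Quotient.commRing _
instance (A : SymMat n r l l₀) : Algebra ℂ (ConeRing A) := Ideal.Quotient.algebra ℂ

/-- Coordinate ring of the affine chart `X ∩ {x_i = 1, z_j = 1}` of `X ⊂ ℙ(𝓔)`;
when nonempty, this chart is a dense open subvariety of `X`, so if it is integral its
fraction field is the function field `ℂ(X)`. -/
def ChartRing (A : SymMat n r l l₀) (i : Fin (n+1)) (j : Fin (r+2)) : Type :=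
  Amb n r ⧸ Ideal.span {qpoly A, X (Sum.inl i) - 1, X (Sum.inr j) - 1}

instance (A : SymMat n r l l₀) (i : Fin (n+1)) (j : Fin (r+2)) : CommRing (ChartRing A i j) :=
  Ideal.Quotient.commRing _
instance (A : SymMat n r l l₀) (i : Fin (n+1)) (j : Fin (r+2)) : Algebra ℂ (ChartRing A i j) :=
  Ideal.Quotient.algebra ℂ

/-- The quadric bundle `X` given by `A` is rational over `ℂ`: `X` is integral and its
function field (computed on a dense standard affine chart) is purely transcendental,
`ℂ(X) ≅ ℂ(t₁, …, t_{n+r})`, i.e. `X` is birational to `ℙ^{n+r}`. -/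
def IsRationalQB (A : SymMat n r l l₀) : Prop :=
  IsDomain (ConeRing A) ∧
    ∃ i j, Nonempty (FractionRing (ChartRing A i j) ≃ₐ[ℂ] RatFF (n+r))

/-- The quadric bundle `X` given by `A` is stably rational: `X × ℙᵐ` is birational to a
projective space for some `m`; equivalently its affine double cone is. -/
def IsStablyRationalQB (A : SymMat n r l l₀) : Prop :=
  IsStablyRationalSpec (ConeRing A)

/-- The quadric bundle `X` given by `A` is unirational: `ℂ(X)` embeds into a purely
transcendental extension of `ℂ`; equivalently this holds for its affine double cone. -/
def IsUnirationalQB (A : SymMat n r l l₀) : Prop :=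
  IsUnirationalSpec (ConeRing A)

/-- The coordinates (coefficients of the matrix entries) on the parameter space `SymMat`. -/
def symMatCoords (n r : ℕ) (l : Fin (r+2) → ℤ) (l₀ : ℤ) :
    Set (SymMat n r l l₀ → ℂ) :=
  {f | ∃ (i j : Fin (r+2)) (m : Fin (n+1) →₀ ℕ), f = fun A => coeff m (A.1 i j)}

/-- The euclidean (analytic) topology on the parameter space, induced from the coefficients. -/
def coeffTopology (n r : ℕ) (l : Fin (r+2) → ℤ) (l₀ : ℤ) :
    TopologicalSpace (SymMat n r l l₀) :=
  TopologicalSpace.induced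
    (fun A (p : Fin (r+2) × Fin (r+2) × ((Fin (n+1)) →₀ ℕ)) => coeff p.2.2 (A.1 p.1 p.2.1))
    inferInstance

/-- Dehomogenization `ℂ[x₀,…,xₙ] → ℂ(t₁,…,tₙ) = ℂ(ℙⁿ)`, `x₀ ↦ 1`, `x_i ↦ t_i`. -/
def dehom (n : ℕ) : PolyP n →ₐ[ℂ] RatFF n :=
  aeval fun i : Fin (n+1) =>
    if h : i = 0 then 1 else algebraMap (MvPolynomial (Fin n) ℂ) (RatFF n) (X (i.pred h))

/-- The quadric bundle given by `A` admits a rational section, i.e. its generic fibre,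
the quadric `{∑ a_{ij}(x) z_i z_j = 0} ⊂ ℙ^{r+1}_{ℂ(ℙⁿ)}`, has a rational point. -/
def HasRationalSection (A : SymMat n r l l₀) : Prop :=
  ∃ w : Fin (r+2) → RatFF n, w ≠ 0 ∧ ∑ i, ∑ j, dehom n (A.1 i j) * w i * w j = 0

end QB

/-- The number of `true` entries (the "length" `|ε|`) of a tuple `ε ∈ {0,1}^m`. -/
def boolWeight {m : ℕ} (ε : Fin m → Bool) : ℕ :=
  (Finset.univ.filter fun i => ε i = true).card

namespace QBProof

/-! ### Logarithmic forms over a valued field -/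

section LogForms

variable {κ M E Γ : Type*} [Field κ] [Field M] [Algebra κ M] [CommRing E] [Algebra M E]
  [Algebra κ E] [LinearOrderedCommGroupWithZero Γ]

/-- The logarithmic derivative `df / f` (with `dlog 0 = 0`). -/
def dlog (d : Derivation κ M E) (f : M) : E := f⁻¹ • d f

/-- The ring of logarithmic forms: the subring generated by the integral scalars and all
logarithmic derivatives. -/
def LogRing (v : Valuation M Γ) (d : Derivation κ M E) : Subring E :=
  Subring.closure ({e | ∃ a, v a ≤ 1 ∧ e = algebraMap M E a} ∪ {e | ∃ f, e = dlog d f})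

/-- A form is small if it is a scalar from the maximal ideal times a logarithmic form. -/
def Small (v : Valuation M Γ) (d : Derivation κ M E) (e : E) : Prop :=
  ∃ π : M, v π < 1 ∧ ∃ e' ∈ LogRing v d, e = π • e'

variable (v : Valuation M Γ) (d : Derivation κ M E)

lemma dlog_mem (f : M) : dlog d f ∈ LogRing v d :=
  Subring.subset_closure (Or.inr ⟨f, rfl⟩)

lemma smul_mem_logRing {a : M} (ha : v a ≤ 1) {e : E} (he : e ∈ LogRing v d) :
    a • e ∈ LogRing v d := by
  rw [Algebra.smul_def]
  exact mul_mem (Subring.subset_closure (Or.inl ⟨a, ha, rfl⟩)) he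

lemma d_eq_smul_dlog (f : M) : d f = f • dlog d f := by
  by_cases hf : f = 0
  · simp [hf, dlog]
  · rw [dlog, smul_smul, mul_inv_cancel₀ hf, one_smul]

lemma dlog_mul {f g : M} (hf : f ≠ 0) (hg : g ≠ 0) :
    dlog d (f * g) = dlog d f + dlog d g := by
  simp only [dlog, Derivation.leibniz, smul_add, smul_smul]
  rw [add_comm]
  congr 2 <;> field_simp

lemma dlog_inv {f : M} (hf : f ≠ 0) : dlog d f⁻¹ = - dlog d f := by
  have h := dlog_mul d hf (inv_ne_zero hf)
  rw [mul_inv_cancel₀ hf] at h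
  have h1 : dlog d (1 : M) = 0 := by simp [dlog]
  rw [h1] at h
  exact (neg_eq_of_add_eq_zero_right h.symm).symm

variable {v d}

lemma Small.mul {e e' : E} (h : Small v d e) (h' : e' ∈ LogRing v d) : Small v d (e * e') := by
  obtain ⟨π, hπ, f, hf, rfl⟩ := h
  exact ⟨π, hπ, f * e', mul_mem hf h', by rw [smul_mul_assoc]⟩

lemma Small.mul' {e e' : E} (h : Small v d e) (h' : e' ∈ LogRing v d) : Small v d (e' * e) := by
  rw [mul_comm]; exact h.mul h'

lemma Small.smul {a : M} (ha : v a ≤ 1) {e : E} (h : Small v d e) : Small v d (a • e) := by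
  obtain ⟨π, hπ, f, hf, rfl⟩ := h
  exact ⟨π, hπ, a • f, smul_mem_logRing v d ha hf, by rw [smul_comm]⟩

lemma small_smul {a : M} (ha : v a < 1) {e : E} (h : e ∈ LogRing v d) : Small v d (a • e) :=
  ⟨a, ha, e, h, rfl⟩

lemma Small.add {e e' : E} (h : Small v d e) (h' : Small v d e') : Small v d (e + e') := by
  obtain ⟨π, hπ, f, hf, rfl⟩ := h
  obtain ⟨π', hπ', f', hf', rfl⟩ := h'
  wlog hle : v π ≤ v π' generalizing π π' f f'
  · rw [add_comm]
    exact this π' hπ' f' hf' π hπ f hf (le_of_not_ge hle)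
  by_cases h0 : π' = 0
  · have : π = 0 := by
      rw [h0, map_zero] at hle
      exact (map_eq_zero v).1 (le_antisymm hle zero_le)
    exact ⟨0, by simp, 0, zero_mem _, by simp [h0, this]⟩
  refine ⟨π', hπ', (π / π') • f + f', add_mem (smul_mem_logRing v d ?_ hf) hf', ?_⟩
  · rw [map_div₀]; exact div_le_one_of_le₀ hle zero_le
  · rw [smul_add, smul_smul, mul_div_cancel₀ _ h0]

lemma Small.neg {e : E} (h : Small v d e) : Small v d (-e) := by
  obtain ⟨π, hπ, f, hf, rfl⟩ := h
  exact ⟨π, hπ, -f, neg_mem hf, by simp⟩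

lemma small_of_smul {a b : M} {e e' : E} (hab : v b < v a) (he' : e' ∈ LogRing v d)
    (h : a • e = b • e') : Small v d e := by
  have ha : a ≠ 0 := by rintro rfl; simp at hab
  refine ⟨b / a, ?_, e', he', ?_⟩
  · rw [map_div₀]
    have : 0 < v a := by rw [zero_lt_iff]; simpa using ha
    exact (div_lt_one₀ this).2 hab
  · rw [div_eq_inv_mul, mul_smul, ← h, smul_smul, inv_mul_cancel₀ ha, one_smul]

lemma dlog_sq (hd : ∀ f, d f * d f = 0) (f : M) : dlog d f * dlog d f = 0 := by
  simp [dlog, hd]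

end LogForms

/-! ### Diagonal Pfister-type forms and swapping -/

section Forms

variable {κ M E Γ : Type*} [Field κ] [Field M] [Algebra κ M] [CommRing E] [Algebra M E]
  [Algebra κ E] [LinearOrderedCommGroupWithZero Γ]
  {v : Valuation M Γ} {d : Derivation κ M E} {I : Type*} [DecidableEq I]

/-- The quasi-Pfister form `∑_{t ⊆ s} h^t y_t²` with `h^t = ∏_{i ∈ t} h_i`. -/
def pform {R : Type*} [CommRing R] (h : I → R) (s : Finset I) (y : Finset I → R) : R :=
  ∑ t ∈ s.powerset, (∏ i ∈ t, h i) * y t ^ 2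

lemma pform_insert {R : Type*} [CommRing R] (h : I → R) {s : Finset I} {a : I} (ha : a ∉ s)
    (y : Finset I → R) :
    pform h (insert a s) y = pform h s y + h a * pform h s (fun t => y (insert a t)) := by
  rw [pform, Finset.sum_powerset_insert ha, pform, pform, Finset.mul_sum]
  congr 1
  refine Finset.sum_congr rfl fun t ht => ?_
  rw [Finset.prod_insert (fun h' => ha (Finset.mem_powerset.1 ht h'))]
  ring

lemma two_smul_zero [CharP M 2] (e : E) : (2 : ℕ) • e = 0 := by
  have : (2 : E) = algebraMap M E 2 := (map_ofNat (algebraMap M E) 2).symm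
  rw [nsmul_eq_mul, Nat.cast_ofNat, this, CharTwo.two_eq_zero, map_zero, zero_mul]

lemma neg_eq_self_of_char [CharP M 2] (e : E) : -e = e := by
  have := two_smul_zero (M := M) e
  rw [two_nsmul] at this
  exact neg_eq_of_add_eq_zero_left this

lemma d_sq [CharP M 2] (y : M) : d (y ^ 2) = 0 := by
  rw [sq, Derivation.leibniz, ← two_nsmul]
  exact two_smul_zero (M := M) _

lemma prod_dlog_mem (h : I → M) (s : Finset I) : ∏ i ∈ s, dlog d (h i) ∈ LogRing v d :=
  prod_mem fun i _ => dlog_mem v d (h i)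

/-- The form `∏ dlog h_i` annihilates the differentials of the values of the form. -/
lemma prod_dlog_mul_d_pform [CharP M 2] (hd : ∀ f, d f * d f = 0) (h : I → M) (s : Finset I) :
    ∀ y, (∏ i ∈ s, dlog d (h i)) * d (pform h s y) = 0 := by
  induction s using Finset.induction_on with
  | empty => intro y; simp [pform, d_sq (d := d) (y ∅), -Derivation.leibniz_pow]
  | insert a s ha ih =>
    intro y
    rw [pform_insert h ha, Finset.prod_insert ha, map_add, Derivation.leibniz, mul_add, mul_add]
    rw [mul_assoc, ih, mul_smul_comm, mul_assoc, ih, mul_smul_comm]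
    have : d (h a) = h a • dlog d (h a) := d_eq_smul_dlog d _
    rw [this, mul_smul_comm, mul_right_comm, dlog_sq hd]
    simp

/-- If a value of the form is strictly smaller than one of its terms, then `∏ dlog h_i` is
small. -/
lemma small_of_pform_lt [CharP M 2] (hd : ∀ f, d f * d f = 0) (h : I → M) (s : Finset I) :
    ∀ y, ∀ t ∈ s.powerset, v (pform h s y) < v ((∏ i ∈ t, h i) * y t ^ 2) →
      Small v d (∏ i ∈ s, dlog d (h i)) := by
  induction s using Finset.induction_on with
  | empty =>
    intro y t ht hlt
    simp only [Finset.powerset_empty, Finset.mem_singleton] at ht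
    subst ht
    simp [pform] at hlt
  | insert a s ha ih =>
    intro y t ht hlt
    set y1 : Finset I → M := fun t => y (insert a t) with hy1
    rw [Finset.prod_insert ha]
    have hins := pform_insert h ha y
    set ρ := pform h (insert a s) y with hρ
    -- wedge the differential of `ρ = N_s(y) + h_a N_s(y1)` with `∏_{i ∈ s} dlog h_i`
    have key : (h a * pform h s y1) • (dlog d (h a) * ∏ i ∈ s, dlog d (h i)) =
        ρ • (dlog d ρ * ∏ i ∈ s, dlog d (h i)) := by
      have e1 := congrArg (fun z => (∏ i ∈ s, dlog d (h i)) * d z) hins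
      simp only [map_add, mul_add, Derivation.leibniz, mul_smul_comm,
        prod_dlog_mul_d_pform hd h s, smul_zero, zero_add] at e1
      rw [d_eq_smul_dlog d ρ, d_eq_smul_dlog d (h a)] at e1
      simp only [mul_smul_comm, smul_smul] at e1
      rw [mul_comm (dlog d ρ), e1, mul_comm (dlog d (h a)), mul_comm (h a)]
    by_cases hc : v ρ < v (h a * pform h s y1)
    · exact small_of_smul hc (mul_mem (dlog_mem v d ρ) (prod_dlog_mem h s)) key
    -- otherwise neither summand of `ρ` exceeds `ρ`, and the induction hypothesis applies to one of them
    push Not at hc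
    have h0 : v (pform h s y) ≤ v ρ := by
      have : pform h s y = ρ - h a * pform h s y1 := by rw [hins]; ring
      rw [this]
      exact (v.map_sub _ _).trans (max_le le_rfl hc)
    refine Small.mul' ?_ (dlog_mem v d _)
    by_cases hat : a ∈ t
    · have ht' : t.erase a ∈ s.powerset := by
        rw [Finset.mem_powerset] at ht ⊢
        exact Finset.subset_insert_iff.1 ht
      refine ih y1 _ ht' ?_
      have hlt' := hc.trans_lt hlt
      rw [← Finset.mul_prod_erase t h hat, mul_assoc, map_mul, map_mul] at hlt'
      have := lt_of_mul_lt_mul_left' hlt'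
      simpa [hy1, Finset.insert_erase hat] using this
    · have ht' : t ∈ s.powerset := by
        rw [Finset.mem_powerset] at ht ⊢
        exact (Finset.subset_insert_iff_of_notMem hat).1 ht
      exact ih y t ht' (h0.trans_lt hlt)

/-- The isotropy relation `N(y) + g₁ g₂ N(y') + g₁ y_∅ y'_∅ = 0` with `(y, y') ≠ 0`. -/
def Iso {R : Type*} [CommRing R] [Fintype I] (h : I → R) (g₁ g₂ : R) : Prop :=
  ∃ y y' : Finset I → R, (y ≠ 0 ∨ y' ≠ 0) ∧
    pform h Finset.univ y + g₁ * g₂ * pform h Finset.univ y' + g₁ * (y ∅ * y' ∅) = 0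

lemma pform_univ_eq_zero_small [Fintype I] [CharP M 2] (hd : ∀ f, d f * d f = 0) {h : I → M}
    (hh : ∀ i, h i ≠ 0) {y : Finset I → M} (hy : y ≠ 0)
    (h0 : pform h Finset.univ y = 0) : Small v d (∏ i, dlog d (h i)) := by
  obtain ⟨t, ht⟩ := Function.ne_iff.1 hy
  refine small_of_pform_lt hd h Finset.univ y t (by simp) ?_
  rw [h0, map_zero, zero_lt_iff, Ne, map_eq_zero]
  exact mul_ne_zero (Finset.prod_ne_zero_iff.2 fun i _ => hh i) (pow_ne_zero _ ht)

/-- An isotropic relation with `v g₁ < v g₂` forces either `∏ dlog h_i` or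
`∏ dlog h_i * dlog (g₁ g₂)` to be small. -/
lemma small_of_iso [Fintype I] [CharP M 2] (hd : ∀ f, d f * d f = 0) {h : I → M}
    (hh : ∀ i, h i ≠ 0) {g₁ g₂ : M} (hg₁ : g₁ ≠ 0) (hg₂ : g₂ ≠ 0) (hlt : v g₁ < v g₂)
    (hiso : Iso h g₁ g₂) :
    Small v d (∏ i, dlog d (h i)) ∨ Small v d ((∏ i, dlog d (h i)) * dlog d (g₁ * g₂)) := by
  obtain ⟨y, y', hne, heq⟩ := hiso
  by_cases c1 : ∃ t, v (pform h Finset.univ y') < v ((∏ i ∈ t, h i) * y' t ^ 2)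
  · obtain ⟨t, ht⟩ := c1
    exact Or.inl (small_of_pform_lt hd h _ y' t (by simp) ht)
  by_cases c2 : ∃ t, v (pform h Finset.univ y) < v ((∏ i ∈ t, h i) * y t ^ 2)
  · obtain ⟨t, ht⟩ := c2
    exact Or.inl (small_of_pform_lt hd h _ y t (by simp) ht)
  push Not at c1 c2
  have c1' := c1 ∅
  have c2' := c2 ∅
  simp only [Finset.prod_empty, one_mul] at c1' c2'
  set N := pform h Finset.univ y with hN
  set N' := pform h Finset.univ y' with hN'
  by_cases hN0 : N' = 0
  · by_cases hy' : y' = 0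
    · have hy : y ≠ 0 := by tauto
      refine Or.inl (pform_univ_eq_zero_small hd hh hy ?_)
      rw [← hN]
      simpa [hN0, hy'] using heq
    · exact Or.inl (pform_univ_eq_zero_small hd hh hy' hN0)
  by_cases c3 : v (y ∅ * y' ∅) < v (g₂ * N')
  · right
    set w := y ∅ * y' ∅
    have e1 := congrArg (fun z => (∏ i, dlog d (h i)) * d z) heq
    simp only [map_add, mul_add, Derivation.leibniz d (g₁ * g₂), mul_smul_comm, hN, hN',
      prod_dlog_mul_d_pform hd h Finset.univ, smul_zero, zero_add, map_zero, mul_zero] at e1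
    rw [← hN', d_eq_smul_dlog d (g₁ * g₂), d_eq_smul_dlog d (g₁ * w)] at e1
    simp only [mul_smul_comm, smul_smul] at e1
    have e2 := eq_neg_of_add_eq_zero_left e1
    rw [neg_eq_self_of_char (M := M)] at e2
    refine small_of_smul (a := N' * (g₁ * g₂)) (b := g₁ * w) ?_
      (mul_mem (prod_dlog_mem h _) (dlog_mem v d (g₁ * w))) e2
    have : N' * (g₁ * g₂) = g₁ * (g₂ * N') := by ring
    rw [this, map_mul, map_mul v g₁]
    exact (mul_lt_mul_iff_right₀ (zero_lt_iff.2 (by simpa using hg₁))).2 c3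
  · exfalso
    push Not at c3
    have hgN : v (g₂ * N') ≠ 0 := by simp [hg₂, hN0]
    have hw : y ∅ * y' ∅ ≠ 0 := by
      intro h0
      rw [h0, map_zero] at c3
      exact hgN (le_antisymm c3 zero_le)
    have hy0 : y ∅ ≠ 0 := left_ne_zero_of_mul hw
    have hy0' : y' ∅ ≠ 0 := right_ne_zero_of_mul hw
    have p1 : 0 < v (y' ∅) := zero_lt_iff.2 (by simpa using hy0')
    have p2 : 0 < v (y ∅) := zero_lt_iff.2 (by simpa using hy0)
    -- `v (g₂ y'_∅) ≤ v y_∅`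
    have s1 : v g₂ * v (y' ∅) ≤ v (y ∅) := by
      have : v g₂ * v (y' ∅) * v (y' ∅) ≤ v (y ∅) * v (y' ∅) := by
        calc v g₂ * v (y' ∅) * v (y' ∅) = v g₂ * v (y' ∅ ^ 2) := by
              rw [mul_assoc, map_pow, sq]
          _ ≤ v g₂ * v N' := mul_le_mul' le_rfl c1'
          _ = v (g₂ * N') := (map_mul _ _ _).symm
          _ ≤ v (y ∅ * y' ∅) := c3
          _ = _ := map_mul _ _ _
      exact (mul_le_mul_iff_left₀ p1).1 this
    have s2 : v N ≤ v g₁ * v (y ∅) * v (y' ∅) := by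
      have : N = -(g₁ * (g₂ * N' + y ∅ * y' ∅)) := by linear_combination heq
      rw [this, Valuation.map_neg, map_mul, mul_assoc, ← map_mul v (y ∅)]
      exact mul_le_mul' le_rfl ((v.map_add _ _).trans (max_le c3 le_rfl))
    have s3 : v g₁ * v (y' ∅) < v (y ∅) :=
      lt_of_lt_of_le ((mul_lt_mul_iff_left₀ p1).2 hlt) s1
    have s4 : v N < v (y ∅ ^ 2) := by
      refine s2.trans_lt ?_
      rw [mul_right_comm, map_pow, sq]
      exact (mul_lt_mul_iff_left₀ p2).2 s3
    exact absurd c2' (not_le.2 s4)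

end Forms

/-! ### Square roots of polynomials in characteristic two -/

/-- Over a perfect field of characteristic two, a homogeneous polynomial with vanishing partial
derivatives is the square of a homogeneous polynomial. -/
lemma exists_sq_of_pderiv_eq_zero {ι κ : Type*} [Field κ] [CharP κ 2]
    (hperf : ∀ a : κ, ∃ b, b ^ 2 = a) {P : MvPolynomial ι κ} {e : ℕ} (hP : P.IsHomogeneous e)
    (h : ∀ j, pderiv j P = 0) :
    ∃ Q : MvPolynomial ι κ, P = Q ^ 2 ∧ Q.IsHomogeneous (e / 2) := by
  classical
  choose s hs using hperf
  -- an odd exponent would survive in a partial derivative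
  have heven : ∀ m ∈ P.support, ∀ j, 2 * (m j / 2) = m j := by
    intro m hm j
    by_contra hodd
    have h1 : m j % 2 = 1 := by omega
    have h2 : m = (m - Finsupp.single j 1) + Finsupp.single j 1 := by
      ext k
      by_cases hk : k = j
      · subst hk; simp; omega
      · simp [Finsupp.single_apply, Ne.symm hk]
    have h3 := congrArg (coeff (m - Finsupp.single j 1)) (h j)
    rw [coeff_pderiv, ← h2, coeff_zero] at h3
    have h4 : (((m - Finsupp.single j 1 : ι →₀ ℕ) j : ℕ) : κ) + 1 = ((m j : ℕ) : κ) := by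
      have : (m - Finsupp.single j 1 : ι →₀ ℕ) j + 1 = m j := by simp; omega
      exact_mod_cast congrArg (Nat.cast (R := κ)) this
    rw [h4] at h3
    have h5 : ((m j : ℕ) : κ) ≠ 0 := by
      rw [Ne, CharP.cast_eq_zero_iff κ 2]; omega
    exact (mul_ne_zero (mem_support_iff.1 hm) h5) h3
  set half : (ι →₀ ℕ) → (ι →₀ ℕ) := fun m => m.mapRange (· / 2) rfl with hhalf
  have hhalf2 : ∀ m ∈ P.support, (2 : ℕ) • half m = m := by
    intro m hm
    ext j
    simpa [hhalf] using heven m hm j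
  refine ⟨∑ m ∈ P.support, monomial (half m) (s (coeff m P)), ?_, ?_⟩
  · haveI : CharP (MvPolynomial ι κ) 2 := inferInstance
    rw [sum_pow_char]
    conv_lhs => rw [P.as_sum]
    refine Finset.sum_congr rfl fun m hm => ?_
    rw [monomial_pow, hhalf2 m hm, hs]
  · refine IsHomogeneous.sum _ _ _ fun m hm => isHomogeneous_monomial _ ?_
    have h1 : m.degree = e := by
      have := hP (mem_support_iff.1 hm)
      rw [Finsupp.degree_eq_weight_one]
      exact this
    have h2 := congrArg Finsupp.degree (hhalf2 m hm)
    rw [map_nsmul, h1, smul_eq_mul] at h2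
    omega

/-! ### The special discriminant polynomials -/

section Special
variable {N : ℕ}

/-- The last coordinate. -/
abbrev lastIx (N : ℕ) : Fin (N + 2) := Fin.last (N + 1)

/-- The inner coordinates `1, …, N`. -/
def midIx (i : Fin N) : Fin (N + 2) := i.castSucc.succ

variable {R : Type*} [CommRing R]

/-- The Fermat form `A = ∑ x_i^{N+1}`. -/
def gA (x : Fin (N + 2) → R) : R := ∑ i, x i ^ (N + 1)

/-- The monomial `x_j x_{N+1} ∏_{i ≠ j, N+1} x_i²` of degree `2 (N + 1)`. -/
def gB (j : Fin (N + 2)) (x : Fin (N + 2) → R) : R :=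
  x j * x (lastIx N) * ∏ i ∈ (Finset.univ.erase j).erase (lastIx N), x i ^ 2

/-- The form `g_j = A² + B_j` of degree `2 (N + 1)`. -/
def gG (j : Fin (N + 2)) (x : Fin (N + 2) → R) : R := gA x ^ 2 + gB j x

lemma map_gA {S : Type*} [CommRing S] (f : R →+* S) (x : Fin (N + 2) → R) :
    f (gA x) = gA (f ∘ x) := by simp [gA]

lemma map_gB {S : Type*} [CommRing S] (f : R →+* S) (j) (x : Fin (N + 2) → R) :
    f (gB j x) = gB j (f ∘ x) := by simp [gB]

lemma map_gG {S : Type*} [CommRing S] (f : R →+* S) (j) (x : Fin (N + 2) → R) :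
    f (gG j x) = gG j (f ∘ x) := by simp [gG, map_gA, map_gB]

lemma gA_smul (c : R) (x : Fin (N + 2) → R) : gA (c • x) = c ^ (N + 1) * gA x := by
  simp [gA, mul_pow, Finset.mul_sum]

lemma gB_smul {j : Fin (N + 2)} (hj : j ≠ lastIx N) (c : R) (x : Fin (N + 2) → R) :
    gB j (c • x) = c ^ (2 * (N + 1)) * gB j x := by
  have hc : ((Finset.univ.erase j).erase (lastIx N)).card = N := by
    rw [Finset.card_erase_of_mem (by simp [Ne.symm hj]), Finset.card_erase_of_mem (by simp)]
    simp
  simp only [gB, Pi.smul_apply, smul_eq_mul, mul_pow, Finset.prod_mul_distrib, Finset.prod_const,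
    hc]
  ring

lemma gG_smul {j : Fin (N + 2)} (hj : j ≠ lastIx N) (c : R) (x : Fin (N + 2) → R) :
    gG j (c • x) = c ^ (2 * (N + 1)) * gG j x := by
  rw [gG, gG, gA_smul, gB_smul hj]; ring

lemma prod_dvd_gB {j : Fin (N + 2)} (hj : j ≠ lastIx N) (x : Fin (N + 2) → R) (i) :
    x i ∣ gB j x := by
  rw [gB]
  by_cases h1 : i = j
  · subst h1; exact Dvd.intro _ (by rw [mul_assoc])
  by_cases h2 : i = lastIx N
  · subst h2; rw [mul_comm (x j), mul_assoc]; exact Dvd.intro _ rfl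
  refine Dvd.dvd.mul_left ?_ _
  exact (dvd_pow_self _ two_ne_zero).trans
    (Finset.dvd_prod_of_mem (fun i => x i ^ 2) (by simp [h1, h2]))

end Special

section Log

variable {κ M E Γ : Type*} [Field κ] [Field M] [Algebra κ M] [CommRing E] [Algebra M E]
  [Algebra κ E] [LinearOrderedCommGroupWithZero Γ]
  {v : Valuation M Γ} {d : Derivation κ M E} {N : ℕ}

lemma d_aeval {ι : Type*} [Fintype ι] (x : ι → M) (P : MvPolynomial ι κ) :
    d (aeval x P) = ∑ i, aeval x (pderiv i P) • d (x i) := by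
  classical
  induction P using MvPolynomial.induction_on with
  | C a => simp
  | add p q hp hq => simp [hp, hq, add_smul, Finset.sum_add_distrib]
  | mul_X p j hp =>
    simp only [map_mul, aeval_X, Derivation.leibniz, hp, pderiv_X, smul_eq_mul, map_add]
    simp only [add_smul, Finset.sum_add_distrib, Finset.smul_sum, smul_smul]
    congr 1
    rw [Finset.sum_eq_single j]
    · simp
    · intro b _ hb; simp [Pi.single_apply, hb, Ne.symm hb]
    · simp

/-- If nonzero coordinates of value `1` satisfy a homogeneous relation modulo the maximal
ideal, the logarithmic volume form is small. -/
lemma small_volume_of_relation [CharP κ 2] (hd : ∀ f, d f * d f = 0)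
    (hperf : ∀ a : κ, ∃ b, b ^ 2 = a)
    (hκ : ∀ a : κ, a ≠ 0 → v (algebraMap κ M a) = 1)
    (x : Fin (N + 2) → M) (hx0 : ∀ i, x i ≠ 0) (e : ℕ) :
    ∀ P : MvPolynomial {i // v (x i) = 1} κ, P ≠ 0 → P.IsHomogeneous e →
      v (aeval (fun i : {i // v (x i) = 1} => x i) P) < 1 →
      Small v d (∏ j : Fin (N + 1), dlog d (x j.succ / x 0)) := by
  classical
  induction e using Nat.strong_induction_on with
  | _ e ih =>
  intro P hP0 hP hlt
  have he : e ≠ 0 := by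
    rintro rfl
    obtain ⟨c, rfl⟩ : ∃ c, P = C c := ⟨_, (totalDegree_eq_zero_iff_eq_C).1 (by
      exact Nat.le_zero.1 hP.totalDegree_le)⟩
    have hc : c ≠ 0 := by rintro rfl; simp at hP0
    simp [hκ c hc] at hlt
  set u : {i // v (x i) = 1} → M := fun i => x i with hu
  have hInt : ∀ Q : MvPolynomial {i // v (x i) = 1} κ, v (aeval u Q) ≤ 1 := by
    intro Q
    have hC : ∀ a : κ, v (algebraMap κ M a) ≤ 1 := fun a => by
      by_cases ha : a = 0
      · simp [ha]
      · exact (hκ a ha).le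
    induction Q using MvPolynomial.induction_on with
    | C a => simpa using hC a
    | add p q hp hq => rw [map_add]; exact (v.map_add _ _).trans (max_le hp hq)
    | mul_X p j hp =>
      rw [map_mul, aeval_X, map_mul, show v (u j) = 1 from j.2, mul_one]; exact hp
  -- if no derivative is a unit, either all vanish and `P` is a square, or one of them is a relation
  -- of smaller degree
  by_cases hder : ∃ j, v (aeval u (pderiv j P)) = 1
  swap
  · push Not at hder
    by_cases hz : ∀ j, pderiv j P = 0
    · obtain ⟨Q, rfl, hQ⟩ := exists_sq_of_pderiv_eq_zero hperf hP hz
      refine ih (e / 2) (by omega) Q (by rintro rfl; simp at hP0) hQ ?_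
      rw [map_pow, map_pow] at hlt
      exact (pow_lt_one_iff two_ne_zero).1 hlt
    · push Not at hz
      obtain ⟨j, hj⟩ := hz
      exact ih (e - 1) (by omega) _ hj hP.pderiv (lt_of_le_of_ne (hInt _) (hder j))
  -- the Euler relation allows a choice of a derivative in a direction other than `x₀`
  have euler : ∑ i, aeval u (pderiv i P) * u i = (e : M) * aeval u P := by
    have := congrArg (aeval u) hP.sum_X_mul_pderiv
    simpa [map_sum, mul_comm] using this
  have hder' : ∃ j, v (aeval u (pderiv j P)) = 1 ∧ (j : Fin (N + 2)) ≠ 0 := by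
    by_contra hcon
    push Not at hcon
    obtain ⟨j, hj⟩ := hder
    have hj0 := hcon j hj
    rw [← Finset.add_sum_erase _ _ (Finset.mem_univ j)] at euler
    have h1 : v (∑ i ∈ Finset.univ.erase j, aeval u (pderiv i P) * u i) < 1 := by
      refine v.map_sum_lt one_ne_zero fun i hi => ?_
      rw [map_mul, show v (u i) = 1 from i.2, mul_one]
      refine lt_of_le_of_ne (hInt _) fun hc => ?_
      exact (Finset.mem_erase.1 hi).1 (Subtype.ext ((hcon i hc).trans hj0.symm))
    have h2 : v ((e : M) * aeval u P) < 1 := by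
      rw [map_mul]
      have : v (e : M) ≤ 1 := by
        have := hInt (C (e : κ)); simpa using this
      exact (mul_le_of_le_one_left' this).trans_lt hlt
    have h3 : aeval u (pderiv j P) * u j = (e : M) * aeval u P -
      ∑ i ∈ Finset.univ.erase j, aeval u (pderiv i P) * u i := by
        rw [← euler]; ring
    have h4 := (v.map_sub ((e : M) * aeval u P) _).trans_lt (max_lt h2 h1)
    rw [← h3, map_mul, hj, show v (u j) = 1 from j.2] at h4
    simp at h4
  obtain ⟨j, hj, hj0⟩ := hder'
  obtain ⟨k, hk⟩ : ∃ k : Fin (N + 1), k.succ = (j : Fin (N + 2)) :=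
    ⟨_, Fin.succ_pred _ hj0⟩
  have hxi : ∀ i, dlog d (x i) = dlog d (x i / x 0) + dlog d (x 0) := by
    intro i
    rw [← dlog_mul d (div_ne_zero (hx0 i) (hx0 0)) (hx0 0), div_mul_cancel₀ _ (hx0 0)]
  have key : ∑ i, (aeval u (pderiv i P) * u i) • dlog d (x i / x 0) =
      aeval u P • (dlog d (aeval u P) - (e : E) * dlog d (x 0)) := by
    have h1 := d_aeval (d := d) u P
    rw [d_eq_smul_dlog d (aeval u P)] at h1
    rw [smul_sub, h1]
    have h2 : ∀ i : {i // v (x i) = 1}, aeval u (pderiv i P) • d (u i) =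
        (aeval u (pderiv i P) * u i) • dlog d (x i / x 0) +
          (aeval u (pderiv i P) * u i) • dlog d (x 0) := by
      intro i
      rw [d_eq_smul_dlog d (u i), smul_smul, ← smul_add, ← hxi]
    rw [Finset.sum_congr rfl fun i _ => h2 i, Finset.sum_add_distrib, ← Finset.sum_smul, euler]
    rw [mul_smul, smul_comm]
    simp [Algebra.smul_def]
  have hΩ : dlog d (x j / x 0) * ∏ i ∈ Finset.univ.erase k, dlog d (x (Fin.succ i) / x 0) =
      ∏ i : Fin (N + 1), dlog d (x i.succ / x 0) := by
    rw [← hk, Finset.mul_prod_erase Finset.univ (fun i : Fin (N + 1) => dlog d (x i.succ / x 0))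
      (Finset.mem_univ k)]
  -- wedging the differential of the relation with the other factors leaves only the `j`-th term
  have key2 := congrArg (· * ∏ i ∈ Finset.univ.erase k, dlog d (x (Fin.succ i) / x 0)) key
  simp only [Finset.sum_mul, smul_mul_assoc] at key2
  rw [Finset.sum_eq_single j] at key2
  · rw [hΩ] at key2
    refine small_of_smul ?_ (mul_mem (sub_mem (dlog_mem v d _)
      (mul_mem (natCast_mem _ e) (dlog_mem v d _))) (prod_mem fun i _ => dlog_mem v d _)) key2
    rw [map_mul, hj, show v (u j) = 1 from j.2, mul_one]
    exact hlt
  · intro i _ hij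
    have : dlog d (x i / x 0) * ∏ i ∈ Finset.univ.erase k, dlog d (x (Fin.succ i) / x 0) = 0 := by
      by_cases hi0 : (i : Fin (N + 2)) = 0
      · rw [hi0, div_self (hx0 0)]
        simp [dlog]
      · have hmem : (i : Fin (N + 2)).pred hi0 ∈ Finset.univ.erase k := by
          refine Finset.mem_erase.2 ⟨fun h' => hij (Subtype.ext ?_), Finset.mem_univ _⟩
          rw [← hk, ← h', Fin.succ_pred]
        rw [← Finset.mul_prod_erase _ _ hmem, Fin.succ_pred, ← mul_assoc, dlog_sq hd, zero_mul]
    rw [this, smul_zero]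
  · simp
end Log

/-! ### Smallness of the residue form -/

section Residue

variable {κ M E Γ : Type*} [Field κ] [Field M] [Algebra κ M] [CommRing E] [Algebra M E]
  [Algebra κ E] [LinearOrderedCommGroupWithZero Γ]
  {v : Valuation M Γ} {d : Derivation κ M E} {N : ℕ}

/-- Dichotomy for a primitive vector with special reduction: either `A` is a unit and the
monomials `B_j` are not, or the logarithmic volume form is small. -/
lemma special_dichotomy [CharP κ 2] (hd : ∀ f, d f * d f = 0)
    (hperf : ∀ a : κ, ∃ b, b ^ 2 = a)
    (hκ : ∀ a : κ, a ≠ 0 → v (algebraMap κ M a) = 1)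
    (x : Fin (N + 2) → M) (hx0 : ∀ i, x i ≠ 0) (hx1 : ∀ i, v (x i) ≤ 1)
    (hx : ∃ i, v (x i) = 1) {e : ℕ} {P : MvPolynomial (Fin (N + 2)) κ} (hP0 : P ≠ 0)
    (hP : P.IsHomogeneous e) (hlt : v (aeval x P) < 1) :
    (v (gA x) = 1 ∧ ∀ j, j ≠ lastIx N → v (gB j x) < 1) ∨
      Small v d (∏ j : Fin (N + 1), dlog d (x j.succ / x 0)) := by
  classical
  by_cases hall : ∀ i, v (x i) = 1
  · right
    let f : Fin (N + 2) → {i // v (x i) = 1} := fun i => ⟨i, hall i⟩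
    have hf : Function.Injective f := fun a b h => congrArg Subtype.val h
    refine small_volume_of_relation hd hperf hκ x hx0 e (rename f P) ?_
      hP.rename_isHomogeneous ?_
    · rw [Ne, ← map_zero (rename f)]
      exact fun h => hP0 (rename_injective f hf h)
    · rw [aeval_rename]; exact hlt
  -- one coordinate reduces to zero, and it divides every `B_j`
  push Not at hall
  obtain ⟨i1, hi1⟩ := hall
  have hi1' : v (x i1) < 1 := lt_of_le_of_ne (hx1 i1) hi1
  by_cases hA : v (gA x) = 1
  · left
    refine ⟨hA, fun j hj => ?_⟩
    have h2 : ∀ k, v (∏ i ∈ k, x i ^ 2) ≤ 1 := fun k => by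
      rw [map_prod]
      exact Finset.prod_le_one' fun i _ => by rw [map_pow]; exact pow_le_one' (hx1 i) 2
    rw [gB]
    by_cases h1 : i1 = j
    · subst h1
      rw [mul_assoc, map_mul]
      refine (mul_le_of_le_one_right' ?_).trans_lt hi1'
      rw [map_mul]; exact mul_le_one' (hx1 _) (h2 _)
    by_cases h3 : i1 = lastIx N
    · subst h3
      rw [mul_comm (x j), mul_assoc, map_mul]
      refine (mul_le_of_le_one_right' ?_).trans_lt hi1'
      rw [map_mul]; exact mul_le_one' (hx1 _) (h2 _)
    have hmem : i1 ∈ (Finset.univ.erase j).erase (lastIx N) := by simp [h1, h3]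
    have hre : ∀ p : M, x j * x (lastIx N) * (x i1 ^ 2 * p) =
      x i1 * (x j * x (lastIx N) * (x i1 * p)) := fun p => by ring
    rw [← Finset.mul_prod_erase _ _ hmem, hre, map_mul]
    refine (mul_le_of_le_one_right' ?_).trans_lt hi1'
    rw [map_mul, map_mul, map_mul]
    exact mul_le_one' (mul_le_one' (hx1 _) (hx1 _)) (mul_le_one' (hx1 _) (h2 _))
  · right
    have hA1 : v (gA x) < 1 := by
      refine lt_of_le_of_ne (v.map_sum_le fun i _ => ?_) hA
      rw [map_pow]; exact pow_le_one' (hx1 i) _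
    -- the Fermat form in the unit coordinates is a relation modulo the maximal ideal
    obtain ⟨i0, hi0⟩ := hx
    set Q : MvPolynomial {i // v (x i) = 1} κ := ∑ i, X i ^ (N + 1) with hQ
    refine small_volume_of_relation hd hperf hκ x hx0 (N + 1) Q ?_ ?_ ?_
    · intro h0
      have := congrArg (eval (Pi.single ⟨i0, hi0⟩ 1)) h0
      rw [hQ, map_sum, Finset.sum_eq_single ⟨i0, hi0⟩] at this
      · simp at this
      · intro b _ hb; simp [hb]
      · simp
    · refine IsHomogeneous.sum _ _ _ fun i _ => ?_
      simpa using (isHomogeneous_X κ i).pow (N + 1)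
    · have h1 : aeval (fun i : {i // v (x i) = 1} => x i) Q =
          gA x - ∑ i ∈ Finset.univ.filter (fun i => ¬ v (x i) = 1), x i ^ (N + 1) := by
        rw [hQ, map_sum, gA, ← Finset.sum_filter_add_sum_filter_not Finset.univ
          (fun i => v (x i) = 1), add_sub_cancel_right]
        simp only [map_pow, aeval_X]
        exact (Finset.sum_subtype _ (by simp) (fun i => x i ^ (N + 1))).symm
      rw [h1]
      refine (v.map_sub _ _).trans_lt (max_lt hA1 (v.map_sum_lt one_ne_zero fun i hi => ?_))
      rw [map_pow]
      exact pow_lt_one' (lt_of_le_of_ne (hx1 i) (Finset.mem_filter.1 hi).2) (Nat.succ_ne_zero _)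

lemma gG_smul_dlog [CharP M 2] {j : Fin (N + 2)} (x : Fin (N + 2) → M)
    (hx0 : ∀ i, x i ≠ 0) :
    gG j x • dlog d (gG j x) =
      gB j x • (dlog d (x j / x 0) + dlog d (x (lastIx N) / x 0)) := by
  have hq : ∀ i, dlog d (x i / x 0) = dlog d (x i) - dlog d (x 0) := fun i => by
    rw [div_eq_mul_inv, dlog_mul d (hx0 i) (inv_ne_zero (hx0 0)), dlog_inv d (hx0 0),
      sub_eq_add_neg]
  have h2 := two_smul_zero (M := M) (dlog d (x 0))
  rw [two_nsmul] at h2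
  have h3 : dlog d (x j / x 0) + dlog d (x (lastIx N) / x 0) =
      dlog d (x j * x (lastIx N)) := by
    rw [hq, hq, dlog_mul d (hx0 j) (hx0 _)]
    linear_combination -h2
  rw [h3, ← d_eq_smul_dlog, gG, map_add, d_sq, zero_add, gB, Finset.prod_pow,
    Derivation.leibniz, d_sq, smul_zero, zero_add, d_eq_smul_dlog d (x j * x (lastIx N)),
    smul_smul]
  congr 1
  ring

/-- Key local statement: if the vector `x` has special reduction and the quadratic form is
isotropic at `x`, the residue form `∏ dlog h_i · dlog g₁` is small. -/
lemma small_residue_form [CharP κ 2] [CharP M 2] (hd : ∀ f, d f * d f = 0)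
    (hperf : ∀ a : κ, ∃ b, b ^ 2 = a)
    (hκ : ∀ a : κ, a ≠ 0 → v (algebraMap κ M a) = 1) (i1 : Fin N)
    (x : Fin (N + 2) → M) (hx0 : ∀ i, x i ≠ 0) (hx1 : ∀ i, v (x i) ≤ 1)
    (hx : ∃ i, v (x i) = 1) {e : ℕ} {P : MvPolynomial (Fin (N + 2)) κ} (hP0 : P ≠ 0)
    (hP : P.IsHomogeneous e) (hlt : v (aeval x P) < 1)
    (hg₁ : gG 0 x ≠ 0) (hg₂ : gG (midIx i1) x ≠ 0)
    (hiso : Iso (fun i : Fin N => x (midIx i) / x 0) (gG 0 x) (gG (midIx i1) x)) :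
    Small v d ((∏ i : Fin N, dlog d (x (midIx i) / x 0)) * dlog d (gG 0 x)) := by
  classical
  set θ := ∏ i : Fin N, dlog d (x (midIx i) / x 0) with hθ
  have hθmem : θ ∈ LogRing v d := prod_dlog_mem _ _
  set g₁ := gG 0 x with hg1
  set g₂ := gG (midIx i1) x with hg2
  set B₁ := gB 0 x with hB1
  set B₂ := gB (midIx i1) x with hB2
  have hA1 : g₁ = gA x ^ 2 + B₁ := rfl
  have hA2 : g₂ = gA x ^ 2 + B₂ := rfl
  set ℓ₁ := dlog d (x (midIx i1) / x 0) with hℓ1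
  set ℓn := dlog d (x (lastIx N) / x 0) with hℓn
  have hΩ : ∏ j : Fin (N + 1), dlog d (x j.succ / x 0) = θ * ℓn := by
    rw [Fin.prod_univ_castSucc]; rfl
  set θ' := ∏ i ∈ Finset.univ.erase i1, dlog d (x (midIx i) / x 0) with hθ'
  have hθ'mem : θ' ∈ LogRing v d := prod_dlog_mem _ _
  have hθθ' : θ = ℓ₁ * θ' :=
    (Finset.mul_prod_erase Finset.univ (fun i => dlog d (x (midIx i) / x 0))
      (Finset.mem_univ i1)).symm
  have hB1ne : B₁ ≠ 0 := by
    rw [hB1, gB]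
    exact mul_ne_zero (mul_ne_zero (hx0 _) (hx0 _))
      (Finset.prod_ne_zero_iff.2 fun i _ => pow_ne_zero _ (hx0 i))
  have hB2ne : B₂ ≠ 0 := by
    rw [hB2, gB]
    exact mul_ne_zero (mul_ne_zero (hx0 _) (hx0 _))
      (Finset.prod_ne_zero_iff.2 fun i _ => pow_ne_zero _ (hx0 i))
  have r1 : g₁ • dlog d g₁ = B₁ • ℓn := by
    rw [hg1, gG_smul_dlog x hx0, div_self (hx0 0)]
    simp [dlog, hℓn, hB1]
  have r2 : g₂ • dlog d g₂ = B₂ • (ℓ₁ + ℓn) := gG_smul_dlog x hx0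
  have mem1 := dlog_mem v d g₁
  have mem2 := dlog_mem v d g₂
  have vne : ∀ {a : M}, a ≠ 0 → 0 < v a := fun ha => zero_lt_iff.2 (by simpa using ha)
  -- the two expressions of each residue form
  have X1 : g₁ • (θ * dlog d g₁) = B₁ • (θ * ℓn) := by
    rw [← mul_smul_comm, r1, mul_smul_comm]
  have X2 : g₂ • (θ * dlog d g₂) = B₂ • (θ * ℓn) := by
    rw [← mul_smul_comm, r2, mul_smul_comm, mul_add, hθθ', mul_right_comm ℓ₁ θ' ℓ₁,
      dlog_sq hd, zero_mul, zero_add]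
  have t1 : dlog d g₁ * ℓn = 0 := by
    have : g₁ • (dlog d g₁ * ℓn) = 0 := by
      rw [← smul_mul_assoc, r1, smul_mul_assoc, dlog_sq hd, smul_zero]
    exact (smul_eq_zero_iff_right hg₁).1 this
  have sqz : (ℓ₁ + ℓn) * (ℓ₁ + ℓn) = 0 := by
    have h2 := two_smul_zero (M := M) (ℓ₁ * ℓn)
    rw [two_nsmul] at h2
    linear_combination dlog_sq hd (x (midIx i1) / x 0) + dlog_sq hd (x (lastIx N) / x 0) + h2
  have t2 : dlog d g₂ * (ℓ₁ + ℓn) = 0 := by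
    have : g₂ • (dlog d g₂ * (ℓ₁ + ℓn)) = 0 := by
      rw [← smul_mul_assoc, r2, smul_mul_assoc, sqz, smul_zero]
    exact (smul_eq_zero_iff_right hg₂).1 this
  have Y1 : B₂ • (θ * dlog d g₁) = g₂ • (θ' * (dlog d g₁ * dlog d g₂)) := by
    have : θ * dlog d g₁ = θ' * (dlog d g₁ * (ℓ₁ + ℓn)) := by
      rw [hθθ']; linear_combination (-θ') * t1
    rw [this, ← mul_smul_comm, ← mul_smul_comm, ← r2, mul_smul_comm, mul_smul_comm]
  have Y2 : B₁ • (θ * dlog d g₂) = g₁ • (θ' * (dlog d g₁ * dlog d g₂)) := by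
    have : θ * dlog d g₂ = θ' * (-ℓn * dlog d g₂) := by
      rw [hθθ']; linear_combination θ' * t2
    rw [this, neg_eq_self_of_char (M := M), ← mul_smul_comm, ← smul_mul_assoc, ← r1,
      smul_mul_assoc, mul_smul_comm]
  have hE : θ' * (dlog d g₁ * dlog d g₂) ∈ LogRing v d := mul_mem hθ'mem (mul_mem mem1 mem2)
  -- the general criterion for one of the two forms, with the roles of the indices abstract
  have crit : ∀ {a b A B C : M} {e f : E}, a ≠ 0 → B ≠ 0 → C ≠ 0 → a = A ^ 2 + B →
      b = A ^ 2 + C → v b ≤ v a → a • e = B • (θ * ℓn) → C • e = b • f → f ∈ LogRing v d →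
      ((v (gA x) = 1 ∧ v B < 1 ∧ A = gA x) ∨ Small v d (θ * ℓn)) → Small v d e := by
    intro a b A B C e f ha hB hC haB hbC hba h1 h2 hf hcase
    rcases hcase with ⟨h3, h4, rfl⟩ | h3
    · refine small_of_smul (v := v) (a := a) (b := B) ?_
        (mul_mem hθmem (dlog_mem v d _)) h1
      have : v a = 1 := by
        rw [haB, Valuation.map_add_eq_of_lt_left]
        · rw [map_pow, h3, one_pow]
        · rw [map_pow, h3, one_pow]; exact h4
      rw [this]; exact h4
    by_cases c1 : v B ≤ v a
    · have : e = (B / a) • (θ * ℓn) := by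
        rw [div_eq_inv_mul, mul_smul, ← h1, smul_smul, inv_mul_cancel₀ ha, one_smul]
      rw [this]
      refine h3.smul ?_
      rw [map_div₀]; exact div_le_one_of_le₀ c1 zero_le
    by_cases c2 : v b < v C
    · exact small_of_smul c2 hf h2
    -- remaining case `v a < v B` and `v C ≤ v b ≤ v a`: then `v b = v (A²) = v B > v a`
    exfalso
    push Not at c1 c2
    have e1 : v (A ^ 2) = v B := by
      have : A ^ 2 = a - B := by rw [haB]; ring
      rw [this, Valuation.map_sub_eq_of_lt_right v c1]
    have e2 : v b = v (A ^ 2) := by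
      rw [hbC, Valuation.map_add_eq_of_lt_left]
      rw [e1]; exact c2.trans_lt (hba.trans_lt c1)
    rw [e1] at e2
    exact absurd (e2 ▸ hba) (not_le.2 c1)
  have hdich := special_dichotomy hd hperf hκ x hx0 hx1 hx hP0 hP hlt (d := d)
  rw [hΩ] at hdich
  have hmid : midIx i1 ≠ lastIx N := by
    intro h
    have := congrArg Fin.val h
    simp [midIx] at this
    omega
  -- for `v g₁ < v g₂` the criterion applies to `g₂`, and isotropy transfers it to `g₁`
  by_cases hle : v g₂ ≤ v g₁
  · refine crit hg₁ hB1ne hB2ne hA1 hA2 hle X1 Y1 hE ?_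
    rcases hdich with ⟨h1, h2⟩ | h
    · exact Or.inl ⟨h1, h2 0 (by simp [lastIx, Fin.ext_iff]), rfl⟩
    · exact Or.inr h
  · push Not at hle
    have s2 : Small v d (θ * dlog d g₂) := by
      refine crit hg₂ hB2ne hB1ne hA2 hA1 hle.le X2 Y2 hE ?_
      rcases hdich with ⟨h1, h2⟩ | h
      · exact Or.inl ⟨h1, h2 _ hmid, rfl⟩
      · exact Or.inr h
    rcases small_of_iso hd (fun i => div_ne_zero (hx0 (midIx i)) (hx0 0)) hg₁ hg₂ hle hiso with
      h | h
    · exact h.mul mem1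
    · have : θ * dlog d g₁ = θ * dlog d (g₁ * g₂) + -(θ * dlog d g₂) := by
        rw [dlog_mul d hg₁ hg₂]; ring
      rw [this]
      exact h.add s2.neg

end Residue

/-! ### A concrete algebra of forms -/

section Wdef
variable {R : Type*} [CommRing R] {n : ℕ}

/-- The multilinear functional `coeff_{X₀⋯X_{n-1}} ∏_j (∑_i a_{ji} X_i)` (a permanent). -/
def perm (a : Fin n → Fin n → R) : R :=
  coeff (∑ i, Finsupp.single i 1) (∏ j, ∑ i, C (a j i) * X i : MvPolynomial (Fin n) R)

lemma perm_smul (c : Fin n → R) (a : Fin n → Fin n → R) :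
    perm (fun j i => c j * a j i) = (∏ j, c j) * perm a := by
  have : (∏ j, ∑ i, C (c j * a j i) * X i : MvPolynomial (Fin n) R) =
      C (∏ j, c j) * ∏ j, ∑ i, C (a j i) * X i := by
    rw [map_prod, ← Finset.prod_mul_distrib]
    refine Finset.prod_congr rfl fun j _ => ?_
    rw [Finset.mul_sum]
    refine Finset.sum_congr rfl fun i _ => ?_
    rw [C_mul, mul_assoc]
  rw [perm, this, coeff_C_mul, perm]

lemma map_perm {S : Type*} [CommRing S] (f : R →+* S) (a : Fin n → Fin n → R) :
    f (perm a) = perm (fun j i => f (a j i)) := by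
  have : MvPolynomial.map f (∏ j, ∑ i, C (a j i) * X i : MvPolynomial (Fin n) R) =
      ∏ j, ∑ i, C (f (a j i)) * X i := by simp
  rw [perm, perm, ← this, coeff_map]

lemma perm_diag (a : Fin n → R) :
    perm (fun j i => if i = j then a j else 0) = ∏ j, a j := by
  have : (∏ j, ∑ i, C (if i = j then a j else 0) * X i : MvPolynomial (Fin n) R) =
      C (∏ j, a j) * monomial (∑ i, Finsupp.single i 1) 1 := by
    rw [monomial_sum_one, map_prod, ← Finset.prod_mul_distrib]
    refine Finset.prod_congr rfl fun j _ => ?_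
    rw [Finset.sum_eq_single j]
    · simp [X]
    · intro i _ hi; simp [hi]
    · simp
  rw [perm, this, coeff_C_mul, coeff_monomial]
  simp

end Wdef

section Forms
variable (M : Type*) [Field M] (n : ℕ)

/-- The ideal `(X_i²)`. -/
def sqIdeal : Ideal (MvPolynomial (Fin n) M) := Ideal.span (Set.range fun i => X i ^ 2)

/-- The algebra of forms `M[X₀, …, X_{n-1}] / (X_i²)`, a commutative model in characteristic two
of the exterior algebra. -/
abbrev FormAlg : Type _ := MvPolynomial (Fin n) M ⧸ sqIdeal M n

variable {M n}

lemma coeff_eq_of_mk_eq {p q : MvPolynomial (Fin n) M}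
    (h : Ideal.Quotient.mk (sqIdeal M n) p = Ideal.Quotient.mk (sqIdeal M n) q) :
    coeff (∑ i, Finsupp.single i 1) p = coeff (∑ i, Finsupp.single i 1) q := by
  rw [Ideal.Quotient.eq] at h
  rw [← sub_eq_zero, ← coeff_sub]
  obtain ⟨c, hc⟩ := (Ideal.mem_span_range_iff_exists_fun).1 h
  rw [← hc, coeff_sum]
  refine Finset.sum_eq_zero fun i _ => ?_
  rw [X_pow_eq_monomial, coeff_mul_monomial', if_neg]
  intro hle
  have := hle i
  simp [Finsupp.finset_sum_apply, Finsupp.single_apply] at this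

lemma mk_smul_form (c : M) (p : MvPolynomial (Fin n) M) :
    c • Ideal.Quotient.mk (sqIdeal M n) p = Ideal.Quotient.mk (sqIdeal M n) (C c * p) := by
  rw [← smul_eq_C_mul]; rfl

variable {κ : Type*} [Field κ] [Algebra κ M]

instance : IsScalarTower κ M (FormAlg M n) := by
  unfold FormAlg; infer_instance

/-- The total differential `f ↦ ∑ D_i f · X_i` attached to derivations `D_i`. -/
def totalD (D : Fin n → Derivation κ M M) : Derivation κ M (FormAlg M n) :=
  ∑ i, (LinearMap.toSpanSingleton M (FormAlg M n)
    (Ideal.Quotient.mk (sqIdeal M n) (X i))).compDer (D i)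

lemma totalD_apply (D : Fin n → Derivation κ M M) (f : M) :
    totalD D f = Ideal.Quotient.mk (sqIdeal M n) (∑ i, C (D i f) * X i) := by
  rw [totalD, ← Derivation.coeFnAddMonoidHom_apply, map_sum, Finset.sum_apply, map_sum]
  refine Finset.sum_congr rfl fun i _ => ?_
  rw [← mk_smul_form]
  rfl

lemma totalD_sq [CharP M 2] (D : Fin n → Derivation κ M M) (f : M) :
    totalD D f * totalD D f = 0 := by
  rw [totalD_apply, map_sum]
  refine Finset.sum_induction _ (fun e : FormAlg M n => e * e = 0) ?_ (by simp) ?_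
  · intro a b ha hb
    have h2 := two_smul_zero (M := M) (a * b)
    rw [two_nsmul] at h2
    linear_combination ha + hb + h2
  · intro i _
    rw [← map_mul, Ideal.Quotient.eq_zero_iff_mem]
    have : (C (D i f) * X i * (C (D i f) * X i) : MvPolynomial (Fin n) M) =
      C (D i f) * C (D i f) * X i ^ 2 := by ring
    rw [this]
    exact Ideal.mul_mem_left _ _ (Ideal.subset_span ⟨i, rfl⟩)

variable {Γ : Type*} [LinearOrderedCommGroupWithZero Γ] (v : Valuation M Γ)

/-- The forms with integral coefficients. -/
def intForms (n : ℕ) : Subring (FormAlg M n) :=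
  ((Ideal.Quotient.mk (sqIdeal M n)).comp (MvPolynomial.map v.integer.subtype)).range

lemma scalar_mem_intForms {a : M} (ha : v a ≤ 1) : algebraMap M (FormAlg M n) a ∈ intForms v n :=
  ⟨C ⟨a, ha⟩, by simp; rfl⟩

lemma totalD_mem_intForms {D : Fin n → Derivation κ M M} {f : M}
    (h : ∀ i, v (D i f) ≤ 1) : totalD D f ∈ intForms v n := by
  refine ⟨∑ i, C ⟨D i f, h i⟩ * X i, ?_⟩
  rw [totalD_apply]; simp

/-- The top coefficient of a multiple of an integral form. -/
lemma coeff_le_of_mem_intForms {e : FormAlg M n} (he : e ∈ intForms v n)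
    {c : M} {p : MvPolynomial (Fin n) M} (hp : Ideal.Quotient.mk (sqIdeal M n) p = c • e) :
    v (coeff (∑ i, Finsupp.single i 1) p) ≤ v c := by
  obtain ⟨q, rfl⟩ := he
  simp only [RingHom.comp_apply] at hp
  rw [mk_smul_form] at hp
  rw [coeff_eq_of_mk_eq hp, coeff_C_mul, coeff_map, map_mul]
  exact mul_le_of_le_one_right' (coeff _ q).2

variable {v}

/-- Logarithmic forms have at most a simple pole along a uniformizer, and no pole at all when
the uniformizer is a constant of the derivations. -/
lemma logRing_le {D : Fin n → Derivation κ M M} [CharP M 2]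
    (hDint : ∀ i f, v f ≤ 1 → v (D i f) ≤ 1) {ϖ : M} (hϖ0 : ϖ ≠ 0) (hϖ1 : v ϖ ≤ 1)
    (hϖ : ∀ f, f ≠ 0 → ∃ k : ℤ, v f = v ϖ ^ k) {e : FormAlg M n}
    (he : e ∈ LogRing v (totalD D)) :
    ∃ a ∈ intForms v n, ∃ b ∈ intForms v n, e = a + dlog (totalD D) ϖ * b := by
  have hdz : ∀ k : ℤ, dlog (totalD D) (ϖ ^ k) = (k : FormAlg M n) * dlog (totalD D) ϖ := by
    intro k
    induction k using Int.induction_on with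
    | zero => simp [dlog]
    | succ i ih =>
      rw [zpow_add_one₀ hϖ0, dlog_mul _ (zpow_ne_zero _ hϖ0) hϖ0, ih]; push_cast; ring
    | pred i ih =>
      rw [zpow_sub_one₀ hϖ0, dlog_mul _ (zpow_ne_zero _ hϖ0) (inv_ne_zero hϖ0), ih,
        dlog_inv _ hϖ0]; push_cast; ring
  induction he using Subring.closure_induction with
  | mem e he =>
    rcases he with ⟨a, ha, rfl⟩ | ⟨f, rfl⟩
    · exact ⟨_, scalar_mem_intForms v ha, 0, zero_mem _, by simp⟩
    · by_cases hf : f = 0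
      · exact ⟨0, zero_mem _, 0, zero_mem _, by simp [hf, dlog]⟩
      obtain ⟨k, hk⟩ := hϖ f hf
      set u := f / ϖ ^ k with hu
      have hu0 : u ≠ 0 := div_ne_zero hf (zpow_ne_zero _ hϖ0)
      have hvu : v u = 1 := by
        rw [hu, map_div₀, map_zpow₀, hk, div_self]
        exact zpow_ne_zero _ (by simpa using hϖ0)
      have hfu : f = u * ϖ ^ k := (div_mul_cancel₀ _ (zpow_ne_zero _ hϖ0)).symm
      refine ⟨dlog (totalD D) u, ?_, (k : FormAlg M n), intCast_mem _ k, ?_⟩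
      · rw [dlog, Algebra.smul_def]
        exact mul_mem (scalar_mem_intForms v (by rw [map_inv₀, hvu, inv_one]))
          (totalD_mem_intForms v fun i => hDint i u hvu.le)
      · rw [hfu, dlog_mul _ hu0 (zpow_ne_zero _ hϖ0), hdz, mul_comm]
  | zero => exact ⟨0, zero_mem _, 0, zero_mem _, by simp⟩
  | one => exact ⟨1, one_mem _, 0, zero_mem _, by simp⟩
  | add e f _ _ he hf =>
    obtain ⟨a, ha, b, hb, rfl⟩ := he
    obtain ⟨a', ha', b', hb', rfl⟩ := hf
    exact ⟨a + a', add_mem ha ha', b + b', add_mem hb hb', by ring⟩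
  | neg e _ he =>
    obtain ⟨a, ha, b, hb, rfl⟩ := he
    exact ⟨-a, neg_mem ha, -b, neg_mem hb, by ring⟩
  | mul e f _ _ he hf =>
    obtain ⟨a, ha, b, hb, rfl⟩ := he
    obtain ⟨a', ha', b', hb', rfl⟩ := hf
    refine ⟨a * a', mul_mem ha ha', a * b' + a' * b,
      add_mem (mul_mem ha hb') (mul_mem ha' hb), ?_⟩
    -- the double pole drops out because `dlog ϖ` squares to zero
    linear_combination (b * b') * dlog_sq (totalD_sq D) ϖ

/-- The top coefficient of a small form is integral; it is small if the uniformizer is a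
constant of the derivations. -/
lemma coeff_le_of_small {D : Fin n → Derivation κ M M} [CharP M 2]
    (hDint : ∀ i f, v f ≤ 1 → v (D i f) ≤ 1) {ϖ : M} (hϖ0 : ϖ ≠ 0) (hϖ1 : v ϖ < 1)
    (hϖ : ∀ f, f ≠ 0 → ∃ k : ℤ, v f = v ϖ ^ k) {p : MvPolynomial (Fin n) M}
    (he : Small v (totalD D) (Ideal.Quotient.mk (sqIdeal M n) p)) :
    v (coeff (∑ i, Finsupp.single i 1) p) ≤ 1 ∧
      ((∀ i, D i ϖ = 0) → v (coeff (∑ i, Finsupp.single i 1) p) < 1) := by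
  obtain ⟨π, hπ, e', he', hp⟩ := he
  obtain ⟨a, ha, b, hb, rfl⟩ := logRing_le hDint hϖ0 hϖ1.le hϖ he'
  constructor
  · by_cases hπ0 : π = 0
    · have h := coeff_le_of_mem_intForms v (zero_mem _) (c := 0) (hp.trans (by rw [hπ0, zero_smul, zero_smul]))
      rw [map_zero] at h
      exact h.trans zero_le
    have hπϖ : v π ≤ v ϖ := by
      obtain ⟨k, hk⟩ := hϖ π hπ0
      rw [hk]
      have hpos : 0 < v ϖ := zero_lt_iff.2 (by simpa using hϖ0)
      have hk1 : 1 ≤ k := by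
        by_contra hcon
        rw [hk] at hπ
        have : (1 : Γ) ≤ v ϖ ^ k := one_le_zpow_of_nonpos₀ hpos hϖ1.le (by omega)
        exact absurd hπ (not_lt.2 this)
      calc v ϖ ^ k ≤ v ϖ ^ (1 : ℤ) := zpow_le_zpow_right_of_le_one₀ hpos hϖ1.le hk1
        _ = _ := zpow_one _
    have h2 : π • (a + dlog (totalD D) ϖ * b) = (π / ϖ) • (ϖ • a + totalD D ϖ * b) := by
      rw [d_eq_smul_dlog (totalD D) ϖ, smul_mul_assoc, ← smul_add, smul_smul,
        div_mul_cancel₀ _ hϖ0]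
    rw [h2] at hp
    refine (coeff_le_of_mem_intForms v ?_ hp).trans ?_
    · refine add_mem ?_ (mul_mem (totalD_mem_intForms v fun i => hDint i _ hϖ1.le) hb)
      exact (Algebra.smul_def ϖ a) ▸ mul_mem (scalar_mem_intForms v hϖ1.le) ha
    · rw [map_div₀]; exact div_le_one_of_le₀ hπϖ zero_le
  · intro hD
    have h0 : dlog (totalD D) ϖ = 0 := by
      rw [dlog, totalD_apply]; simp [hD]
    rw [h0, zero_mul, add_zero] at hp
    exact (coeff_le_of_mem_intForms v ha hp).trans_lt hπ

end Forms

/-! ### Extending derivations to fraction fields -/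

section DerFrac
variable {κ A K : Type*} [Field κ] [CommRing A] [Field K] [Algebra κ A] [Algebra κ K]
  [Algebra A K] [IsScalarTower κ A K]

/-- A deformation `A → K[ε]` of the localization map `A → K` extends to a derivation of `K`. -/
lemma exists_der_frac_of_hom [IsDomain A] [IsFractionRing A K] (φ : A →ₐ[κ] DualNumber K)
    (hφ : ∀ a, TrivSqZeroExt.fst (φ a) = algebraMap A K a) :
    ∃ D : Derivation κ K K, ∀ a, D (algebraMap A K a) = TrivSqZeroExt.snd (φ a) := by
  have hu : ∀ y : nonZeroDivisors A, IsUnit (φ.toRingHom y) := fun y => by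
    rw [TrivSqZeroExt.isUnit_iff_isUnit_fst]
    change IsUnit (TrivSqZeroExt.fst (φ y))
    rw [hφ]
    exact IsLocalization.map_units K y
  let Φ : K →+* DualNumber K := IsLocalization.lift hu
  have hΦ : ∀ a, Φ (algebraMap A K a) = φ a := fun a => IsLocalization.lift_eq hu a
  have hfst : ∀ k, TrivSqZeroExt.fst (Φ k) = k := by
    intro k
    have : ((TrivSqZeroExt.fstHom K K K).toRingHom.comp Φ) = RingHom.id K := by
      refine IsLocalization.ringHom_ext (nonZeroDivisors A) ?_
      ext a
      change TrivSqZeroExt.fst (Φ (algebraMap A K a)) = _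
      rw [hΦ, hφ]; rfl
    exact congrArg (fun f : K →+* K => f k) this
  have hκ : ∀ c : κ, TrivSqZeroExt.snd (Φ (algebraMap κ K c)) = 0 := by
    intro c
    rw [IsScalarTower.algebraMap_apply κ A K, hΦ, AlgHom.commutes]
    rfl
  refine ⟨Derivation.mk' ⟨⟨fun k => TrivSqZeroExt.snd (Φ k), fun a b => by simp⟩, ?_⟩ ?_, ?_⟩
  · intro c k
    simp only [RingHom.id_apply]
    rw [Algebra.smul_def, map_mul, TrivSqZeroExt.snd_mul, hκ, hfst, smul_zero, add_zero,
      algebraMap_smul]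
  · intro a b
    change TrivSqZeroExt.snd (Φ (a * b)) = _
    rw [map_mul, TrivSqZeroExt.snd_mul, hfst, hfst, op_smul_eq_smul]
    rfl
  · intro a
    change TrivSqZeroExt.snd (Φ _) = _
    rw [hΦ]

lemma exists_der_frac [IsDomain A] [IsFractionRing A K] (D : Derivation κ A A) :
    ∃ D' : Derivation κ K K, ∀ a, D' (algebraMap A K a) = algebraMap A K (D a) := by
  let φ : A →ₐ[κ] DualNumber K := AlgHom.ofLinearMap
    { toFun := fun a => ((algebraMap A K a, algebraMap A K (D a)) : K × K)
      map_add' := fun a b => TrivSqZeroExt.ext (map_add (algebraMap A K) a b)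
        ((congrArg (algebraMap A K) (map_add D a b)).trans (map_add (algebraMap A K) _ _))
      map_smul' := fun c a => TrivSqZeroExt.ext (algebraMap.coe_smul (C := K) c a)
        ((congrArg (algebraMap A K) (D.map_smul c a)).trans (algebraMap.coe_smul (C := K) c _)) }
    (TrivSqZeroExt.ext (map_one (algebraMap A K))
      ((congrArg (algebraMap A K) D.map_one_eq_zero).trans (map_zero _)))
    (fun a b => TrivSqZeroExt.ext (map_mul (algebraMap A K) a b) (by
      change algebraMap A K (D (a * b)) = algebraMap A K a * algebraMap A K (D b) +
        algebraMap A K (D a) * algebraMap A K b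
      simp only [Derivation.leibniz, smul_eq_mul, map_add, map_mul]; ring))
  obtain ⟨D', h⟩ := exists_der_frac_of_hom φ (fun a => rfl)
  exact ⟨D', fun a => h a⟩

end DerFrac

/-! ### The residue coefficient -/

section Theta
variable {κ M : Type*} [Field κ] [Field M] [Algebra κ M] {N : ℕ}

/-- The homogeneous Jacobian entries `x₀ D_i x_{j+1} - x_{j+1} D_i x₀`. -/
def jac {R : Type*} [CommRing R] [Algebra κ R] (D : Fin (N + 1) → Derivation κ R R)
    (x : Fin (N + 2) → R) (j i : Fin (N + 1)) : R :=
  x 0 * D i (x j.succ) - x j.succ * D i (x 0)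

/-- The coefficient of the form `∏ dlog (x_i / x₀) · dlog g₁` on the standard volume form. -/
def Theta (D : Fin (N + 1) → Derivation κ M M) (x : Fin (N + 2) → M) : M :=
  perm (jac D x) * gB 0 x / (gG 0 x * ∏ j : Fin (N + 1), (x 0 * x j.succ))

lemma jac_smul {R : Type*} [CommRing R] [Algebra κ R] (D : Fin (N + 1) → Derivation κ R R)
    (c : R) (x : Fin (N + 2) → R) (j i) : jac D (c • x) j i = c ^ 2 * jac D x j i := by
  simp only [jac, Pi.smul_apply, smul_eq_mul, Derivation.leibniz]; ring

lemma zero_ne_lastIx : (0 : Fin (N + 2)) ≠ lastIx N := by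
  simp [lastIx, Fin.ext_iff]

lemma midIx_ne_lastIx (i : Fin N) : midIx i ≠ lastIx N := by
  have := i.2
  simp [lastIx, midIx, Fin.ext_iff]; omega

lemma Theta_smul (D : Fin (N + 1) → Derivation κ M M) {c : M} (hc : c ≠ 0)
    (x : Fin (N + 2) → M) : Theta D (c • x) = Theta D x := by
  have h1 : perm (jac D (c • x)) = (c ^ 2) ^ (N + 1) * perm (jac D x) := by
    rw [show jac D (c • x) = fun j i => (fun _ => c ^ 2) j * jac D x j i from
      funext fun j => funext fun i => jac_smul D c x j i, perm_smul]
    simp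
  have h2 : ∏ j : Fin (N + 1), ((c • x) 0 * (c • x) j.succ) =
      (c ^ 2) ^ (N + 1) * ∏ j : Fin (N + 1), (x 0 * x j.succ) := by
    rw [← Fin.prod_const, ← Finset.prod_mul_distrib]
    refine Finset.prod_congr rfl fun j _ => ?_
    simp only [Pi.smul_apply, smul_eq_mul]; ring
  rw [Theta, Theta, h1, h2, gB_smul zero_ne_lastIx, gG_smul zero_ne_lastIx]
  rw [show (c ^ 2) ^ (N + 1) * perm (jac D x) * (c ^ (2 * (N + 1)) * gB 0 x) =
    ((c ^ 2) ^ (N + 1) * c ^ (2 * (N + 1))) * (perm (jac D x) * gB 0 x) by ring,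
    show c ^ (2 * (N + 1)) * gG 0 x * ((c ^ 2) ^ (N + 1) * ∏ j : Fin (N + 1), (x 0 * x j.succ)) =
    ((c ^ 2) ^ (N + 1) * c ^ (2 * (N + 1))) * (gG 0 x * ∏ j : Fin (N + 1), (x 0 * x j.succ)) by
      ring]
  exact mul_div_mul_left _ _ (by positivity)

lemma iso_scale {I R : Type*} [Field R] [DecidableEq I] [Fintype I] {h : I → R} {g₁ g₂ c : R}
    (hc : c ≠ 0) (H : Iso h g₁ g₂) : Iso h (c * g₁) (c * g₂) := by
  obtain ⟨y, y', h0, h1⟩ := H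
  refine ⟨y, c⁻¹ • y', ?_, ?_⟩
  · rcases h0 with h0 | h0
    · exact Or.inl h0
    · exact Or.inr (smul_ne_zero (inv_ne_zero hc) h0)
  · have : pform h Finset.univ (c⁻¹ • y') = (c⁻¹) ^ 2 * pform h Finset.univ y' := by
      rw [pform, pform, Finset.mul_sum]
      refine Finset.sum_congr rfl fun t _ => ?_
      simp only [Pi.smul_apply, smul_eq_mul]; ring
    rw [this, Pi.smul_apply, smul_eq_mul, ← h1]
    field_simp

/-- The isotropy condition attached to a vector `x`. -/
def IsoAt {R : Type*} [Field R] (i1 : Fin N) (x : Fin (N + 2) → R) : Prop :=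
  Iso (fun i : Fin N => x (midIx i) / x 0) (gG 0 x) (gG (midIx i1) x)

lemma IsoAt.smul {i1 : Fin N} {x : Fin (N + 2) → M} (h : IsoAt i1 x) {c : M} (hc : c ≠ 0) :
    IsoAt i1 (c • x) := by
  rw [IsoAt, gG_smul zero_ne_lastIx, gG_smul (midIx_ne_lastIx i1)]
  have : (fun i : Fin N => (c • x) (midIx i) / (c • x) 0) =
      fun i : Fin N => x (midIx i) / x 0 := by
    funext i
    simp only [Pi.smul_apply, smul_eq_mul]
    exact mul_div_mul_left _ _ hc
  rw [this]
  exact iso_scale (pow_ne_zero _ hc) h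

/-- The top coefficient of the residue form is `Theta`, because `g₁ = A² + B₁` gives
`dlog g₁ = (B₁ / g₁) dlog (x_{N+1} / x₀)` in characteristic two. -/
lemma residue_form_eq [CharP M 2] (D : Fin (N + 1) → Derivation κ M M) (x : Fin (N + 2) → M)
    (hx0 : ∀ i, x i ≠ 0) (hg₁ : gG 0 x ≠ 0) :
    ∃ p : MvPolynomial (Fin (N + 1)) M,
      (∏ i : Fin N, dlog (totalD D) (x (midIx i) / x 0)) * dlog (totalD D) (gG 0 x) =
        Ideal.Quotient.mk (sqIdeal M (N + 1)) p ∧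
      coeff (∑ i, Finsupp.single i 1) p = Theta D x := by
  have h1 : dlog (totalD D) (gG 0 x) =
      (gB 0 x / gG 0 x) • dlog (totalD D) (x (lastIx N) / x 0) := by
    have h := gG_smul_dlog (d := totalD D) (j := 0) x hx0
    have h0 : dlog (totalD D) (x 0 / x 0) = 0 := by rw [div_self (hx0 0)]; simp [dlog]
    rw [h0, zero_add] at h
    rw [div_eq_inv_mul, mul_smul, ← h, smul_smul, inv_mul_cancel₀ hg₁, one_smul]
  have h2 : ∀ j : Fin (N + 1), dlog (totalD D) (x j.succ / x 0) =
      Ideal.Quotient.mk (sqIdeal M (N + 1))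
        (∑ i, C ((x 0 * x j.succ)⁻¹ * jac D x j i) * X i) := by
    intro j
    rw [dlog, totalD_apply, mk_smul_form, Finset.mul_sum]
    congr 1
    refine Finset.sum_congr rfl fun i _ => ?_
    rw [← mul_assoc, ← C_mul, Derivation.leibniz_div]
    congr 2
    have := hx0 0
    have := hx0 j.succ
    simp only [jac, smul_eq_mul]
    field_simp
  refine ⟨C (gB 0 x / gG 0 x) * ∏ j : Fin (N + 1),
    ∑ i, C ((x 0 * x j.succ)⁻¹ * jac D x j i) * X i, ?_, ?_⟩
  · rw [h1, mul_smul_comm]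
    have h3 : (∏ i : Fin N, dlog (totalD D) (x (midIx i) / x 0)) *
        dlog (totalD D) (x (lastIx N) / x 0) =
        ∏ j : Fin (N + 1), dlog (totalD D) (x j.succ / x 0) := by
      rw [Fin.prod_univ_castSucc]; rfl
    rw [h3, ← mk_smul_form, map_prod]
    congr 1
    exact Finset.prod_congr rfl fun j _ => h2 j
  · rw [coeff_C_mul]
    have h4 := perm_smul (fun j : Fin (N + 1) => (x 0 * x j.succ)⁻¹) (jac D x)
    rw [perm] at h4
    rw [h4, Theta, Finset.prod_inv_distrib]
    have h5 : ∏ j : Fin (N + 1), (x 0 * x j.succ) ≠ 0 :=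
      Finset.prod_ne_zero_iff.2 fun j _ => mul_ne_zero (hx0 _) (hx0 _)
    field_simp

variable {Γ : Type*} [LinearOrderedCommGroupWithZero Γ] {v : Valuation M Γ}

/-- Special reduction: the coefficient is integral, and small for constant uniformizers. -/
lemma Theta_special [CharP κ 2] [CharP M 2] (hperf : ∀ a : κ, ∃ b, b ^ 2 = a)
    (hκ : ∀ a : κ, a ≠ 0 → v (algebraMap κ M a) = 1) (i1 : Fin N)
    {D : Fin (N + 1) → Derivation κ M M}
    (hDint : ∀ i f, v f ≤ 1 → v (D i f) ≤ 1) {ϖ : M} (hϖ0 : ϖ ≠ 0) (hϖ1 : v ϖ < 1)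
    (hϖ : ∀ f, f ≠ 0 → ∃ k : ℤ, v f = v ϖ ^ k)
    (x : Fin (N + 2) → M) (hx0 : ∀ i, x i ≠ 0) (hx1 : ∀ i, v (x i) ≤ 1)
    (hx : ∃ i, v (x i) = 1) {e : ℕ} {P : MvPolynomial (Fin (N + 2)) κ} (hP0 : P ≠ 0)
    (hP : P.IsHomogeneous e) (hlt : v (aeval x P) < 1)
    (hg₁ : gG 0 x ≠ 0) (hg₂ : gG (midIx i1) x ≠ 0) (hiso : IsoAt i1 x) :
    v (Theta D x) ≤ 1 ∧ ((∀ i, D i ϖ = 0) → v (Theta D x) < 1) := by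
  obtain ⟨p, hp, hc⟩ := residue_form_eq D x hx0 hg₁
  have h := small_residue_form (d := totalD D) (totalD_sq D) hperf hκ i1 x hx0 hx1 hx hP0 hP hlt
    hg₁ hg₂ hiso
  rw [hp] at h
  rw [← hc]
  exact coeff_le_of_small hDint hϖ0 hϖ1 hϖ h

lemma perm_le_one {n : ℕ} {a : Fin n → Fin n → M} (h : ∀ j i, v (a j i) ≤ 1) :
    v (perm a) ≤ 1 := by
  have := map_perm v.integer.subtype (fun j i => (⟨a j i, h j i⟩ : v.integer))
  have h2 : perm a = v.integer.subtype (perm fun j i => (⟨a j i, h j i⟩ : v.integer)) := by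
    rw [this]; rfl
  rw [h2]
  exact (perm fun j i => (⟨a j i, h j i⟩ : v.integer)).2

/-- Generic polynomial versions of the special forms. -/
def gGpoly (κ : Type*) [Field κ] (j : Fin (N + 2)) : MvPolynomial (Fin (N + 2)) κ := gG j X

lemma gGpoly_isHomogeneous {j : Fin (N + 2)} (hj : j ≠ lastIx N) :
    (gGpoly κ j).IsHomogeneous (2 * (N + 1)) := by
  have hc : ((Finset.univ.erase j).erase (lastIx N)).card = N := by
    rw [Finset.card_erase_of_mem (by simp [Ne.symm hj]), Finset.card_erase_of_mem (by simp)]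
    simp
  refine IsHomogeneous.add ?_ ?_
  · rw [mul_comm]
    refine IsHomogeneous.pow ?_ 2
    exact IsHomogeneous.sum _ _ _ fun i _ => by
      simpa using (isHomogeneous_X κ i).pow (N + 1)
  · have h1 : (∏ i ∈ (Finset.univ.erase j).erase (lastIx N), (X i : MvPolynomial (Fin (N + 2)) κ)
        ^ 2).IsHomogeneous (∑ i ∈ (Finset.univ.erase j).erase (lastIx N), 2) :=
      IsHomogeneous.prod _ _ _ fun i _ => by simpa using (isHomogeneous_X κ i).pow 2
    have h2 := ((isHomogeneous_X κ j).mul (isHomogeneous_X κ (lastIx N))).mul h1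
    have h3 : 1 + 1 + ∑ i ∈ (Finset.univ.erase j).erase (lastIx N), 2 = 2 * (N + 1) := by
      rw [Finset.sum_const, hc, smul_eq_mul]; ring
    rw [h3] at h2
    exact h2

lemma aeval_gGpoly {R : Type*} [CommRing R] [Algebra κ R] (j : Fin (N + 2))
    (x : Fin (N + 2) → R) : aeval x (gGpoly κ j) = gG j x := by
  have := map_gG (aeval x : MvPolynomial (Fin (N + 2)) κ →ₐ[κ] R).toRingHom j X
  refine this.trans ?_
  congr 1
  funext i
  simp

lemma gG_single_last {R : Type*} [CommRing R] {j : Fin (N + 2)} (hj : j ≠ lastIx N) :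
    gG j (Pi.single (lastIx N) (1 : R)) = 1 := by
  have h1 : gA (Pi.single (lastIx N) (1 : R)) = 1 := by
    rw [gA, Finset.sum_eq_single (lastIx N)]
    · simp
    · intro i _ hi; simp [Pi.single_eq_of_ne hi]
    · simp
  rw [gG, h1, gB, Pi.single_eq_of_ne hj]; simp

lemma gGpoly_ne_zero {j : Fin (N + 2)} (hj : j ≠ lastIx N) : gGpoly κ j ≠ 0 := by
  intro h
  have h1 := aeval_gGpoly (κ := κ) (R := κ) j (Pi.single (lastIx N) 1)
  rw [h, gG_single_last hj] at h1
  simp at h1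

/-- Generic reduction: if no homogeneous form over `κ` in the coordinates becomes small, then the
numerator of `Theta` is integral and its denominator is a unit. -/
lemma Theta_generic (hκ : ∀ a : κ, a ≠ 0 → v (algebraMap κ M a) = 1)
    {D : Fin (N + 1) → Derivation κ M M}
    (hDint : ∀ i f, v f ≤ 1 → v (D i f) ≤ 1)
    (x : Fin (N + 2) → M) (hx1 : ∀ i, v (x i) ≤ 1)
    (hgen : ∀ (e : ℕ) (P : MvPolynomial (Fin (N + 2)) κ), P ≠ 0 → P.IsHomogeneous e →
      1 ≤ v (aeval x P)) : v (Theta D x) ≤ 1 := by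
  have hxi : ∀ i, v (x i) = 1 := fun i => le_antisymm (hx1 i) (by
    simpa using hgen 1 (X i) (X_ne_zero i) (isHomogeneous_X κ i))
  have hg : 1 ≤ v (gG 0 x) := by
    have := hgen _ _ (gGpoly_ne_zero zero_ne_lastIx) (gGpoly_isHomogeneous (κ := κ) (N := N)
      (j := 0) zero_ne_lastIx)
    rwa [aeval_gGpoly] at this
  have hB : v (gB 0 x) ≤ 1 := by
    simp only [gB, map_mul, map_prod, map_pow, hxi]
    simp
  have hpm : v (perm (jac D x)) ≤ 1 := by
    refine perm_le_one fun j i => ?_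
    refine (v.map_sub _ _).trans (max_le ?_ ?_)
    · rw [map_mul]; exact mul_le_one' (hx1 _) (hDint _ _ (hx1 _))
    · rw [map_mul]; exact mul_le_one' (hx1 _) (hDint _ _ (hx1 _))
  rw [Theta, map_div₀, map_mul, map_mul, map_prod]
  simp only [map_mul, hxi, one_mul, mul_one, Finset.prod_const_one]
  exact div_le_one_of_le₀ ((mul_le_one' hpm hB).trans hg) zero_le

/-- Integrality of the coefficient at every discrete valuation. -/
lemma Theta_le_one [CharP κ 2] [CharP M 2] (hperf : ∀ a : κ, ∃ b, b ^ 2 = a)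
    (hκ : ∀ a : κ, a ≠ 0 → v (algebraMap κ M a) = 1) (i1 : Fin N)
    {D : Fin (N + 1) → Derivation κ M M}
    (hDint : ∀ i f, v f ≤ 1 → v (D i f) ≤ 1) {ϖ : M} (hϖ0 : ϖ ≠ 0) (hϖ1 : v ϖ < 1)
    (hϖ : ∀ f, f ≠ 0 → ∃ k : ℤ, v f = v ϖ ^ k)
    (x : Fin (N + 2) → M) (hx0 : ∀ i, x i ≠ 0)
    (hg₁ : gG 0 x ≠ 0) (hg₂ : gG (midIx i1) x ≠ 0) (hiso : IsoAt i1 x) :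
    v (Theta D x) ≤ 1 := by
  obtain ⟨i₀, -, hi₀⟩ := Finset.exists_max_image Finset.univ (fun i => v (x i)) ⟨0, by simp⟩
  have hc : (x i₀)⁻¹ ≠ 0 := inv_ne_zero (hx0 i₀)
  rw [← Theta_smul D hc x]
  have hx1 : ∀ i, v (((x i₀)⁻¹ • x) i) ≤ 1 := fun i => by
    rw [Pi.smul_apply, smul_eq_mul, map_mul, map_inv₀, ← div_eq_inv_mul]
    exact div_le_one_of_le₀ (hi₀ i (by simp)) zero_le
  by_cases hsp : ∃ (e : ℕ) (P : MvPolynomial (Fin (N + 2)) κ), P ≠ 0 ∧ P.IsHomogeneous e ∧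
      v (aeval ((x i₀)⁻¹ • x) P) < 1
  · obtain ⟨e, P, hP0, hP, hlt⟩ := hsp
    refine (Theta_special hperf hκ i1 hDint hϖ0 hϖ1 hϖ _ (fun i => ?_) hx1 ⟨i₀, ?_⟩ hP0 hP hlt
      ?_ ?_ (hiso.smul hc)).1
    · exact mul_ne_zero hc (hx0 i)
    · simp [hx0]
    · rw [gG_smul zero_ne_lastIx]; exact mul_ne_zero (pow_ne_zero _ hc) hg₁
    · rw [gG_smul (midIx_ne_lastIx i1)]; exact mul_ne_zero (pow_ne_zero _ hc) hg₂
  · push Not at hsp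
    exact Theta_generic hκ hDint _ hx1 hsp

end Theta

/-! ### The residue coefficient along a rational curve -/

section Curve
variable {κ F : Type*} [Field κ] [Field F] [Algebra κ F] {N : ℕ}

/-- The coefficientwise extension of a derivation to polynomials. -/
def polyDer (D : Derivation κ F F) : Derivation κ (Polynomial F) (Polynomial F) :=
  PolynomialModule.equivPolynomialSelf.compDer D.mapCoeffs

lemma coeff_polyDer (D : Derivation κ F F) (p : Polynomial F) (i : ℕ) :
    (polyDer D p).coeff i = D (p.coeff i) := by
  rfl

lemma polyDer_X (D : Derivation κ F F) : polyDer D Polynomial.X = 0 := by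
  ext i
  rw [coeff_polyDer, Polynomial.coeff_X]
  split_ifs <;> simp

lemma natDegree_polyDer_le (D : Derivation κ F F) (p : Polynomial F) :
    (polyDer D p).natDegree ≤ p.natDegree := by
  refine Polynomial.natDegree_le_iff_coeff_eq_zero.2 fun i hi => ?_
  rw [coeff_polyDer, Polynomial.coeff_eq_zero_of_natDegree_lt hi, map_zero]

/-- A vector satisfying no nontrivial homogeneous relation over `κ`. -/
def Gen (κ : Type*) [Field κ] {R : Type*} [CommRing R] [Algebra κ R] (x : Fin (N + 2) → R) :
    Prop :=
  ∀ (e : ℕ) (P : MvPolynomial (Fin (N + 2)) κ), P ≠ 0 → P.IsHomogeneous e → aeval x P ≠ 0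

open Classical in
/-- The residue coefficient, set to zero on nongeneric vectors. -/
def fval (D : Fin (N + 1) → Derivation κ F F) (x : Fin (N + 2) → F) : F :=
  if Gen κ x then Theta D x else 0

lemma aeval_smul_homog {ι R : Type*} [CommRing R] [Algebra κ R] {e : ℕ}
    {P : MvPolynomial ι κ} (hP : P.IsHomogeneous e) (c : R) (x : ι → R) :
    aeval (c • x) P = c ^ e * aeval x P := by
  rw [aeval_def, aeval_def, eval₂_eq, eval₂_eq, Finset.mul_sum]
  refine Finset.sum_congr rfl fun m hm => ?_
  have he : ∑ i ∈ m.support, m i = e := by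
    have := hP (mem_support_iff.1 hm)
    rw [Finsupp.weight_apply, Finsupp.sum] at this
    simpa using this
  simp only [Pi.smul_apply, smul_eq_mul, mul_pow, Finset.prod_mul_distrib]
  rw [Finset.prod_pow_eq_pow_sum, he]
  ring

lemma Gen.smul {x : Fin (N + 2) → F} (h : Gen κ x) {c : F} (hc : c ≠ 0) : Gen κ (c • x) := by
  intro e P hP0 hP
  rw [aeval_smul_homog hP]
  exact mul_ne_zero (pow_ne_zero _ hc) (h e P hP0 hP)

lemma fval_smul (D : Fin (N + 1) → Derivation κ F F) {c : F} (hc : c ≠ 0)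
    (x : Fin (N + 2) → F) : fval D (c • x) = fval D x := by
  have : Gen κ (c • x) ↔ Gen κ x := by
    refine ⟨fun h => ?_, fun h => h.smul hc⟩
    have := h.smul (inv_ne_zero hc)
    rwa [smul_smul, inv_mul_cancel₀ hc, one_smul] at this
  by_cases h : Gen κ x
  · rw [fval, if_pos (this.2 h), fval, if_pos h, Theta_smul D hc]
  · rw [fval, if_neg (this.not.2 h), fval, if_neg h]

lemma Gen.ne_zero {x : Fin (N + 2) → F} (h : Gen κ x) (i) : x i ≠ 0 := by
  simpa using h 1 (X i) (X_ne_zero i) (isHomogeneous_X κ i)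

lemma Gen.gG_ne_zero {x : Fin (N + 2) → F} (h : Gen κ x) {j} (hj : j ≠ lastIx N) :
    gG j x ≠ 0 := by
  have := h _ _ (gGpoly_ne_zero hj) (gGpoly_isHomogeneous hj)
  rwa [aeval_gGpoly] at this

lemma fval_of_gen {D : Fin (N + 1) → Derivation κ F F} {x : Fin (N + 2) → F} (h : Gen κ x) :
    fval D x = Theta D x := by rw [fval, if_pos h]

lemma fval_of_not_gen {D : Fin (N + 1) → Derivation κ F F} {x : Fin (N + 2) → F}
    (h : ¬ Gen κ x) : fval D x = 0 := by rw [fval, if_neg h]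

lemma exists_zpow_of_exp {M : Type*} [Field M] {v : Valuation M (WithZero (Multiplicative ℤ))}
    {ϖ : M} (h : v ϖ = WithZero.exp (-1 : ℤ)) (f : M) (hf : f ≠ 0) : ∃ k : ℤ, v f = v ϖ ^ k := by
  have h0 : v f ≠ 0 := by simpa using hf
  refine ⟨- WithZero.log (v f), ?_⟩
  rw [h, ← WithZero.exp_zsmul]
  simp [WithZero.exp_log h0]

variable {M : Type*} [Field M] [Algebra κ M] {Γ : Type*} [LinearOrderedCommGroupWithZero Γ]
  {v : Valuation M Γ}

lemma val_poly_le_one {τ : Polynomial F →ₐ[κ] M}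
    (hC : ∀ a, a ≠ 0 → v (τ (Polynomial.C a)) = 1) (hX : v (τ Polynomial.X) < 1)
    (p : Polynomial F) : v (τ p) ≤ 1 := by
  induction p using Polynomial.induction_on' with
  | add p q hp hq => rw [map_add]; exact (v.map_add _ _).trans (max_le hp hq)
  | monomial n a =>
    rw [← Polynomial.C_mul_X_pow_eq_monomial, map_mul, map_mul, map_pow, map_pow]
    refine mul_le_one' ?_ (pow_le_one' hX.le n)
    by_cases ha : a = 0
    · simp [ha]
    · exact (hC a ha).le

lemma val_poly_lt_one_iff {τ : Polynomial F →ₐ[κ] M}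
    (hC : ∀ a, a ≠ 0 → v (τ (Polynomial.C a)) = 1) (hX : v (τ Polynomial.X) < 1)
    (p : Polynomial F) : v (τ p) < 1 ↔ p.eval 0 = 0 := by
  have hp : p = Polynomial.X * p.divX + Polynomial.C (p.eval 0) := by
    conv_lhs => rw [← Polynomial.X_mul_divX_add p]
    rw [Polynomial.coeff_zero_eq_eval_zero]
  have h1 : v (τ (Polynomial.X * p.divX)) < 1 := by
    rw [map_mul, map_mul]
    exact (mul_le_of_le_one_right' (val_poly_le_one hC hX _)).trans_lt hX
  constructor
  · intro h
    by_contra h0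
    have h2 := hC _ h0
    have h3 : v (τ p - τ (Polynomial.X * p.divX)) < 1 :=
      (v.map_sub _ _).trans_lt (max_lt h h1)
    rw [← map_sub] at h3
    have h4 : p - Polynomial.X * p.divX = Polynomial.C (p.eval 0) := by
      rw [sub_eq_iff_eq_add']; exact hp
    rw [h4, h2] at h3
    exact lt_irrefl _ h3
  · intro h
    rw [hp, h]; simpa using h1

lemma eval_zero_jac (D : Fin (N + 1) → Derivation κ F F) (x : Fin (N + 2) → Polynomial F) (j i) :
    Polynomial.evalRingHom 0 (jac (fun i => polyDer (D i)) x j i) =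
      jac D (fun i => (x i).eval 0) j i := by
  have h : ∀ p, (polyDer (D i) p).eval 0 = D i (p.eval 0) := fun p => by
    rw [← Polynomial.coeff_zero_eq_eval_zero, coeff_polyDer, Polynomial.coeff_zero_eq_eval_zero]
  simp [jac, h]

/-- The constant term of the residue coefficient of a polynomial vector is the residue
coefficient of the constant term. -/
lemma eval_zero_eq_fval [CharP κ 2] [CharP M 2] (hperf : ∀ a : κ, ∃ b, b ^ 2 = a) (i1 : Fin N)
    {D : Fin (N + 1) → Derivation κ F F} {D' : Fin (N + 1) → Derivation κ M M}
    {τ : Polynomial F →ₐ[κ] M} (hτ : Function.Injective τ)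
    (hD : ∀ i p, D' i (τ p) = τ (polyDer (D i) p))
    (hC : ∀ a, a ≠ 0 → v (τ (Polynomial.C a)) = 1) (hX : v (τ Polynomial.X) < 1)
    (hϖ : ∀ f, f ≠ 0 → ∃ k : ℤ, v f = v (τ Polynomial.X) ^ k)
    (hDint : ∀ i f, v f ≤ 1 → v (D' i f) ≤ 1)
    (x : Fin (N + 2) → Polynomial F) (hx : (fun i => (x i).eval 0) ≠ 0)
    (hgen : Gen κ (fun i => τ (x i))) (hiso : IsoAt i1 (fun i => τ (x i)))
    (q : Polynomial F) (hq : Theta D' (fun i => τ (x i)) = τ q) :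
    q.eval 0 = fval D (fun i => (x i).eval 0) := by
  have hxe : ∀ P : MvPolynomial (Fin (N + 2)) κ,
      aeval (fun i => (x i).eval 0) P = (aeval x P).eval 0 := by
    intro P
    have : (aeval (fun i => (x i).eval 0) : MvPolynomial (Fin (N + 2)) κ →ₐ[κ] F) =
        ((Polynomial.aeval (0 : F)).restrictScalars κ).comp (aeval x) := by
      ext i; simp [Polynomial.coe_aeval_eq_eval]
    rw [this]; simp [Polynomial.coe_aeval_eq_eval]
  -- generic constant term: clear denominators in `Theta` and evaluate at zero;
  -- otherwise `Theta` lies in the maximal ideal at `X = 0` by `Theta_special`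
  by_cases hg : Gen κ (fun i => (x i).eval 0)
  · rw [fval_of_gen hg]
    have hden : gG 0 (fun i => τ (x i)) * ∏ j : Fin (N + 1), (τ (x 0) * τ (x j.succ)) ≠ 0 :=
      mul_ne_zero (hgen.gG_ne_zero zero_ne_lastIx)
        (Finset.prod_ne_zero_iff.2 fun j _ => mul_ne_zero (hgen.ne_zero _) (hgen.ne_zero _))
    rw [Theta, div_eq_iff hden] at hq
    have h1 : perm (jac (fun i => polyDer (D i)) x) * gB 0 x =
        q * (gG 0 x * ∏ j : Fin (N + 1), (x 0 * x j.succ)) := by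
      apply hτ
      have ej : (fun j i => τ (jac (fun i => polyDer (D i)) x j i)) =
          jac D' (fun i => τ (x i)) := by
        funext j i; simp [jac, hD]
      have e1 := map_perm (τ : Polynomial F →+* M) (jac (fun i => polyDer (D i)) x)
      have e2 := map_gB (τ : Polynomial F →+* M) 0 x
      have e3 := map_gG (τ : Polynomial F →+* M) 0 x
      simp only [RingHom.coe_coe, Function.comp_def] at e1 e2 e3
      rw [map_mul, map_mul, map_mul, map_prod, e1, e2, e3, ej, hq]
      simp only [map_mul]
    have h2 := congrArg (Polynomial.evalRingHom 0) h1
    have e1 := map_perm (Polynomial.evalRingHom 0) (jac (fun i => polyDer (D i)) x)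
    have e2 := map_gB (Polynomial.evalRingHom 0) 0 x
    have e3 := map_gG (Polynomial.evalRingHom 0) 0 x
    rw [map_mul, map_mul, map_mul, map_prod, e1, e2, e3] at h2
    have e4 : (fun j i => Polynomial.evalRingHom 0 (jac (fun i => polyDer (D i)) x j i)) =
      jac D (fun i => (x i).eval 0) := by
        funext j i; exact eval_zero_jac D x j i
    rw [e4] at h2
    have hden' : gG 0 (fun i => (x i).eval 0) *
        ∏ j : Fin (N + 1), ((x 0).eval 0 * (x j.succ).eval 0) ≠ 0 :=
      mul_ne_zero (hg.gG_ne_zero zero_ne_lastIx)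
        (Finset.prod_ne_zero_iff.2 fun j _ => mul_ne_zero (hg.ne_zero _) (hg.ne_zero _))
    rw [Theta, eq_div_iff hden']
    simpa [Function.comp_def] using h2.symm
  · rw [fval_of_not_gen hg]
    simp only [Gen, not_forall, not_not] at hg
    obtain ⟨e, P, hP0, hP, hz⟩ := hg
    have hκ : ∀ a : κ, a ≠ 0 → v (algebraMap κ M a) = 1 := fun a ha => by
      have := hC (algebraMap κ F a) (by simpa using ha)
      rwa [show Polynomial.C (algebraMap κ F a) = algebraMap κ (Polynomial F) a from rfl,
        AlgHom.commutes] at this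
    have hlt : v (aeval (fun i => τ (x i)) P) < 1 := by
      have : aeval (fun i => τ (x i)) P = τ (aeval x P) := by
        rw [← AlgHom.comp_apply, comp_aeval]
      rw [this, val_poly_lt_one_iff hC hX, ← hxe, hz]
    obtain ⟨i₀, hi₀⟩ := Function.ne_iff.1 hx
    have h := (Theta_special hperf hκ i1 hDint (ϖ := τ Polynomial.X)
      (by rw [Ne, map_eq_zero_iff _ hτ]; exact Polynomial.X_ne_zero) hX hϖ _ hgen.ne_zero
      (fun i => val_poly_le_one hC hX _)
      ⟨i₀, le_antisymm (val_poly_le_one hC hX _) (not_lt.1 fun h =>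
        hi₀ ((val_poly_lt_one_iff hC hX _).1 h))⟩ hP0 hP hlt
      (hgen.gG_ne_zero zero_ne_lastIx) (hgen.gG_ne_zero (midIx_ne_lastIx i1)) hiso).2
      (fun i => by rw [hD, polyDer_X, map_zero])
    rw [hq, val_poly_lt_one_iff hC hX] at h
    exact h

end Curve

section Const
variable {κ F : Type*} [Field κ] [Field F] [Algebra κ F] {N : ℕ}

/-- The substitution `X ↦ 1 / X`. -/
def invSub (κ F : Type*) [Field κ] [Field F] [Algebra κ F] : Polynomial F →ₐ[κ] RatFunc F :=
  (Polynomial.aeval (RatFunc.X⁻¹ : RatFunc F)).restrictScalars κ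

lemma invSub_reflect (p : Polynomial F) {l : ℕ} (hl : p.natDegree ≤ l) :
    invSub κ F (p.reflect l) * RatFunc.X ^ l = algebraMap (Polynomial F) (RatFunc F) p := by
  letI : Invertible (RatFunc.X : RatFunc F) := invertibleOfNonzero RatFunc.X_ne_zero
  have h := Polynomial.eval₂_reflect_mul_pow (algebraMap F (RatFunc F)) RatFunc.X l p hl
  rw [invOf_eq_inv] at h
  refine Eq.trans ?_ (h.trans ?_)
  · rfl
  · rw [← Polynomial.aeval_def, ← RatFunc.algebraMap_X, Polynomial.aeval_algebraMap_apply,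
      Polynomial.aeval_X_left_apply]

lemma invSub_injective : Function.Injective (invSub κ F) := by
  rw [injective_iff_map_eq_zero]
  intro p hp
  have hq : (p.reflect p.natDegree).natDegree ≤ p.natDegree :=
    Polynomial.reverse_natDegree_le p
  have h := invSub_reflect (κ := κ) (p.reflect p.natDegree) hq
  rw [Polynomial.reflect_reflect, hp, zero_mul] at h
  have h2 := (map_eq_zero_iff _ (RatFunc.algebraMap_injective F)).1 h.symm
  exact Polynomial.reflect_eq_zero_iff.1 h2

lemma exists_ratFuncDer (D : Derivation κ F F) : ∃ D' : Derivation κ (RatFunc F) (RatFunc F),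
    (∀ p, D' (algebraMap (Polynomial F) (RatFunc F) p) = algebraMap _ _ (polyDer D p)) ∧
    ∀ p, D' (invSub κ F p) = invSub κ F (polyDer D p) := by
  obtain ⟨D', h⟩ := exists_der_frac (κ := κ) (A := Polynomial F) (K := RatFunc F) (polyDer D)
  refine ⟨D', h, fun p => ?_⟩
  have hX : D' RatFunc.X = 0 := by
    rw [← RatFunc.algebraMap_X, h, polyDer_X, map_zero]
  have hX' : D' (RatFunc.X ^ p.natDegree) = 0 := by
    rw [Derivation.leibniz_pow, hX]; simp
  have hq : (p.reflect p.natDegree).natDegree ≤ p.natDegree :=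
    Polynomial.reverse_natDegree_le p
  have h1 := invSub_reflect (κ := κ) (p.reflect p.natDegree) hq
  have h2 := congrArg D' h1
  rw [h, Derivation.leibniz, hX', smul_zero, zero_add, ← invSub_reflect (κ := κ) _
    ((natDegree_polyDer_le D _).trans hq), Polynomial.reflect_reflect, smul_eq_mul, mul_comm] at h2
  have h3 := mul_right_cancel₀ (pow_ne_zero _ RatFunc.X_ne_zero) h2
  rw [h3]
  congr 1
  ext i
  simp [Polynomial.coeff_reflect, coeff_polyDer]

open IsDedekindDomain in
lemma finite_der_int {D : Derivation κ F F} {D' : Derivation κ (RatFunc F) (RatFunc F)}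
    (h : ∀ p, D' (algebraMap (Polynomial F) (RatFunc F) p) = algebraMap _ _ (polyDer D p))
    (w : HeightOneSpectrum (Polynomial F)) (f : RatFunc F) (hf : w.valuation (RatFunc F) f ≤ 1) :
    w.valuation (RatFunc F) (D' f) ≤ 1 := by
  obtain ⟨n, ⟨d, hd⟩, hnd⟩ := w.exists_primeCompl_mul_eq_of_integer f hf
  have hvd : w.valuation (RatFunc F) (algebraMap _ _ d) = 1 :=
    HeightOneSpectrum.valuation_eq_one_iff_notMem _ |>.2 hd
  have h2 := congrArg D' hnd
  simp only [Derivation.leibniz, h, smul_eq_mul] at h2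
  have h3 : algebraMap (Polynomial F) (RatFunc F) d * D' f =
    algebraMap _ _ (polyDer D n) - f * algebraMap _ _ (polyDer D d) := by
    rw [← h2]; ring
  have h4 := congrArg (w.valuation (RatFunc F)) h3
  rw [map_mul, hvd, one_mul] at h4
  rw [h4]
  refine (Valuation.map_sub _ _ _).trans (max_le (w.valuation_le_one _) ?_)
  rw [map_mul]
  exact mul_le_one' hf (w.valuation_le_one _)

lemma infty_der_int [DecidableEq (RatFunc F)] {D : Derivation κ F F}
    {D' : Derivation κ (RatFunc F) (RatFunc F)}
    (h : ∀ p, D' (algebraMap (Polynomial F) (RatFunc F) p) = algebraMap _ _ (polyDer D p))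
    (f : RatFunc F) (hf : RatFunc.inftyValuation F f ≤ 1) :
    RatFunc.inftyValuation F (D' f) ≤ 1 := by
  set v := RatFunc.inftyValuation F
  have hle : ∀ p, v (algebraMap (Polynomial F) (RatFunc F) (polyDer D p)) ≤
      v (algebraMap (Polynomial F) (RatFunc F) p) := by
    intro p
    by_cases hp : p = 0
    · simp [hp]
    by_cases hp' : polyDer D p = 0
    · rw [hp']; simp
    change RatFunc.inftyValuationDef F _ ≤ RatFunc.inftyValuationDef F _
    rw [RatFunc.inftyValuation.polynomial F hp', RatFunc.inftyValuation.polynomial F hp,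
      WithZero.exp_le_exp]
    exact_mod_cast natDegree_polyDer_le D p
  obtain ⟨n, d, hd, rfl⟩ := IsFractionRing.div_surjective (A := Polynomial F) f
  have hd0 : algebraMap (Polynomial F) (RatFunc F) d ≠ 0 := by
    simpa using nonZeroDivisors.ne_zero hd
  have hvd : v (algebraMap (Polynomial F) (RatFunc F) d) ≠ 0 := by simpa using hd0
  have hvd' := zero_lt_iff.2 hvd
  have hf' : v (algebraMap (Polynomial F) (RatFunc F) n) ≤ v (algebraMap (Polynomial F) (RatFunc F) d) := by
    rw [map_div₀] at hf
    exact (div_le_one₀ hvd').1 hf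
  rw [Derivation.leibniz_div, h, h, smul_eq_mul, smul_eq_mul, smul_eq_mul, map_mul, map_pow, map_inv₀,
    inv_pow, inv_mul_le_iff₀ (pow_pos hvd' 2), mul_one, sq]
  refine (Valuation.map_sub _ _ _).trans (max_le ?_ ?_)
  · rw [map_mul]; exact mul_le_mul' le_rfl ((hle n).trans hf')
  · rw [map_mul]; exact mul_le_mul' hf' (hle d)

/-- The residue coefficient takes the same value at both ends of a rational curve whose points
carry isotropic vectors. -/
theorem fval_const [CharP κ 2] [CharP F 2] (hperf : ∀ a : κ, ∃ b, b ^ 2 = a) (i1 : Fin N)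
    (D : Fin (N + 1) → Derivation κ F F) (x : Fin (N + 2) → Polynomial F) (l : ℕ)
    (hdeg : ∀ i, (x i).natDegree ≤ l) (h0 : (fun i => (x i).coeff 0) ≠ 0)
    (hl : (fun i => (x i).coeff l) ≠ 0)
    (hiso : Gen κ (fun i => algebraMap (Polynomial F) (RatFunc F) (x i)) →
      IsoAt i1 (fun i => algebraMap (Polynomial F) (RatFunc F) (x i))) :
    fval D (fun i => (x i).coeff 0) = fval D (fun i => (x i).coeff l) := by
  classical
  haveI : CharP (RatFunc F) 2 := charP_of_injective_algebraMap (algebraMap F (RatFunc F)).injective 2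
  choose D' hD hD' using fun i => exists_ratFuncDer (D i)
  set xM : Fin (N + 2) → RatFunc F := fun i => algebraMap (Polynomial F) (RatFunc F) (x i) with hxM
  set x' : Fin (N + 2) → Polynomial F := fun i => (x i).reflect l with hx'
  set τ : Polynomial F →ₐ[κ] RatFunc F := IsScalarTower.toAlgHom κ (Polynomial F) (RatFunc F)
    with hτ
  have hτa : ∀ p, τ p = algebraMap (Polynomial F) (RatFunc F) p := fun p => rfl
  have hXl : (RatFunc.X ^ l : RatFunc F) ≠ 0 := pow_ne_zero _ RatFunc.X_ne_zero
  have hx'M : (fun i => invSub κ F (x' i)) = (RatFunc.X ^ l : RatFunc F)⁻¹ • xM := by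
    funext i
    rw [Pi.smul_apply, smul_eq_mul, hxM]
    simp only
    rw [← invSub_reflect (κ := κ) (x i) (hdeg i), mul_comm, mul_assoc, mul_inv_cancel₀ hXl, mul_one]
  have hc0 : (fun i => (x i).coeff 0) = fun i => (x i).eval 0 := by
    funext i; rw [Polynomial.coeff_zero_eq_eval_zero]
  have hcl : (fun i => (x i).coeff l) = fun i => (x' i).eval 0 := by
    funext i
    rw [← Polynomial.coeff_zero_eq_eval_zero, hx', Polynomial.coeff_reflect,
      Polynomial.revAt_le (Nat.zero_le _), Nat.sub_zero]
  rw [hc0] at h0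
  rw [hcl] at hl
  rw [hc0, hcl]
  -- a relation satisfied by the whole curve is inherited by both ends, so both values are zero;
  -- otherwise the residue coefficient is regular on the projective line, hence constant
  by_cases hgen : Gen κ xM
  swap
  · simp only [Gen, not_forall, not_not] at hgen
    obtain ⟨e, P, hP0, hP, hz⟩ := hgen
    have key : ∀ (σ : Polynomial F →ₐ[κ] RatFunc F) (hσ : Function.Injective σ)
        (y : Fin (N + 2) → Polynomial F), aeval (fun i => σ (y i)) P = 0 →
        fval D (fun i => (y i).eval 0) = 0 := by
      intro σ hσ y hy
      refine fval_of_not_gen fun hg => hg e P hP0 hP ?_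
      have h1 : aeval y P = 0 := by
        apply hσ
        rw [map_zero, ← hy, ← AlgHom.comp_apply, comp_aeval]
      have h2 : aeval (fun i => (y i).eval 0) P = (aeval y P).eval 0 := by
        have : (aeval (fun i => (y i).eval 0) : MvPolynomial (Fin (N + 2)) κ →ₐ[κ] F) =
            ((Polynomial.aeval (0 : F)).restrictScalars κ).comp (aeval y) := by
          ext i; simp [Polynomial.coe_aeval_eq_eval]
        rw [this]; simp [Polynomial.coe_aeval_eq_eval]
      rw [h2, h1, Polynomial.eval_zero]
    rw [key τ (RatFunc.algebraMap_injective F) x hz, key (invSub κ F) invSub_injective x' (by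
      rw [hx'M, aeval_smul_homog hP, hz, mul_zero])]
  · replace hiso := hiso hgen
    have hκfin : ∀ (w : IsDedekindDomain.HeightOneSpectrum (Polynomial F)) (a : F), a ≠ 0 →
        w.valuation (RatFunc F) (algebraMap (Polynomial F) (RatFunc F) (Polynomial.C a)) = 1 := by
      intro w a ha
      refine (IsDedekindDomain.HeightOneSpectrum.valuation_eq_one_iff_notMem _).2 fun hm => ?_
      exact w.isPrime.ne_top (Ideal.eq_top_of_isUnit_mem _ hm
        (Polynomial.isUnit_C.2 ha.isUnit))
    have hInt : ∃ q, algebraMap (Polynomial F) (RatFunc F) q = Theta D' xM := by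
      refine IsDedekindDomain.HeightOneSpectrum.mem_integers_of_valuation_le_one _ _ fun w => ?_
      obtain ⟨ϖ, hϖ⟩ := w.valuation_exists_uniformizer (RatFunc F)
      refine Theta_le_one hperf (fun a ha => hκfin w (algebraMap κ F a) (by simpa using ha)) i1
        (fun i f hf => finite_der_int (hD i) w f hf) (ϖ := ϖ) ?_ ?_ (exists_zpow_of_exp hϖ) xM
        hgen.ne_zero (hgen.gG_ne_zero zero_ne_lastIx) (hgen.gG_ne_zero (midIx_ne_lastIx i1)) hiso
      · rintro rfl
        rw [map_zero] at hϖ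
        exact WithZero.exp_ne_zero hϖ.symm
      · rw [hϖ, ← WithZero.exp_zero, WithZero.exp_lt_exp]; norm_num
    obtain ⟨q, hq⟩ := hInt
    have hCinf : ∀ a : F, a ≠ 0 →
        RatFunc.inftyValuation F (invSub κ F (Polynomial.C a)) = 1 := by
      intro a ha
      have : invSub κ F (Polynomial.C a) = RatFunc.C a := by simp [invSub]
      rw [this]; exact RatFunc.inftyValuation.C F ha
    have hXinf' : RatFunc.inftyValuation F (invSub κ F Polynomial.X) = WithZero.exp (-1 : ℤ) := by
      have : invSub κ F Polynomial.X = 1 / RatFunc.X := by simp [invSub]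
      rw [this]; exact RatFunc.inftyValuation.X_inv F
    have hXinf : RatFunc.inftyValuation F (invSub κ F Polynomial.X) < 1 := by
      rw [hXinf', ← WithZero.exp_zero, WithZero.exp_lt_exp]; norm_num
    have hXfin' : (Polynomial.idealX F).valuation (RatFunc F) (τ Polynomial.X) =
        WithZero.exp (-1 : ℤ) := by
      rw [hτa, RatFunc.algebraMap_X]; exact Polynomial.valuation_X_eq_neg_one F
    have hXfin : (Polynomial.idealX F).valuation (RatFunc F) (τ Polynomial.X) < 1 := by
      rw [hXfin', ← WithZero.exp_zero, WithZero.exp_lt_exp]; norm_num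
    have e1 := eval_zero_eq_fval hperf i1 (τ := τ) (RatFunc.algebraMap_injective F) hD
      (hκfin (Polynomial.idealX F)) hXfin (exists_zpow_of_exp hXfin')
      (fun i f hf => finite_der_int (hD i) _ f hf) x h0 hgen hiso q hq.symm
    -- no pole at infinity, so the polynomial `q` is constant
    have hinf : RatFunc.inftyValuation F (Theta D' xM) ≤ 1 := by
      refine Theta_le_one hperf (fun a ha => ?_) i1
        (fun i f hf => infty_der_int (hD i) f hf) (ϖ := invSub κ F Polynomial.X) ?_ hXinf
        (exists_zpow_of_exp hXinf') xM
        hgen.ne_zero (hgen.gG_ne_zero zero_ne_lastIx) (hgen.gG_ne_zero (midIx_ne_lastIx i1)) hiso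
      · have := hCinf (algebraMap κ F a) (by simpa using ha)
        rwa [show Polynomial.C (algebraMap κ F a) = algebraMap κ (Polynomial F) a from rfl,
          AlgHom.commutes] at this
      · rw [Ne, map_eq_zero_iff _ invSub_injective]; exact Polynomial.X_ne_zero
    have hqC : q = Polynomial.C (q.eval 0) := by
      rw [← Polynomial.coeff_zero_eq_eval_zero]
      apply Polynomial.eq_C_of_natDegree_eq_zero
      by_cases hq0 : q = 0
      · rw [hq0, Polynomial.natDegree_zero]
      rw [← hq] at hinf
      change RatFunc.inftyValuationDef F _ ≤ 1 at hinf
      rw [RatFunc.inftyValuation.polynomial F hq0, ← WithZero.exp_zero, WithZero.exp_le_exp] at hinf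
      omega
    have hgen' : Gen κ (fun i => invSub κ F (x' i)) := by
      rw [hx'M]; exact hgen.smul (inv_ne_zero hXl)
    have hiso' : IsoAt i1 (fun i => invSub κ F (x' i)) := by
      rw [hx'M]; exact hiso.smul (inv_ne_zero hXl)
    have hq' : Theta D' (fun i => invSub κ F (x' i)) = invSub κ F (Polynomial.C (q.eval 0)) := by
      rw [hx'M, Theta_smul D' (inv_ne_zero hXl), ← hq]
      conv_lhs => rw [hqC]
      simp [invSub]
    have e2 := eval_zero_eq_fval hperf i1 (τ := invSub κ F) invSub_injective hD'
      hCinf hXinf (exists_zpow_of_exp hXinf')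
      (fun i f hf => infty_der_int (hD i) f hf) x' hl hgen' hiso' _ hq'
    rw [← e1, ← e2, Polynomial.eval_C]

end Const

/-! ### Newton polygons -/

/-- A Newton polygon walk.  If `g` takes the same value at both ends of every edge of the Newton
polygon of the weights `w`, then `g` agrees at the leftmost vertex `0` and at the right end `T` of
the horizontal edge. -/
theorem newton_walk {Γ T : Type*} [LinearOrderedCommGroupWithZero Γ]
    (hdiv : ∀ (γ : Γ) (n : ℕ), 0 < n → ∃ δ, δ ^ n = γ)
    (w : ℕ → Γ) (hw0 : w 0 ≠ 0) (g : ℕ → T)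
    (hg : ∀ (γ : Γ), γ ≠ 0 → ∀ k l, w k ≠ 0 → k ≤ l → (∀ m, w m * γ ^ m ≤ w k * γ ^ k) →
      w l * γ ^ l = w k * γ ^ k → (∀ m, m < k → w m * γ ^ m < w k * γ ^ k) →
      (∀ m, l < m → w m * γ ^ m < w k * γ ^ k) → g k = g l)
    (t : ℕ) (ht : w t ≠ 0) (hmax : ∀ m, w m ≤ w t) (hlast : ∀ m, t < m → w m < w t) :
    g 0 = g t := by
  have key : ∀ k, ∀ γ : Γ, γ ≠ 0 → w k ≠ 0 → (∀ m, w m * γ ^ m ≤ w k * γ ^ k) →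
      (∀ m, m < k → w m * γ ^ m < w k * γ ^ k) → g 0 = g k := by
    intro k
    induction k using Nat.strong_induction_on with
    | _ k ih =>
    intro γ hγ hk hle hlt
    rcases Nat.eq_zero_or_pos k with rfl | hkpos
    · rfl
    -- slopes of the segments joining `k` to earlier points
    have hs : ∀ m : ℕ, ∃ δ : Γ, m < k → δ ^ (k - m) = w m / w k := by
      intro m
      by_cases hm : m < k
      · obtain ⟨δ, hδ⟩ := hdiv (w m / w k) (k - m) (by omega)
        exact ⟨δ, fun _ => hδ⟩
      · exact ⟨1, fun h => absurd h hm⟩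
    choose δ hδ using hs
    obtain ⟨m0, hm0, hm0max⟩ := Finset.exists_max_image (Finset.range k) δ ⟨0, by simpa using hkpos⟩
    rw [Finset.mem_range] at hm0
    set γ' := δ m0 with hγ'
    have hδ0 : δ 0 ≠ 0 := by
      intro h
      have := hδ 0 hkpos
      rw [h, zero_pow (by omega)] at this
      exact (div_ne_zero hw0 hk) this.symm
    have hγpos0 : γ' ≠ 0 := by
      have := hm0max 0 (by simpa using hkpos)
      exact (lt_of_lt_of_le (zero_lt_iff.2 hδ0) this).ne'
    have hpow : ∀ m, m < k → δ m ^ (k - m) * w k = w m := by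
      intro m hm
      rw [hδ m hm, div_mul_cancel₀ _ hk]
    have hsplit : ∀ (a : Γ) m, m < k → a ^ k = a ^ (k - m) * a ^ m := by
      intro a m hm
      rw [← pow_add]; congr 1; omega
    have hle1 : ∀ m, m < k → w m * γ' ^ m ≤ w k * γ' ^ k := by
      intro m hm
      rw [hsplit γ' m hm, ← mul_assoc, ← hpow m hm, mul_comm _ (w k)]
      gcongr
      exact hm0max m (by simpa using hm)
    have heq : w m0 * γ' ^ m0 = w k * γ' ^ k := by
      rw [hsplit γ' m0 hm0, ← mul_assoc, ← hpow m0 hm0, mul_comm _ (w k)]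
    have hγlt : γ' < γ := by
      have h1 := hlt m0 hm0
      rw [hsplit γ m0 hm0, ← mul_assoc, ← hpow m0 hm0, mul_comm _ (w k)] at h1
      have h2 := lt_of_mul_lt_mul_right' h1
      have h3 := lt_of_mul_lt_mul_left' h2
      exact lt_of_pow_lt_pow_left₀ _ zero_le h3
    have hgt : ∀ m, k < m → w m * γ' ^ m < w k * γ' ^ k := by
      intro m hm
      have hsp : ∀ a : Γ, a ^ m = a ^ (m - k) * a ^ k := by
        intro a
        rw [← pow_add]; congr 1; omega
      by_cases hwm : w m = 0
      · rw [hwm, zero_mul]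
        exact zero_lt_iff.2 (mul_ne_zero hk (pow_ne_zero _ hγpos0))
      have h1 := hle m
      rw [hsp, ← mul_assoc] at h1
      have h2 : w m * γ ^ (m - k) ≤ w k :=
        le_of_mul_le_mul_right h1 (zero_lt_iff.2 (pow_ne_zero _ hγ))
      have h3 : w m * γ' ^ (m - k) < w k := by
        refine lt_of_lt_of_le ?_ h2
        refine mul_lt_mul_of_pos_left ?_ (zero_lt_iff.2 hwm)
        exact pow_lt_pow_left₀ hγlt zero_le (by omega)
      rw [hsp, ← mul_assoc]
      exact mul_lt_mul_of_pos_right h3 (zero_lt_iff.2 (pow_ne_zero _ hγpos0))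
    -- the left end of the edge of slope `γ'`
    have hex : ∃ m, w m * γ' ^ m = w k * γ' ^ k := ⟨m0, heq⟩
    classical
    set k' := Nat.find hex with hk'
    have hk'eq : w k' * γ' ^ k' = w k * γ' ^ k := Nat.find_spec hex
    have hk'lt : k' < k := lt_of_le_of_lt (Nat.find_min' hex heq) hm0
    have hall : ∀ m, w m * γ' ^ m ≤ w k' * γ' ^ k' := by
      intro m
      rw [hk'eq]
      rcases lt_trichotomy m k with h | h | h
      · exact hle1 m h
      · rw [h]
      · exact (hgt m h).le
    have hlow : ∀ m, m < k' → w m * γ' ^ m < w k' * γ' ^ k' := by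
      intro m hm
      refine lt_of_le_of_ne (hall m) ?_
      rw [hk'eq]
      exact Nat.find_min hex hm
    have hwk' : w k' ≠ 0 := by
      intro h
      rw [h, zero_mul] at hk'eq
      exact mul_ne_zero hk (pow_ne_zero _ hγpos0) hk'eq.symm
    rw [ih k' hk'lt γ' hγpos0 hwk' hall hlow]
    refine hg γ' hγpos0 k' k hwk' hk'lt.le hall hk'eq.symm hlow ?_
    intro m hm
    rw [hk'eq]
    exact hgt m hm
  have hex : ∃ m, w m = w t := ⟨t, rfl⟩
  classical
  set k := Nat.find hex with hk
  have hkt : w k = w t := Nat.find_spec hex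
  have hkle : k ≤ t := Nat.find_min' hex rfl
  have hlow : ∀ m, m < k → w m < w k := fun m hm =>
    lt_of_le_of_ne (hkt ▸ hmax m) (hkt ▸ Nat.find_min hex hm)
  rw [key k 1 one_ne_zero (hkt ▸ ht) (by simpa [hkt] using hmax) (by simpa using hlow)]
  exact hg 1 one_ne_zero k t (hkt ▸ ht) hkle (by simpa [hkt] using hmax) (by simp [hkt])
    (by simpa using hlow) (by simpa [hkt] using hlast)

/-! ### Reduction of polynomial paths -/

section Red
variable {L F T : Type*} [Field L] [Field F] (W : ValuationSubring L) (ρ : W →+* F)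

open Classical in
/-- Reduction of an element of `L` through `ρ : W → F`, extended by zero outside `W`. -/
def rd (f : L) : F := if h : f ∈ W then ρ ⟨f, h⟩ else 0

variable {W} in
lemma rd_coe (b : W) : rd W ρ (b : L) = ρ b := by
  rw [rd, dif_pos b.2]

variable {W} in
lemma rd_mul {f g : L} (hf : f ∈ W) (hg : g ∈ W) : rd W ρ (f * g) = rd W ρ f * rd W ρ g := by
  have := rd_coe ρ (⟨f, hf⟩ * ⟨g, hg⟩ : W)
  rw [map_mul, ← rd_coe, ← rd_coe] at this
  exact this

lemma rd_one : rd W ρ 1 = 1 := by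
  have := rd_coe ρ (1 : W)
  rwa [map_one] at this

lemma rd_zero : rd W ρ 0 = 0 := by
  have := rd_coe ρ (0 : W)
  rwa [map_zero] at this

variable {W} in
lemma rd_eq_zero_of_lt (hρ : ∀ b : W, ρ b ≠ 0 → IsUnit b) {f : L} (hf : W.valuation f < 1) :
    rd W ρ f = 0 := by
  have hW : f ∈ W := (W.valuation_le_one_iff f).1 hf.le
  have := rd_coe ρ ⟨f, hW⟩
  rw [this]
  by_contra h
  have h2 := hρ _ h
  have := (W.valuation_eq_one_iff ⟨f, hW⟩).1 h2
  exact hf.ne this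

variable {W} in
lemma rd_ne_zero_of_eq {f : L} (hf : W.valuation f = 1) : rd W ρ f ≠ 0 := by
  have hW : f ∈ W := (W.valuation_le_one_iff f).1 hf.le
  have := rd_coe ρ ⟨f, hW⟩
  rw [this]
  have hu : IsUnit (⟨f, hW⟩ : W) := (W.valuation_eq_one_iff ⟨f, hW⟩).2 hf
  exact (hu.map ρ).ne_zero

variable {ι : Type*} [Finite ι] [Nonempty ι]

/-- An index at which a vector has the largest valuation. -/
def mx (V : ι → L) : ι := Classical.choose (Finite.exists_max fun i => W.valuation (V i))

lemma le_mx (V : ι → L) (i : ι) : W.valuation (V i) ≤ W.valuation (V (mx W V)) :=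
  Classical.choose_spec (Finite.exists_max fun i => W.valuation (V i)) i

lemma mx_ne_zero {V : ι → L} (hV : V ≠ 0) : V (mx W V) ≠ 0 := by
  intro h
  apply hV
  funext i
  have := le_mx W V i
  rw [h, map_zero, le_zero_iff] at this
  simpa using this

/-- Reduction of a nonzero vector, normalised so that its largest entry is `1`. -/
def red (V : ι → L) : ι → F := fun i => rd W ρ (V i / V (mx W V))

lemma div_mx_mem {V : ι → L} (hV : V ≠ 0) (i : ι) : V i / V (mx W V) ∈ W := by
  rw [← W.valuation_le_one_iff, map_div₀]
  exact div_le_one_of_le₀ (le_mx W V i) zero_le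

lemma red_ne_zero {V : ι → L} (hV : V ≠ 0) : red W ρ V ≠ 0 := by
  intro h
  have := congrFun h (mx W V)
  rw [red, div_self (mx_ne_zero W hV), rd_one] at this
  exact one_ne_zero this

lemma exists_smul_red {V : ι → L} (hV : V ≠ 0) (c : L) (hc : ∀ i, c * V i ∈ W)
    (hy : (fun i => rd W ρ (c * V i)) ≠ 0) :
    ∃ a : F, a ≠ 0 ∧ (fun i => rd W ρ (c * V i)) = a • red W ρ V := by
  have h0 := mx_ne_zero W hV
  have key : (fun i => rd W ρ (c * V i)) = rd W ρ (c * V (mx W V)) • red W ρ V := by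
    funext i
    rw [Pi.smul_apply, smul_eq_mul, red, ← rd_mul ρ (hc _) (div_mx_mem W hV i)]
    congr 1
    field_simp
  refine ⟨_, ?_, key⟩
  intro h
  rw [h, zero_smul] at key
  exact hy key

/-- `Y` is the polynomial family over `W` obtained from `P` by `s ↦ c s` and scaling by `b`. -/
def Scaled (P : ι → Polynomial L) (b c : L) (Y : ι → Polynomial W) : Prop :=
  ∀ i m, (((Y i).coeff m : W) : L) = b * (c ^ m * (P i).coeff m)

lemma exists_scaled (P : ι → Polynomial L) (b c : L)
    (h : ∀ i m, b * (c ^ m * (P i).coeff m) ∈ W) :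
    ∃ Y : ι → Polynomial W, Scaled W P b c Y := by
  have : ∀ i, ∃ Y : Polynomial W, Y.map (algebraMap W L) =
      Polynomial.C b * (P i).comp (Polynomial.C c * Polynomial.X) := by
    intro i
    rw [← Polynomial.mem_lifts, Polynomial.lifts_iff_coeff_lifts]
    intro m
    refine ⟨⟨_, h i m⟩, ?_⟩
    rw [Polynomial.coeff_C_mul, Polynomial.comp_C_mul_X_coeff, mul_comm ((P i).coeff m)]
    rfl
  choose Y hY using this
  refine ⟨Y, fun i m => ?_⟩
  have := congrArg (fun p => Polynomial.coeff p m) (hY i)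
  simp only [Polynomial.coeff_map, Polynomial.coeff_C_mul, Polynomial.comp_C_mul_X_coeff] at this
  rw [mul_comm (c ^ m)]
  exact this

/-- Along each edge of the Newton polygon of `P` the function `f` has the same value at both
ends. -/
def EdgeConst (f : (ι → F) → T) (P : ι → Polynomial L) : Prop :=
  ∀ b c : L, b ≠ 0 → c ≠ 0 → ∀ Y : ι → Polynomial W, Scaled W P b c Y → ∀ k l : ℕ, k ≤ l →
    (∀ i m, m < k → ρ ((Y i).coeff m) = 0) → (∀ i m, l < m → ρ ((Y i).coeff m) = 0) →
    (fun i => ρ ((Y i).coeff k)) ≠ 0 → (fun i => ρ ((Y i).coeff l)) ≠ 0 →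
    f (fun i => ρ ((Y i).coeff k)) = f (fun i => ρ ((Y i).coeff l))

variable {W ρ} in
lemma Scaled.red_eq {f : (ι → F) → T} (hf : ∀ (c : F) x, c ≠ 0 → f (c • x) = f x)
    {P : ι → Polynomial L} {b c : L} (hc : c ≠ 0) {Y : ι → Polynomial W} (hY : Scaled W P b c Y)
    (m : ℕ) (h0 : (fun i => ρ ((Y i).coeff m)) ≠ 0) :
    f (fun i => ρ ((Y i).coeff m)) = f (red W ρ (fun i => (P i).coeff m)) := by
  have hrw : (fun i => ρ ((Y i).coeff m)) = fun i => rd W ρ ((b * c ^ m) * (P i).coeff m) := by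
    funext i
    rw [← rd_coe, hY i m, mul_assoc]
  have hV : (fun i => (P i).coeff m) ≠ 0 := by
    intro h
    apply h0
    rw [hrw]
    funext i
    have := congrFun h i
    simp only [Pi.zero_apply] at this
    rw [this, mul_zero, rd_zero]; rfl
  rw [hrw] at h0 ⊢
  obtain ⟨a, ha, h⟩ := exists_smul_red W ρ hV (b * c ^ m) (fun i => by
    rw [mul_assoc, ← hY i m]; exact Subtype.property _) h0
  rw [h, hf a _ ha]

/-- The reduction of the constant term of a path and the top coefficient of the reduced path have
the same value. -/
theorem chain (hρ : ∀ b : W, ρ b ≠ 0 → IsUnit b)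
    (hdiv : ∀ (γ : W.ValueGroup) (n : ℕ), 0 < n → ∃ δ, δ ^ n = γ)
    {f : (ι → F) → T} (hf : ∀ (c : F) x, c ≠ 0 → f (c • x) = f x)
    (P : ι → Polynomial L) (hE : EdgeConst W ρ f P) (h0 : (fun i => (P i).coeff 0) ≠ 0)
    (b : L) (hb : b ≠ 0) (Y : ι → Polynomial W) (hY : Scaled W P b 1 Y) (t : ℕ)
    (ht : (fun i => ρ ((Y i).coeff t)) ≠ 0) (hlast : ∀ i m, t < m → ρ ((Y i).coeff m) = 0) :
    f (red W ρ (fun i => (P i).coeff 0)) = f (fun i => ρ ((Y i).coeff t)) := by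
  set V : ℕ → ι → L := fun m i => (P i).coeff m with hV
  set w : ℕ → W.ValueGroup := fun m => W.valuation (V m (mx W (V m))) with hw
  have hwne : ∀ m, V m ≠ 0 → w m ≠ 0 := fun m h => by
    simpa [hw] using mx_ne_zero W h
  have hne : ∀ m, w m ≠ 0 → V m ≠ 0 := by
    intro m h h'
    apply h
    simp only [hw, h', Pi.zero_apply, map_zero]
  rw [hY.red_eq hf one_ne_zero t ht]
  obtain ⟨i0, hi0⟩ : ∃ i, ρ ((Y i).coeff t) ≠ 0 := Function.ne_iff.1 ht
  have hYv : ∀ i m, W.valuation b * W.valuation (V m i) = W.valuation (((Y i).coeff m : W) : L) := by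
    intro i m
    rw [hY i m, one_pow, one_mul, map_mul]
  have hle1 : ∀ i m, W.valuation b * W.valuation (V m i) ≤ 1 := fun i m => by
    rw [hYv]; exact W.valuation_le_one _
  have h1 : W.valuation b * w t = 1 := by
    refine le_antisymm (hle1 _ _) ?_
    have h2 : W.valuation b * W.valuation (V t i0) = 1 := by
      rw [hYv]
      exact (W.valuation_eq_one_iff _).1 (hρ _ hi0)
    rw [← h2]
    gcongr
    exact le_mx W (V t) i0
  have hb' : W.valuation b ≠ 0 := by simpa using hb
  -- walk along the Newton polygon whose `m`-th weight is the valuation of the `m`-th coefficient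
  -- vector; an edge of slope `γ = v c` becomes an honest curve after the rescaling `s ↦ c s`
  refine newton_walk hdiv w (hwne 0 h0) (fun k => f (red W ρ (V k))) ?_ t ?_ ?_ ?_
  · intro γ hγ k l hk hkl hmax hl hlt hgt
    obtain ⟨c, hc⟩ := W.valuation_surjective γ
    have hc0 : c ≠ 0 := by rintro rfl; exact hγ (by rw [← hc, map_zero])
    set b' : L := (c ^ k * V k (mx W (V k)))⁻¹ with hb'
    have hmk := mx_ne_zero W (hne k hk)
    have hb'0 : b' ≠ 0 := inv_ne_zero (mul_ne_zero (pow_ne_zero _ hc0) hmk)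
    have hvb' : W.valuation b' = (w k * γ ^ k)⁻¹ := by
      rw [hb', map_inv₀, map_mul, map_pow, hc, mul_comm]
    have hpos : (0 : W.ValueGroup) < w k * γ ^ k := zero_lt_iff.2 (mul_ne_zero hk (pow_ne_zero _ hγ))
    have hval : ∀ i m, W.valuation (b' * (c ^ m * (P i).coeff m)) ≤
        (w k * γ ^ k)⁻¹ * (w m * γ ^ m) := by
      intro i m
      rw [map_mul, hvb', map_mul, map_pow, hc, mul_comm (γ ^ m)]
      gcongr
      exact le_mx W (V m) i
    obtain ⟨Y', hY'⟩ := exists_scaled W P b' c (fun i m => by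
      rw [← W.valuation_le_one_iff]
      refine (hval i m).trans ?_
      rw [inv_mul_le_iff₀ hpos, mul_one]
      exact hmax m)
    have hsm : ∀ m, w m * γ ^ m < w k * γ ^ k → ∀ i, ρ ((Y' i).coeff m) = 0 := by
      intro m hm i
      rw [← rd_coe, hY' i m]
      refine rd_eq_zero_of_lt ρ hρ ((hval i m).trans_lt ?_)
      rwa [inv_mul_lt_iff₀ hpos, mul_one]
    have hbig : ∀ m, w m * γ ^ m = w k * γ ^ k → (fun i => ρ ((Y' i).coeff m)) ≠ 0 := by
      intro m hm h
      have := congrFun h (mx W (V m))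
      simp only [Pi.zero_apply] at this
      rw [← rd_coe, hY' _ m] at this
      refine rd_ne_zero_of_eq ρ ?_ this
      rw [map_mul, hvb', map_mul, map_pow, hc, mul_comm (γ ^ m), ← hm]
      refine inv_mul_cancel₀ ?_
      rw [hm]; exact hpos.ne'
    have := hE b' c hb'0 hc0 Y' hY' k l hkl (fun i m hm => hsm m (hlt m hm) i)
      (fun i m hm => hsm m (hgt m hm) i) (hbig k rfl) (hbig l hl)
    rwa [hY'.red_eq hf hc0 k (hbig k rfl), hY'.red_eq hf hc0 l (hbig l hl)] at this
  · intro h; rw [h, mul_zero] at h1; exact zero_ne_one h1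
  · intro m
    have := hle1 (mx W (V m)) m
    rw [← h1] at this
    exact le_of_mul_le_mul_left this (zero_lt_iff.2 hb')
  · intro m hm
    have h2 : W.valuation b * w m < 1 := by
      show W.valuation b * W.valuation (V m (mx W (V m))) < 1
      rw [hYv]
      refine lt_of_le_of_ne (W.valuation_le_one _) fun h => ?_
      exact rd_ne_zero_of_eq ρ h (by rw [rd_coe]; exact hlast _ m hm)
    rw [← h1] at h2
    exact lt_of_mul_lt_mul_left' h2

lemma taylor_coeff_top {R : Type*} [CommRing R] (p : Polynomial R) (t : ℕ) (h : p.natDegree ≤ t) :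
    (Polynomial.taylor 1 p).coeff t = p.coeff t := by
  rcases h.lt_or_eq with h | rfl
  · rw [Polynomial.coeff_eq_zero_of_natDegree_lt h, Polynomial.coeff_eq_zero_of_natDegree_lt]
    rwa [Polynomial.natDegree_taylor]
  · rw [Polynomial.coeff_taylor_natDegree]; rfl

/-- The two ends `s = 0` and `s = 1` of a polynomial path have the same value. -/
theorem endpoints (hρ : ∀ b : W, ρ b ≠ 0 → IsUnit b)
    (hdiv : ∀ (γ : W.ValueGroup) (n : ℕ), 0 < n → ∃ δ, δ ^ n = γ)
    {f : (ι → F) → T} (hf : ∀ (c : F) x, c ≠ 0 → f (c • x) = f x)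
    (P : ι → Polynomial L) (hE : EdgeConst W ρ f P)
    (hE' : EdgeConst W ρ f (fun i => Polynomial.taylor 1 (P i)))
    (h0 : (fun i => (P i).eval 0) ≠ 0) (h1 : (fun i => (P i).eval 1) ≠ 0) :
    f (red W ρ (fun i => (P i).eval 0)) = f (red W ρ (fun i => (P i).eval 1)) := by
  classical
  cases nonempty_fintype ι
  have e0 : (fun i => (P i).eval 0) = fun i => (P i).coeff 0 := by
    funext i; rw [Polynomial.coeff_zero_eq_eval_zero]
  have e1 : (fun i => (P i).eval 1) = fun i => (Polynomial.taylor 1 (P i)).coeff 0 := by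
    funext i; rw [Polynomial.taylor_coeff_zero]
  rw [e0] at h0 ⊢
  rw [e1] at h1 ⊢
  set B := Finset.univ.sup fun i => (P i).natDegree with hB
  have hPB : ∀ i m, B < m → (P i).coeff m = 0 := fun i m hm =>
    Polynomial.coeff_eq_zero_of_natDegree_lt
      (lt_of_le_of_lt (Finset.le_sup (f := fun i => (P i).natDegree) (Finset.mem_univ i)) hm)
  -- normalise all coefficients simultaneously, so that the reduction `y` of the path is nonzero
  set V : ι × Fin (B + 1) → L := fun p => (P p.1).coeff p.2 with hV
  have hV0 : V ≠ 0 := by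
    intro h
    apply h0
    funext i
    exact congrFun h (i, 0)
  set b : L := (V (mx W V))⁻¹ with hb
  have hb0 : b ≠ 0 := inv_ne_zero (mx_ne_zero W hV0)
  obtain ⟨Y, hY⟩ := exists_scaled W P b 1 (fun i m => by
    rw [one_pow, one_mul]
    by_cases hm : B < m
    · rw [hPB i m hm, mul_zero]; exact W.zero_mem
    · have := div_mx_mem W hV0 (i, ⟨m, by omega⟩)
      rw [div_eq_inv_mul] at this
      exact this)
  have hYP : ∀ i, (Y i).map (algebraMap W L) = Polynomial.C b * P i := by
    intro i
    ext m
    rw [Polynomial.coeff_map, Polynomial.coeff_C_mul]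
    have := hY i m
    rwa [one_pow, one_mul] at this
  have hY' : Scaled W (fun i => Polynomial.taylor 1 (P i)) b 1 (fun i => Polynomial.taylor 1 (Y i)) := by
    intro i m
    have : (Polynomial.taylor 1 (Y i)).map (algebraMap W L) =
        Polynomial.C b * Polynomial.taylor 1 (P i) := by
      rw [Polynomial.map_taylor, hYP, map_one, Polynomial.taylor_mul, Polynomial.taylor_C]
    have := congrArg (fun p => Polynomial.coeff p m) this
    rw [one_pow, one_mul]
    simp only [Polynomial.coeff_map, Polynomial.coeff_C_mul] at this
    exact this
  set y : ι → Polynomial F := fun i => (Y i).map ρ with hy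
  set t := Finset.univ.sup fun i => (y i).natDegree with ht
  have hyt : ∀ i, (y i).natDegree ≤ t := fun i =>
    Finset.le_sup (f := fun i => (y i).natDegree) (Finset.mem_univ i)
  have hne : ∃ i, y i ≠ 0 := by
    refine ⟨(mx W V).1, fun h => ?_⟩
    have := congrArg (fun p => Polynomial.coeff p (mx W V).2) h
    simp only [hy, Polynomial.coeff_map, Polynomial.coeff_zero] at this
    rw [← rd_coe, hY, one_pow, one_mul] at this
    have h2 : b * (P (mx W V).1).coeff (mx W V).2 = 1 := inv_mul_cancel₀ (mx_ne_zero W hV0)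
    rw [h2, rd_one] at this
    exact one_ne_zero this
  have htop : (fun i => (y i).coeff t) ≠ 0 := by
    obtain ⟨i, -, hi⟩ := Finset.exists_mem_eq_sup Finset.univ Finset.univ_nonempty
      (fun i => (y i).natDegree)
    intro h
    have h2 := congrFun h i
    simp only [Pi.zero_apply] at h2
    rw [ht, hi] at h2
    have h3 : y i = 0 := by simpa using h2
    have ht0 : t = 0 := by rw [ht, hi, h3]; simp
    obtain ⟨j, hj⟩ := hne
    have hj0 := hyt j
    rw [ht0] at hj0
    have := congrFun h j
    rw [ht0] at this
    apply hj
    rw [Polynomial.eq_C_of_natDegree_le_zero hj0]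
    simp only [Pi.zero_apply] at this
    rw [this, map_zero]
  have hty : ∀ i, (Polynomial.taylor 1 (Y i)).map ρ = Polynomial.taylor 1 (y i) := by
    intro i
    rw [Polynomial.map_taylor, map_one]
  have hc : ∀ i m, ρ ((Polynomial.taylor 1 (Y i)).coeff m) = (Polynomial.taylor 1 (y i)).coeff m := by
    intro i m
    rw [← hty, Polynomial.coeff_map]
  have hcy : ∀ i m, ρ ((Y i).coeff m) = (y i).coeff m := by
    intro i m
    rw [hy, Polynomial.coeff_map]
  have hce : (fun i => ρ ((Polynomial.taylor 1 (Y i)).coeff t)) = fun i => (y i).coeff t := by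
    funext i
    rw [hc, taylor_coeff_top _ _ (hyt i)]
  have hce' : (fun i => ρ ((Y i).coeff t)) = fun i => (y i).coeff t := by
    funext i; rw [hcy]
  -- both ends are connected to the top coefficient of `y`, which a shift of the parameter preserves
  rw [chain W ρ hρ hdiv hf P hE h0 b hb0 Y hY t (hce' ▸ htop) ?_,
    chain W ρ hρ hdiv hf _ hE' h1 b hb0 _ hY' t (hce ▸ htop) ?_, hce, hce']
  · intro i m hm
    rw [hc, Polynomial.coeff_eq_zero_of_natDegree_lt]
    rw [Polynomial.natDegree_taylor]
    exact lt_of_le_of_lt (hyt i) hm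
  · intro i m hm
    rw [hcy, Polynomial.coeff_eq_zero_of_natDegree_lt]
    exact lt_of_le_of_lt (hyt i) hm

end Red

/-! ### Paths in a quadric bundle -/

section Qf
variable {ι J : Type*} [Fintype J]

/-- The quadratic form with (not necessarily symmetric) coefficient matrix `a`, evaluated at a point
`x` of the base and a fibre vector `z`. -/
def qf {R S : Type*} [CommRing R] [CommRing S] (φ : R →+* S) (a : J → J → MvPolynomial ι R)
    (x : ι → S) (z : J → S) : S := ∑ i, ∑ j, eval₂ φ x (a i j) * z i * z j

lemma map_qf {R S S' : Type*} [CommRing R] [CommRing S] [CommRing S'] (φ : R →+* S) (f : S →+* S')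
    (a : J → J → MvPolynomial ι R) (x : ι → S) (z : J → S) :
    f (qf φ a x z) = qf (f.comp φ) a (fun i => f (x i)) (fun i => f (z i)) := by
  simp only [qf, map_sum, map_mul, hom_eval₂]

lemma qf_smul {R S : Type*} [CommRing R] [CommRing S] (φ : R →+* S)
    (a : J → J → MvPolynomial ι R) (x : ι → S) (z : J → S) (c : S) :
    qf φ a x (fun i => c * z i) = c ^ 2 * qf φ a x z := by
  simp only [qf, Finset.mul_sum]
  refine Finset.sum_congr rfl fun i _ => Finset.sum_congr rfl fun j _ => ?_
  ring

/-- `a i j` is homogeneous of degree `l i + l j + l₀`. -/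
def HomogMat {R : Type*} [CommRing R] (l : J → ℤ) (l₀ : ℤ) (a : J → J → MvPolynomial ι R) : Prop :=
  ∀ i j, a i j ≠ 0 → ∃ e : ℕ, (e : ℤ) = l i + l j + l₀ ∧ (a i j).IsHomogeneous e

lemma eval₂_smul_homog {R S : Type*} [CommRing R] [CommRing S] (φ : R →+* S) {e : ℕ}
    {P : MvPolynomial ι R} (hP : P.IsHomogeneous e) (c : S) (x : ι → S) :
    eval₂ φ (fun i => c * x i) P = c ^ e * eval₂ φ x P := by
  rw [eval₂_eq, eval₂_eq, Finset.mul_sum]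
  refine Finset.sum_congr rfl fun d hd => ?_
  have h1 : ∑ i ∈ d.support, d i = e := by
    have := hP (mem_support_iff.1 hd)
    rwa [Finsupp.weight_apply, Finsupp.sum, Finset.sum_congr rfl (fun i _ => by rw [Pi.one_apply, smul_eq_mul, mul_one])] at this
  simp only [mul_pow, Finset.prod_mul_distrib, Finset.prod_pow_eq_pow_sum, h1]
  ring

lemma qf_scale {R S M : Type*} [CommRing R] [CommRing S] [Field M] [Algebra M S] (φ : R →+* S)
    {l : J → ℤ} {l₀ : ℤ} {a : J → J → MvPolynomial ι R} (ha : HomogMat l l₀ a)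
    (x : ι → S) (z : J → S) {c : M} (hc : c ≠ 0) :
    qf φ a (fun i => algebraMap M S c * x i) (fun i => algebraMap M S (c ^ (-l i)) * z i) =
      algebraMap M S (c ^ l₀) * qf φ a x z := by
  simp only [qf, Finset.mul_sum]
  refine Finset.sum_congr rfl fun i _ => Finset.sum_congr rfl fun j _ => ?_
  by_cases h0 : a i j = 0
  · simp [h0]
  obtain ⟨e, he, hP⟩ := ha i j h0
  rw [eval₂_smul_homog φ hP]
  have : algebraMap M S (c ^ l₀) = algebraMap M S c ^ e * algebraMap M S (c ^ (-l i)) *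
      algebraMap M S (c ^ (-l j)) := by
    rw [← map_pow, ← map_mul, ← map_mul, ← zpow_natCast, ← zpow_add₀ hc, ← zpow_add₀ hc, he]
    congr 2; ring
  rw [this]; ring

end Qf

section Edge
variable {N : ℕ} {κ L F J : Type} [Field κ] [Field L] [Field F] [Algebra κ F] [Fintype J]
  {W : ValuationSubring L} {ρ : W →+* F}

/-- A path in the quadric bundle is constant along the edges of its Newton polygon. -/
theorem edgeConst_of_path [CharP κ 2] [CharP F 2] (hperf : ∀ a : κ, ∃ b, b ^ 2 = a) (i1 : Fin N)
    (D : Fin (N + 1) → Derivation κ F F)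
    {l : J → ℤ} {l₀ : ℤ} {a : J → J → MvPolynomial (Fin (N + 2)) W} (ha : HomogMat l l₀ a)
    (hS : ∀ (x : Fin (N + 2) → RatFunc F) (z : J → RatFunc F), z ≠ 0 → x 0 ≠ 0 → gG 0 x ≠ 0 →
      qf ((algebraMap F (RatFunc F)).comp ρ) a x z = 0 → IsoAt i1 x)
    (P : Fin (N + 2) → Polynomial L) (Z : J → Polynomial L) (hZ : Z ≠ 0)
    (hq : qf (Polynomial.C.comp (algebraMap W L)) a P Z = 0) :
    EdgeConst W ρ (fval D) P := by
  classical
  intro b c hb hc Y hY k lt hkl hlow hhigh hk0 hl0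
  -- the path reparametrised by `s ↦ c s` and rescaled
  have hY' : ∀ i, (Y i).map (algebraMap W L) =
      Polynomial.C b * (P i).comp (Polynomial.C c * Polynomial.X) := by
    intro i
    ext m
    rw [Polynomial.coeff_map, Polynomial.coeff_C_mul, Polynomial.comp_C_mul_X_coeff,
      mul_comm ((P i).coeff m)]
    exact hY i m
  set Z1 : J → Polynomial L := fun i =>
    Polynomial.C (b ^ (-l i)) * (Z i).comp (Polynomial.C c * Polynomial.X) with hZ1
  have hq1 : qf (Polynomial.C.comp (algebraMap W L)) a (fun i => (Y i).map (algebraMap W L)) Z1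
      = 0 := by
    have h1 : qf (Polynomial.C.comp (algebraMap W L)) a
        (fun i => (P i).comp (Polynomial.C c * Polynomial.X))
        (fun i => (Z i).comp (Polynomial.C c * Polynomial.X)) = 0 := by
      have := map_qf (Polynomial.C.comp (algebraMap W L))
        (Polynomial.compRingHom (Polynomial.C c * Polynomial.X)) a P Z
      rw [hq, map_zero] at this
      rw [this]
      congr 1
      ext w <;> simp
    have h2 := qf_scale (M := L) (Polynomial.C.comp (algebraMap W L)) ha
      (fun i => (P i).comp (Polynomial.C c * Polynomial.X))
      (fun i => (Z i).comp (Polynomial.C c * Polynomial.X)) hb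
    rw [h1, mul_zero] at h2
    rw [← h2]
    congr 1
    funext i
    exact hY' i
  obtain ⟨j1, hj1⟩ : ∃ j, Z j ≠ 0 := Function.ne_iff.1 hZ
  have hZ1j : Z1 j1 ≠ 0 := by
    refine mul_ne_zero (by simpa using zpow_ne_zero _ hb) ?_
    intro h
    apply hj1
    ext m
    have := congrArg (fun p => Polynomial.coeff p m) h
    simp only [Polynomial.comp_C_mul_X_coeff, Polynomial.coeff_zero] at this
    rw [Polynomial.coeff_zero]
    exact (mul_eq_zero.1 this).resolve_right (pow_ne_zero _ hc)
  -- normalise the fibre coordinate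
  set B := Finset.univ.sup fun i => (Z1 i).natDegree with hB
  have hZB : ∀ i m, B < m → (Z1 i).coeff m = 0 := fun i m hm =>
    Polynomial.coeff_eq_zero_of_natDegree_lt
      (lt_of_le_of_lt (Finset.le_sup (f := fun i => (Z1 i).natDegree) (Finset.mem_univ i)) hm)
  set V : J × Fin (B + 1) → L := fun p => (Z1 p.1).coeff p.2 with hV
  have hV0 : V ≠ 0 := by
    intro h
    apply hZ1j
    ext m
    by_cases hm : B < m
    · rw [hZB _ _ hm, Polynomial.coeff_zero]
    · exact congrFun h (j1, ⟨m, by omega⟩)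
  haveI : Nonempty (J × Fin (B + 1)) := ⟨(j1, 0)⟩
  haveI : Nonempty J := ⟨j1⟩
  set e : L := (V (mx W V))⁻¹ with he
  obtain ⟨ZW, hZW⟩ := exists_scaled W Z1 e 1 (fun i m => by
    rw [one_pow, one_mul]
    by_cases hm : B < m
    · rw [hZB i m hm, mul_zero]; exact W.zero_mem
    · have := div_mx_mem W hV0 (i, ⟨m, by omega⟩)
      rw [div_eq_inv_mul] at this
      exact this)
  have hZW' : ∀ i, (ZW i).map (algebraMap W L) = Polynomial.C e * Z1 i := by
    intro i
    ext m
    rw [Polynomial.coeff_map, Polynomial.coeff_C_mul]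
    have := hZW i m
    rwa [one_pow, one_mul] at this
  have hqW : qf Polynomial.C a Y ZW = 0 := by
    apply Polynomial.map_injective (algebraMap W L) Subtype.val_injective
    have := map_qf Polynomial.C (Polynomial.mapRingHom (algebraMap W L)) a Y ZW
    simp only [Polynomial.coe_mapRingHom] at this
    rw [this, Polynomial.map_zero]
    simp only [hZW']
    rw [Polynomial.mapRingHom_comp_C, qf_smul, hq1, mul_zero]
  set y : Fin (N + 2) → Polynomial F := fun i => (Y i).map ρ with hy
  set zb : J → Polynomial F := fun i => (ZW i).map ρ with hzb
  have hqF : qf (Polynomial.C.comp ρ) a y zb = 0 := by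
    have := map_qf Polynomial.C (Polynomial.mapRingHom ρ) a Y ZW
    rw [hqW, map_zero, Polynomial.mapRingHom_comp_C] at this
    exact this.symm
  have hzb0 : zb (mx W V).1 ≠ 0 := by
    intro h
    have := congrArg (fun p => Polynomial.coeff p (mx W V).2) h
    simp only [hzb, Polynomial.coeff_map, Polynomial.coeff_zero] at this
    rw [← rd_coe, hZW, one_pow, one_mul] at this
    have h2 : e * (Z1 (mx W V).1).coeff (mx W V).2 = 1 := inv_mul_cancel₀ (mx_ne_zero W hV0)
    rw [h2, rd_one] at this
    exact one_ne_zero this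
  have hcy : ∀ i m, (y i).coeff m = ρ ((Y i).coeff m) := fun i m => by
    rw [hy, Polynomial.coeff_map]
  -- divide by the lowest power of `u`
  have hdvd : ∀ i, ∃ p, y i = Polynomial.X ^ k * p := fun i =>
    (Polynomial.X_pow_dvd_iff.2 fun m hm => by rw [hcy]; exact hlow i m hm)
  choose y' hy' using hdvd
  have hc' : ∀ i m, (y' i).coeff m = ρ ((Y i).coeff (m + k)) := by
    intro i m
    rw [← hcy, hy' i, Polynomial.coeff_X_pow_mul]
  have e0 : (fun i => ρ ((Y i).coeff k)) = fun i => (y' i).coeff 0 := by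
    funext i; rw [hc', zero_add]
  have e1 : (fun i => ρ ((Y i).coeff lt)) = fun i => (y' i).coeff (lt - k) := by
    funext i; rw [hc', Nat.sub_add_cancel hkl]
  rw [e0] at hk0 ⊢
  rw [e1] at hl0 ⊢
  refine fval_const hperf i1 D y' (lt - k) (fun i => ?_) hk0 hl0 fun hgen => ?_
  · rw [Polynomial.natDegree_le_iff_coeff_eq_zero]
    intro m hm
    rw [hc']
    exact hhigh i _ (by omega)
  · set α := algebraMap (Polynomial F) (RatFunc F) with hα
    have hXk : α (Polynomial.X ^ k) ≠ 0 := by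
      rw [Ne, map_eq_zero_iff _ (RatFunc.algebraMap_injective F)]
      exact pow_ne_zero _ Polynomial.X_ne_zero
    have hsm : (fun i => α (y i)) = α (Polynomial.X ^ k) • fun i => α (y' i) := by
      funext i
      rw [Pi.smul_apply, smul_eq_mul, ← map_mul, ← hy']
    have hgy : Gen κ (fun i => α (y i)) := hsm ▸ hgen.smul hXk
    have hqM : qf ((algebraMap F (RatFunc F)).comp ρ) a (fun i => α (y i)) (fun i => α (zb i)) = 0 := by
      have := map_qf (Polynomial.C.comp ρ) α a y zb
      rw [hqF, map_zero] at this
      rw [this]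
      congr 1
    have := hS _ _ (fun h => hzb0 (by
      have := congrFun h (mx W V).1
      simp only [Pi.zero_apply] at this
      rwa [map_eq_zero_iff _ (RatFunc.algebraMap_injective F)] at this))
      (hgy.ne_zero 0) (hgy.gG_ne_zero zero_ne_lastIx) hqM
    have h3 := this.smul (inv_ne_zero hXk)
    rwa [hsm, smul_smul, inv_mul_cancel₀ hXk, one_smul] at h3

end Edge

/-! ### The special quadric bundle -/

/-- Numerical data of the special quadric bundle: every fibre coordinate is labelled by a subset
of `{1, …, N}` and a bit; `tp` distinguishes the two families of coefficient degrees. -/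
structure Shape (N : ℕ) (J : Type) where
  /-- labels of the fibre coordinates -/
  ψ : J → Finset (Fin N) × Bool
  inj : Function.Injective ψ
  /-- the coordinate labelled `(∅, 0)` -/
  j0 : J
  /-- the coordinate labelled `(∅, 1)` -/
  j1 : J
  /-- the coordinate labelled `({k}, 0)` -/
  j2 : J
  /-- a fixed base direction -/
  k : Fin N
  h0 : ψ j0 = (∅, false)
  h1 : ψ j1 = (∅, true)
  h2 : ψ j2 = ({k}, false)
  /-- which of the two families is used -/
  tp : Bool
  /-- twists of the summands -/
  l : J → ℤ
  /-- twist of the target -/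
  l₀ : ℤ
  /-- degrees of the matrix entries -/
  e : J → J → ℕ
  he : ∀ i j, (e i j : ℤ) = l i + l j + l₀
  hdeg : ∀ i, (ψ i).1.card + (bif tp then 2 * (N + 1) else bif (ψ i).2 then 4 * (N + 1) else 0) ≤
    e i i
  hdeg1 : 2 * (N + 1) ≤ e j0 j1

namespace Shape
variable {N : ℕ} {J : Type} (s : Shape N J)

lemma j0_ne_j1 : s.j0 ≠ s.j1 := by
  intro h
  have := s.h0
  rw [h, s.h1] at this
  simp at this

lemma j0_ne_j2 : s.j0 ≠ s.j2 := by
  intro h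
  have := s.h0
  rw [h, s.h2] at this
  simp at this

lemma j1_ne_j2 : s.j1 ≠ s.j2 := by
  intro h
  have := s.h1
  rw [h, s.h2] at this
  simp at this

/-- Degree of the extra factor of a diagonal entry. -/
def gdeg (b : Bool) : ℕ := bif s.tp then 2 * (N + 1) else bif b then 4 * (N + 1) else 0

/-- The extra factor of a diagonal entry: `1` or `g₁ g₂` in the first family, `g₁` or `g₂` in the
second, which differ by the factor `g₁` up to squares. -/
def gfac (κ : Type) [Field κ] (b : Bool) : MvPolynomial (Fin (N + 2)) κ :=
  bif s.tp then (bif b then gGpoly κ (midIx s.k) else gGpoly κ 0)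
  else bif b then gGpoly κ 0 * gGpoly κ (midIx s.k) else 1

lemma gfac_homog (κ : Type) [Field κ] (b : Bool) : (s.gfac κ b).IsHomogeneous (s.gdeg b) := by
  have h1 := gGpoly_isHomogeneous (κ := κ) (N := N) zero_ne_lastIx
  have h2 := gGpoly_isHomogeneous (κ := κ) (midIx_ne_lastIx s.k)
  unfold gfac gdeg
  cases s.tp <;> cases b
  · exact isHomogeneous_one _ _
  · have := h1.mul h2
    rw [show 2 * (N + 1) + 2 * (N + 1) = 4 * (N + 1) by ring] at this
    exact this
  · exact h1
  · exact h2

lemma gfac_ne_zero (κ : Type) [Field κ] (b : Bool) : s.gfac κ b ≠ 0 := by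
  have h1 := gGpoly_ne_zero (κ := κ) (N := N) zero_ne_lastIx
  have h2 := gGpoly_ne_zero (κ := κ) (midIx_ne_lastIx s.k)
  unfold gfac
  cases s.tp <;> cases b
  · exact one_ne_zero
  · exact mul_ne_zero h1 h2
  · exact h1
  · exact h2

/-- Diagonal entries of the special quadric bundle; the power of `x₀` pads the degree. -/
def diag (κ : Type) [Field κ] (i : J) : MvPolynomial (Fin (N + 2)) κ :=
  (∏ k ∈ (s.ψ i).1, X (midIx k)) * s.gfac κ (s.ψ i).2 *
    X 0 ^ (s.e i i - (s.ψ i).1.card - s.gdeg (s.ψ i).2)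

/-- The only off-diagonal entry of the special quadric bundle. -/
def off (κ : Type) [Field κ] : MvPolynomial (Fin (N + 2)) κ :=
  gGpoly κ 0 * X 0 ^ (s.e s.j0 s.j1 - 2 * (N + 1))

open Classical in
/-- The matrix of the special quadric bundle, upper triangular when `j0` is the first index, so that
the quadratic form makes sense in characteristic two. -/
def a₀ (κ : Type) [Field κ] (i j : J) : MvPolynomial (Fin (N + 2)) κ :=
  if i = j then s.diag κ i else if i = s.j0 ∧ j = s.j1 then s.off κ else 0

lemma hdeg' (i : J) : (s.ψ i).1.card + s.gdeg (s.ψ i).2 ≤ s.e i i := s.hdeg i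

lemma diag_homog (κ : Type) [Field κ] (i : J) : (s.diag κ i).IsHomogeneous (s.e i i) := by
  have h1 : (∏ k ∈ (s.ψ i).1, (X (midIx k) : MvPolynomial (Fin (N + 2)) κ)).IsHomogeneous
      (s.ψ i).1.card := by
    have := IsHomogeneous.prod (s.ψ i).1 (fun k => (X (midIx k) : MvPolynomial (Fin (N + 2)) κ))
      (fun _ => 1) (fun k _ => isHomogeneous_X κ _)
    simpa using this
  have := (h1.mul (s.gfac_homog κ (s.ψ i).2)).mul
    ((isHomogeneous_X κ (0 : Fin (N + 2))).pow (s.e i i - (s.ψ i).1.card - s.gdeg (s.ψ i).2))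
  have hd := s.hdeg' i
  rw [diag]
  convert this using 1
  omega

lemma off_homog (κ : Type) [Field κ] : (s.off κ).IsHomogeneous (s.e s.j0 s.j1) := by
  have := (gGpoly_isHomogeneous (κ := κ) (N := N) zero_ne_lastIx).mul
    ((isHomogeneous_X κ (0 : Fin (N + 2))).pow (s.e s.j0 s.j1 - 2 * (N + 1)))
  have hd := s.hdeg1
  rw [off]
  convert this using 1
  omega

lemma a₀_homog (κ : Type) [Field κ] (i j : J) : (s.a₀ κ i j).IsHomogeneous (s.e i j) := by
  unfold a₀
  split_ifs with h h'
  · subst h; exact s.diag_homog κ i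
  · rw [h'.1, h'.2]; exact s.off_homog κ
  · exact isHomogeneous_zero _ _ _

lemma diag_ne_zero (κ : Type) [Field κ] (i : J) : s.diag κ i ≠ 0 := by
  refine mul_ne_zero (mul_ne_zero ?_ (s.gfac_ne_zero κ _)) (pow_ne_zero _ (X_ne_zero _))
  exact Finset.prod_ne_zero_iff.2 fun k _ => X_ne_zero _

lemma off_ne_zero (κ : Type) [Field κ] : s.off κ ≠ 0 :=
  mul_ne_zero (gGpoly_ne_zero zero_ne_lastIx) (pow_ne_zero _ (X_ne_zero _))

/-- The product of the diagonal entries at `j0` and `j2` is not a square in characteristic two. -/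
lemma diag_mul_not_sq (κ : Type) [Field κ] [CharP κ 2] (p : MvPolynomial (Fin (N + 2)) κ) :
    p ^ 2 ≠ s.diag κ s.j0 * s.diag κ s.j2 := by
  intro h
  have hmid : (midIx s.k : Fin (N + 2)) ≠ 0 := Fin.succ_ne_zero _
  haveI : CharP (MvPolynomial (Fin (N + 2)) κ) 2 := inferInstance
  have h2 : (2 : MvPolynomial (Fin (N + 2)) κ) = 0 := CharTwo.two_eq_zero
  have hp : pderiv (midIx s.k) (p ^ 2) = 0 := by
    rw [pderiv_pow]; simp [h2]
  have hX : ∀ m : ℕ, pderiv (midIx s.k) ((X 0 : MvPolynomial (Fin (N + 2)) κ) ^ m) = 0 := by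
    intro m
    rw [pderiv_pow, pderiv_X_of_ne (Ne.symm hmid), mul_zero]
  have hg : pderiv (midIx s.k) (s.gfac κ false ^ 2) = 0 := by
    rw [pderiv_pow]; simp [h2]
  rw [h] at hp
  have e1 : s.diag κ s.j0 * s.diag κ s.j2 = s.gfac κ false ^ 2 * (X (midIx s.k) *
      X 0 ^ (s.e s.j0 s.j0 - (s.ψ s.j0).1.card - s.gdeg (s.ψ s.j0).2 +
        (s.e s.j2 s.j2 - (s.ψ s.j2).1.card - s.gdeg (s.ψ s.j2).2))) := by
    rw [diag, diag, pow_add, s.h0, s.h2]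
    simp only [Finset.prod_empty, Finset.prod_singleton]
    ring
  rw [e1, pderiv_mul, pderiv_mul, hg, hX, pderiv_X_self] at hp
  simp only [zero_mul, mul_zero, one_mul, add_zero, zero_add] at hp
  exact mul_ne_zero (pow_ne_zero _ (s.gfac_ne_zero κ false)) (pow_ne_zero _ (X_ne_zero _)) hp

variable [Fintype J]

lemma qf_a₀ {κ M : Type} [Field κ] [Field M] (φ : κ →+* M) (x : Fin (N + 2) → M) (z : J → M) :
    qf φ (s.a₀ κ) x z = ∑ i, eval₂ φ x (s.diag κ i) * z i ^ 2 +
      eval₂ φ x (s.off κ) * z s.j0 * z s.j1 := by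
  classical
  have : ∀ i j, eval₂ φ x (s.a₀ κ i j) * z i * z j =
      (if i = j then eval₂ φ x (s.diag κ i) * z i ^ 2 else 0) +
      (if i = s.j0 then (if j = s.j1 then eval₂ φ x (s.off κ) * z s.j0 * z s.j1 else 0) else 0) := by
    intro i j
    rw [a₀]
    by_cases hij : i = j
    · subst hij
      rw [if_pos rfl, if_pos rfl]
      by_cases hi : i = s.j0
      · rw [if_pos hi, if_neg (fun h => s.j0_ne_j1 (hi.symm.trans h))]; ring
      · rw [if_neg hi]; ring
    · rw [if_neg hij, if_neg hij]
      by_cases hi : i = s.j0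
      · by_cases hj : j = s.j1
        · subst hi; subst hj; simp
        · simp [hi, hj]
      · simp [hi]
  simp only [qf, this, Finset.sum_add_distrib]
  simp

lemma eval₂_gGpoly {κ M : Type} [Field κ] [Field M] (φ : κ →+* M) (j : Fin (N + 2))
    (x : Fin (N + 2) → M) : eval₂ φ x (gGpoly κ j) = gG j x := by
  have := map_gG (eval₂Hom φ x) j X
  refine this.trans ?_
  congr 1
  funext i
  simp

/-- A point of the special quadric bundle gives an isotropic vector of the Pfister-type form. -/
theorem isoAt {κ M : Type} [Field κ] [Field M] (φ : κ →+* M) (x : Fin (N + 2) → M) (z : J → M)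
    (hz : z ≠ 0) (hx : x 0 ≠ 0) (hg : gG 0 x ≠ 0) (hq : qf φ (s.a₀ κ) x z = 0) :
    IsoAt s.k x := by
  classical
  rw [qf_a₀] at hq
  set h : Fin N → M := fun i => x (midIx i) / x 0 with hh
  set c : M := x 0 ^ (2 * (N + 1)) with hc
  have hc0 : c ≠ 0 := pow_ne_zero _ hx
  set g₁ := c⁻¹ * gG 0 x with hg₁
  set g₂ := c⁻¹ * gG (midIx s.k) x with hg₂
  have hg₁0 : g₁ ≠ 0 := mul_ne_zero (inv_ne_zero hc0) hg
  have hcg₁ : gG 0 x = c * g₁ := by rw [hg₁, mul_inv_cancel_left₀ hc0]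
  have hcg₂ : gG (midIx s.k) x = c * g₂ := by rw [hg₂, mul_inv_cancel_left₀ hc0]
  suffices hI : Iso h g₁ g₂ by
    have := iso_scale hc0 hI
    rwa [← hcg₁, ← hcg₂] at this
  -- normalised coordinates
  set y : J → M := fun i => x 0 ^ (s.l i) * z i with hy
  set G : Bool → M := fun b => bif s.tp then (bif b then g₂ else g₁) else bif b then g₁ * g₂ else 1
    with hG
  have hGe : ∀ b, eval₂ φ x (s.gfac κ b) = x 0 ^ (s.gdeg b) * G b := by
    intro b
    simp only [gfac, gdeg, hG]
    cases s.tp <;> cases b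
    · simp
    · simp only [cond_false, cond_true, eval₂_mul, eval₂_gGpoly, hcg₁, hcg₂]
      rw [hc]; ring
    · simp only [cond_false, cond_true, eval₂_gGpoly, hcg₁, hc]
    · simp only [cond_false, cond_true, eval₂_gGpoly, hcg₂, hc]
  have hdg : ∀ i, eval₂ φ x (s.diag κ i) * z i ^ 2 =
      x 0 ^ s.l₀ * ((∏ k ∈ (s.ψ i).1, h k) * G (s.ψ i).2 * y i ^ 2) := by
    intro i
    rw [diag, eval₂_mul, eval₂_mul, hGe, eval₂_pow, eval₂_X, eval₂_prod]
    simp only [eval₂_X, hh, hy]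
    rw [Finset.prod_div_distrib, Finset.prod_const]
    have e1 : x 0 ^ (s.gdeg (s.ψ i).2) * x 0 ^ (s.e i i - (s.ψ i).1.card - s.gdeg (s.ψ i).2) *
        x 0 ^ ((s.ψ i).1.card) = x 0 ^ s.l₀ * (x 0 ^ s.l i) ^ 2 := by
      have hd := s.hdeg' i
      rw [← pow_add, ← pow_add, ← zpow_natCast, ← zpow_natCast, ← zpow_mul, ← zpow_add₀ hx]
      congr 1
      have := s.he i i
      push_cast
      omega
    have hxe : x 0 ^ ((s.ψ i).1.card) ≠ 0 := pow_ne_zero _ hx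
    rw [mul_pow]
    field_simp
    linear_combination (∏ k ∈ (s.ψ i).1, x (midIx k)) * G (s.ψ i).2 * z i ^ 2 * e1
  have hof : eval₂ φ x (s.off κ) * z s.j0 * z s.j1 = x 0 ^ s.l₀ * (g₁ * (y s.j0 * y s.j1)) := by
    rw [off, eval₂_mul, eval₂_gGpoly, eval₂_pow, eval₂_X, hcg₁]
    have e1 : c * x 0 ^ (s.e s.j0 s.j1 - 2 * (N + 1)) =
        x 0 ^ s.l₀ * (x 0 ^ s.l s.j0 * x 0 ^ s.l s.j1) := by
      have hd := s.hdeg1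
      rw [hc, ← pow_add, ← zpow_natCast, ← zpow_add₀ hx, ← zpow_add₀ hx]
      congr 1
      have := s.he s.j0 s.j1
      omega
    simp only [hy]
    linear_combination g₁ * z s.j0 * z s.j1 * e1
  have hq2 : ∑ i, (∏ k ∈ (s.ψ i).1, h k) * G (s.ψ i).2 * y i ^ 2 + g₁ * (y s.j0 * y s.j1) = 0 := by
    rw [hof, Finset.sum_congr rfl (fun i _ => hdg i), ← Finset.mul_sum, ← mul_add] at hq
    exact (mul_eq_zero.1 hq).resolve_left (zpow_ne_zero _ hx)
  -- extend by zero to all labels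
  set Y : Finset (Fin N) × Bool → M := Function.extend s.ψ y 0 with hYdef
  have hYi : ∀ i, Y (s.ψ i) = y i := fun i => s.inj.extend_apply _ _ _
  have hsum : ∑ i, (∏ k ∈ (s.ψ i).1, h k) * G (s.ψ i).2 * y i ^ 2 =
      ∑ p : Finset (Fin N) × Bool, (∏ k ∈ p.1, h k) * G p.2 * Y p ^ 2 := by
    rw [← Finset.sum_subset (Finset.subset_univ (Finset.univ.image s.ψ)),
      Finset.sum_image (fun a _ b _ hab => s.inj hab)]
    · simp only [hYi]
    · intro p _ hp
      have : Y p = 0 := by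
        rw [hYdef, Function.extend_apply']
        · rfl
        · rintro ⟨i, hi⟩
          exact hp (Finset.mem_image.2 ⟨i, Finset.mem_univ _, hi⟩)
      rw [this]; ring
  rw [hsum, Fintype.sum_prod_type] at hq2
  simp only [Fintype.sum_bool, Finset.sum_add_distrib] at hq2
  rw [← hYi s.j0, ← hYi s.j1, s.h0, s.h1] at hq2
  have hYne : ∃ p, Y p ≠ 0 := by
    obtain ⟨i, hi⟩ := Function.ne_iff.1 hz
    refine ⟨s.ψ i, ?_⟩
    rw [hYi]
    exact mul_ne_zero (zpow_ne_zero _ hx) hi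
  have hpf : ∀ (b : Bool), ∑ t : Finset (Fin N), (∏ k ∈ t, h k) * G b * Y (t, b) ^ 2 =
      G b * pform h Finset.univ (fun t => Y (t, b)) := by
    intro b
    rw [pform, Finset.powerset_univ, Finset.mul_sum]
    exact Finset.sum_congr rfl fun t _ => by ring
  rw [hpf, hpf] at hq2
  cases htp : s.tp with
  | false =>
    simp only [hG, htp, cond_false, cond_true] at hq2
    refine ⟨fun t => Y (t, false), fun t => Y (t, true), ?_, by linear_combination hq2⟩
    obtain ⟨⟨t, b⟩, hp⟩ := hYne
    cases b
    · exact Or.inl fun h0 => hp (congrFun h0 t)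
    · exact Or.inr fun h0 => hp (congrFun h0 t)
  | true =>
    simp only [hG, htp, cond_false, cond_true] at hq2
    refine ⟨fun t => Y (t, false), fun t => g₁⁻¹ * Y (t, true), ?_, ?_⟩
    · obtain ⟨⟨t, b⟩, hp⟩ := hYne
      cases b
      · exact Or.inl fun h0 => hp (congrFun h0 t)
      · exact Or.inr fun h0 => hp ((mul_eq_zero.1 (congrFun h0 t)).resolve_left (inv_ne_zero hg₁0))
    · have : pform h Finset.univ (fun t => g₁⁻¹ * Y (t, true)) =
          g₁⁻¹ ^ 2 * pform h Finset.univ (fun t => Y (t, true)) := by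
        rw [pform, pform, Finset.mul_sum]
        exact Finset.sum_congr rfl fun t _ => by ring
      rw [this]
      apply mul_left_cancel₀ hg₁0
      rw [mul_zero, ← hq2]
      field_simp
      ring

end Shape

/-! ### Places and their extensions -/

/-- A place: a valuation ring `W` of `L` with a homomorphism to `F` whose kernel is the maximal
ideal. -/
structure Pl (L F : Type) [Field L] [Field F] where
  /-- the valuation ring -/
  W : ValuationSubring L
  /-- the residue homomorphism -/
  ρ : W →+* F
  hρ : ∀ b : W, ρ b ≠ 0 → IsUnit b

/-- The residue map of a place, extended by zero. -/
def Pl.rd {L F : Type} [Field L] [Field F] (P : Pl L F) (f : L) : F := QBProof.rd P.W P.ρ f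

lemma Pl.mem_of_rd_ne {L F : Type} [Field L] [Field F] (P : Pl L F) {f : L} (h : P.rd f ≠ 0) :
    f ∈ P.W := by
  by_contra h'
  apply h
  rw [Pl.rd, QBProof.rd, dif_neg h']

lemma Pl.inv_mem_of_rd_ne {L F : Type} [Field L] [Field F] (P : Pl L F) {f : L} (h : P.rd f ≠ 0) :
    f⁻¹ ∈ P.W := by
  have hf := P.mem_of_rd_ne h
  rw [Pl.rd, QBProof.rd, dif_pos hf] at h
  have := P.hρ _ h
  rw [P.W.valuation_eq_one_iff] at this
  rw [← P.W.valuation_le_one_iff, map_inv₀, this, inv_one]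

lemma Pl.rd_mul {L F : Type} [Field L] [Field F] (P : Pl L F) {f g : L} (hf : f ∈ P.W)
    (hg : g ∈ P.W) : P.rd (f * g) = P.rd f * P.rd g := QBProof.rd_mul P.ρ hf hg

lemma Pl.rd_one {L F : Type} [Field L] [Field F] (P : Pl L F) : P.rd 1 = 1 :=
  QBProof.rd_one P.W P.ρ

lemma Pl.rd_coe {L F : Type} [Field L] [Field F] (P : Pl L F) (b : P.W) : P.rd b = P.ρ b :=
  QBProof.rd_coe P.ρ b

/-- The place `P` of `L` extends the place `P₀` of `L₀`, with the same value group. -/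
structure PlExt {L₀ F₀ L F : Type} [Field L₀] [Field F₀] [Field L] [Field F] [Algebra L₀ L]
    [Algebra F₀ F] (P₀ : Pl L₀ F₀) (P : Pl L F) : Prop where
  mem : ∀ b ∈ P₀.W, algebraMap L₀ L b ∈ P.W
  rd_eq : ∀ b ∈ P₀.W, P.rd (algebraMap L₀ L b) = algebraMap F₀ F (P₀.rd b)
  val : ∀ f : L, f ≠ 0 → ∃ c : L₀, c ≠ 0 ∧
    P.W.valuation f = P.W.valuation (algebraMap L₀ L c)

section
variable {L₀ F₀ L F S : Type} [Field L₀] [Field F₀] [Field L] [Field F] [Algebra L₀ L]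
    [Algebra F₀ F] [CommRing S] (P₀ : Pl L₀ F₀)

/-- Construction of an extension of a place from an integral model `S` in which every element can
be normalised by a constant to have nonzero reduction. -/
theorem exists_place (i : S →+* L) (ρS : S →+* F) (hker : ∀ s, i s = 0 → ρS s = 0)
    (hO : ∀ b : P₀.W, ∃ s, i s = algebraMap L₀ L b ∧ ρS s = algebraMap F₀ F (P₀.ρ b))
    (hU : ∀ f : L, f ≠ 0 → ∃ (c : L₀) (s t : S), c ≠ 0 ∧ ρS s ≠ 0 ∧ ρS t ≠ 0 ∧
      f * i t = algebraMap L₀ L c * i s) :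
    ∃ P : Pl L F, PlExt P₀ P ∧ ∀ s, i s ∈ P.W ∧ P.rd (i s) = ρS s := by
  set 𝔭 := RingHom.ker ρS with h𝔭
  haveI : 𝔭.IsPrime := RingHom.ker_isPrime ρS
  have hS : ∀ y : 𝔭.primeCompl, ρS y ≠ 0 := fun y h => y.2 (RingHom.mem_ker.2 h)
  have hiu : ∀ y : 𝔭.primeCompl, IsUnit (i y) := fun y =>
    isUnit_iff_ne_zero.2 fun h => hS y (hker _ h)
  have hρu : ∀ y : 𝔭.primeCompl, IsUnit (ρS y) := fun y => isUnit_iff_ne_zero.2 (hS y)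
  -- the valuation ring is the image of the localisation of `S` at the kernel of the reduction
  set S' := Localization.AtPrime 𝔭
  set i' : S' →+* L := IsLocalization.lift hiu with hi'
  set ρ' : S' →+* F := IsLocalization.lift hρu with hρ'
  have hi'a : ∀ s, i' (algebraMap S S' s) = i s := fun s => IsLocalization.lift_eq hiu s
  have hρ'a : ∀ s, ρ' (algebraMap S S' s) = ρS s := fun s => IsLocalization.lift_eq hρu s
  have hker' : ∀ x, i' x = 0 → ρ' x = 0 := by
    intro x hx
    obtain ⟨⟨s, t⟩, hst⟩ := IsLocalization.surj 𝔭.primeCompl x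
    have h1 := congrArg i' hst
    rw [map_mul, hx, zero_mul, hi'a] at h1
    have h2 := congrArg ρ' hst
    rw [map_mul, hρ'a, hρ'a, hker _ h1.symm] at h2
    exact (mul_eq_zero.1 h2).resolve_right (hS t)
  have hunit : ∀ x : S', ρ' x ≠ 0 → IsUnit x := by
    intro x hx
    obtain ⟨⟨s, t⟩, hst⟩ := IsLocalization.surj 𝔭.primeCompl x
    have h2 := congrArg ρ' hst
    rw [map_mul, hρ'a, hρ'a] at h2
    have hs : s ∈ 𝔭.primeCompl := by
      intro hs
      rw [RingHom.mem_ker.1 hs] at h2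
      rcases mul_eq_zero.1 h2 with h | h
      · exact hx h
      · exact hS t h
    have hu : IsUnit (algebraMap S S' s) := IsLocalization.map_units S' ⟨s, hs⟩
    rw [← hst] at hu
    exact isUnit_of_mul_isUnit_left hu
  have hi1 : ∀ x, ρ' x ≠ 0 → i' x ≠ 0 := fun x hx h => hx (hker' x h)
  have hscal : ∀ f : L, f ≠ 0 → ∃ (c : L₀) (x : S'), c ≠ 0 ∧ ρ' x ≠ 0 ∧
      f = algebraMap L₀ L c * i' x := by
    intro f hf
    obtain ⟨c, s, t, hc, hs, ht, h⟩ := hU f hf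
    obtain ⟨u, hu⟩ := hunit (algebraMap S S' t) (by rwa [hρ'a])
    refine ⟨c, algebraMap S S' s * (u⁻¹ : S'ˣ), hc, ?_, ?_⟩
    · rw [map_mul]
      refine mul_ne_zero (by rwa [hρ'a]) ?_
      exact ((u⁻¹).isUnit.map ρ').ne_zero
    · have : i' (u : S') * i' ((u⁻¹ : S'ˣ) : S') = 1 := by
        rw [← map_mul, Units.mul_inv, map_one]
      rw [hu, hi'a] at this
      rw [map_mul, hi'a, ← mul_assoc, ← h, mul_assoc, this, mul_one]
  have hO' : ∀ b : P₀.W, ∃ x, i' x = algebraMap L₀ L b ∧ ρ' x = algebraMap F₀ F (P₀.ρ b) := by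
    intro b
    obtain ⟨s, h1, h2⟩ := hO b
    exact ⟨algebraMap S S' s, by rw [hi'a, h1], by rw [hρ'a, h2]⟩
  let W : ValuationSubring L := ⟨i'.range, by
    intro f
    by_cases hf : f = 0
    · left; rw [hf]; exact i'.range.zero_mem
    obtain ⟨c, x, hc, hx, rfl⟩ := hscal f hf
    rcases P₀.W.mem_or_inv_mem c with h | h
    · left
      obtain ⟨y, hy, -⟩ := hO' ⟨c, h⟩
      exact ⟨y * x, by rw [map_mul, hy]⟩
    · right
      obtain ⟨y, hy, -⟩ := hO' ⟨c⁻¹, h⟩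
      obtain ⟨u, rfl⟩ := hunit x hx
      refine ⟨y * (u⁻¹ : S'ˣ), ?_⟩
      have : i' (u : S') * i' ((u⁻¹ : S'ˣ) : S') = 1 := by
        rw [← map_mul, Units.mul_inv, map_one]
      rw [map_mul, hy, mul_inv, ← map_inv₀, eq_inv_of_mul_eq_one_right this]⟩
  have hWmem : ∀ f : L, f ∈ W ↔ ∃ x, i' x = f := fun f => Iff.rfl
  let π : S' →+* W := i'.codRestrict W.toSubring (fun x => ⟨x, rfl⟩)
  have hπ : Function.Surjective π := by
    rintro ⟨f, x, rfl⟩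
    exact ⟨x, rfl⟩
  have hπk : RingHom.ker π ≤ RingHom.ker ρ' := by
    intro x hx
    rw [RingHom.mem_ker] at hx ⊢
    exact hker' x (congrArg Subtype.val hx)
  let ρ : W →+* F := RingHom.liftOfSurjective π hπ ⟨ρ', hπk⟩
  have hρπ : ∀ x, ρ (π x) = ρ' x := fun x =>
    RingHom.liftOfRightInverse_comp_apply π _ _ ⟨ρ', hπk⟩ x
  let P : Pl L F := ⟨W, ρ, by
    intro b hb
    obtain ⟨x, rfl⟩ := hπ b
    rw [hρπ] at hb
    exact (hunit x hb).map π⟩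
  have hrd : ∀ x, i' x ∈ P.W ∧ P.rd (i' x) = ρ' x := by
    intro x
    refine ⟨⟨x, rfl⟩, ?_⟩
    rw [← hρπ]
    exact P.rd_coe (π x)
  refine ⟨P, ⟨?_, ?_, ?_⟩, ?_⟩
  · intro b hb
    obtain ⟨x, h1, -⟩ := hO' ⟨b, hb⟩
    change _ = algebraMap L₀ L b at h1
    rw [← h1]; exact (hrd x).1
  · intro b hb
    obtain ⟨x, h1, h2⟩ := hO' ⟨b, hb⟩
    change _ = algebraMap L₀ L b at h1
    rw [← h1, (hrd x).2, h2, ← P₀.rd_coe]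
  · intro f hf
    obtain ⟨c, x, hc, hx, rfl⟩ := hscal f hf
    refine ⟨c, hc, ?_⟩
    have : P.W.valuation (i' x) = 1 :=
      (P.W.valuation_eq_one_iff (π x)).1 ((hunit x hx).map π)
    rw [map_mul, this, mul_one]
  · intro s
    rw [← hi'a, ← hρ'a]
    exact hrd _

lemma Pl.mem_or_of_rd {P₀ : Pl L₀ F₀} {P : Pl L F} (h : PlExt P₀ P) {c : L₀}
    (hc : algebraMap L₀ L c ∈ P.W) : c ∈ P₀.W := by
  by_contra hc'
  have hc0 : c ≠ 0 := by rintro rfl; exact hc' (zero_mem _)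
  have hi : c⁻¹ ∈ P₀.W := (P₀.W.mem_or_inv_mem c).resolve_left hc'
  have h1 : P₀.rd c⁻¹ = 0 := by
    by_contra h1
    have := P₀.inv_mem_of_rd_ne h1
    rw [inv_inv] at this
    exact hc' this
  have h2 := h.rd_eq _ hi
  rw [h1, map_zero] at h2
  have h3 := P.rd_mul hc (h.mem _ hi)
  rw [h2, mul_zero, ← map_mul, mul_inv_cancel₀ hc0, map_one, P.rd_one] at h3
  exact one_ne_zero h3

lemma PlExt.val_le {P₀ : Pl L₀ F₀} {P : Pl L F} (h : PlExt P₀ P) {c c' : L₀}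
    (hc : P₀.W.valuation c ≤ P₀.W.valuation c') :
    P.W.valuation (algebraMap L₀ L c) ≤ P.W.valuation (algebraMap L₀ L c') := by
  by_cases hc0 : c' = 0
  · rw [hc0, map_zero, le_zero_iff] at hc
    have : c = 0 := by simpa using hc
    rw [this, hc0]
  have h1 : c / c' ∈ P₀.W := by
    rw [← P₀.W.valuation_le_one_iff, map_div₀]
    exact div_le_one_of_le₀ hc zero_le
  have h2 := (P.W.valuation_le_one_iff _).2 (h.mem _ h1)
  rw [map_div₀, map_div₀] at h2
  have h3 : (0 : P.W.ValueGroup) < P.W.valuation (algebraMap L₀ L c') := by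
    rw [zero_lt_iff]; simpa using hc0
  exact (div_le_one₀ h3).1 h2

theorem PlExt.trans {L' F' : Type} [Field L'] [Field F'] [Algebra L L'] [Algebra F F']
    [Algebra L₀ L'] [Algebra F₀ F'] [IsScalarTower L₀ L L'] [IsScalarTower F₀ F F']
    {P₀ : Pl L₀ F₀} {P : Pl L F} {P' : Pl L' F'} (h : PlExt P₀ P) (h' : PlExt P P') :
    PlExt P₀ P' where
  mem b hb := by
    rw [IsScalarTower.algebraMap_apply L₀ L L']
    exact h'.mem _ (h.mem _ hb)
  rd_eq b hb := by
    rw [IsScalarTower.algebraMap_apply L₀ L L', IsScalarTower.algebraMap_apply F₀ F F',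
      h'.rd_eq _ (h.mem _ hb), h.rd_eq _ hb]
  val f hf := by
    obtain ⟨c, hc, h1⟩ := h'.val f hf
    obtain ⟨c', hc', h2⟩ := h.val c hc
    refine ⟨c', hc', ?_⟩
    rw [h1, IsScalarTower.algebraMap_apply L₀ L L']
    exact le_antisymm (h'.val_le h2.le) (h'.val_le h2.ge)

end

/-! ### Gauss extensions and simple extensions of places -/

section
variable {L₀ F₀ : Type} [Field L₀] [Field F₀] (P₀ : Pl L₀ F₀)

/-- A finite family of elements, not all zero, has an element of maximal valuation. -/
lemma exists_max_val {α : Type} (s : Finset α) (hs : s.Nonempty) (c : α → L₀)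
    (hc : ∀ a ∈ s, c a ≠ 0) : ∃ a ∈ s, ∀ b ∈ s, c b / c a ∈ P₀.W := by
  obtain ⟨a, ha, h⟩ := s.exists_max_image (fun a => P₀.W.valuation (c a)) hs
  refine ⟨a, ha, fun b hb => ?_⟩
  rw [← P₀.W.valuation_le_one_iff, map_div₀]
  exact div_le_one_of_le₀ (h b hb) zero_le

lemma exists_scale_mv {σ : Type} {p : MvPolynomial σ L₀} (hp : p ≠ 0) :
    ∃ (c : L₀) (s : MvPolynomial σ P₀.W), c ≠ 0 ∧ map P₀.ρ s ≠ 0 ∧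
      p = C c * map (algebraMap P₀.W L₀) s := by
  obtain ⟨m, hm, h⟩ := exists_max_val P₀ p.support (support_nonempty.2 hp) (fun m => coeff m p)
    (fun m hm => mem_support_iff.1 hm)
  have hc : coeff m p ≠ 0 := mem_support_iff.1 hm
  have h' : ∀ k, coeff k (C (coeff m p)⁻¹ * p) ∈ P₀.W := by
    intro k
    rw [coeff_C_mul]
    by_cases hk : k ∈ p.support
    · have := h k hk
      rwa [div_eq_mul_inv, mul_comm] at this
    · rw [notMem_support_iff.1 hk, mul_zero]; exact zero_mem _
  have h2 : C (coeff m p)⁻¹ * p ∈ Set.range (map (algebraMap P₀.W L₀)) := by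
    rw [mem_range_map_iff_coeffs_subset]
    intro x hx
    obtain ⟨k, hk, rfl⟩ := mem_coeffs_iff.1 hx
    exact ⟨⟨_, h' k⟩, rfl⟩
  obtain ⟨s, hs⟩ := h2
  refine ⟨_, s, hc, ?_, ?_⟩
  · intro h0
    have h3 := congrArg (coeff m) hs
    rw [coeff_map, coeff_C_mul, inv_mul_cancel₀ hc] at h3
    have h4 : coeff m s = 1 := Subtype.ext h3
    have h5 := congrArg (coeff m) h0
    rw [coeff_map, h4, map_one, coeff_zero] at h5
    exact one_ne_zero h5
  · rw [hs]
    rw [← mul_assoc, ← C_mul, mul_inv_cancel₀ hc, C_1, one_mul]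

lemma exists_scale_poly {p : Polynomial L₀} (hp : p ≠ 0) :
    ∃ (c : L₀) (s : Polynomial P₀.W), c ≠ 0 ∧ s.map P₀.ρ ≠ 0 ∧
      p = Polynomial.C c * s.map (algebraMap P₀.W L₀) := by
  obtain ⟨m, hm, h⟩ := exists_max_val P₀ p.support (Polynomial.support_nonempty.2 hp)
    (fun m => p.coeff m) (fun m hm => Polynomial.mem_support_iff.1 hm)
  have hc : p.coeff m ≠ 0 := Polynomial.mem_support_iff.1 hm
  have h' : ∀ k, (Polynomial.C (p.coeff m)⁻¹ * p).coeff k ∈ P₀.W := by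
    intro k
    rw [Polynomial.coeff_C_mul]
    by_cases hk : k ∈ p.support
    · have := h k hk
      rwa [div_eq_mul_inv, mul_comm] at this
    · rw [Polynomial.notMem_support_iff.1 hk, mul_zero]; exact zero_mem _
  have h2 : Polynomial.C (p.coeff m)⁻¹ * p ∈ Polynomial.lifts (algebraMap P₀.W L₀) := by
    rw [Polynomial.lifts_iff_coeff_lifts]
    intro k
    exact ⟨⟨_, h' k⟩, rfl⟩
  obtain ⟨s, hs⟩ := (Polynomial.mem_lifts _).1 h2
  refine ⟨_, s, hc, ?_, ?_⟩
  · intro h0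
    have h3 := congrArg (fun q => q.coeff m) hs
    simp only [Polynomial.coeff_map, Polynomial.coeff_C_mul] at h3
    rw [inv_mul_cancel₀ hc] at h3
    have h4 : s.coeff m = 1 := Subtype.ext h3
    have h5 := congrArg (fun q => q.coeff m) h0
    simp only [Polynomial.coeff_map, h4, map_one, Polynomial.coeff_zero] at h5
    exact one_ne_zero h5
  · rw [hs, ← mul_assoc, ← Polynomial.C_mul, mul_inv_cancel₀ hc, Polynomial.C_1, one_mul]

/-- The Gauss extension of a place to a rational function field. -/
theorem exists_gauss (σ : Type) :
    ∃ P : Pl (FractionRing (MvPolynomial σ L₀)) (FractionRing (MvPolynomial σ F₀)),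
      PlExt P₀ P ∧ ∀ s : MvPolynomial σ P₀.W,
        algebraMap _ (FractionRing (MvPolynomial σ L₀)) (map (algebraMap P₀.W L₀) s) ∈ P.W ∧
        P.rd (algebraMap _ (FractionRing (MvPolynomial σ L₀)) (map (algebraMap P₀.W L₀) s)) =
          algebraMap _ (FractionRing (MvPolynomial σ F₀)) (map P₀.ρ s) := by
  refine exists_place P₀ ((algebraMap (MvPolynomial σ L₀) (FractionRing (MvPolynomial σ L₀))).comp
    (map (algebraMap P₀.W L₀))) ((algebraMap (MvPolynomial σ F₀)
    (FractionRing (MvPolynomial σ F₀))).comp (map P₀.ρ)) ?_ ?_ ?_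
  · intro s hs
    rw [RingHom.comp_apply, map_eq_zero_iff _ (IsFractionRing.injective _ _)] at hs
    have : s = 0 := by
      apply map_injective _ (FaithfulSMul.algebraMap_injective P₀.W L₀)
      rw [hs, map_zero]
    rw [this, map_zero]
  · intro b
    refine ⟨C b, ?_, ?_⟩
    · rw [RingHom.comp_apply, map_C, IsScalarTower.algebraMap_apply L₀ (MvPolynomial σ L₀)]
      rfl
    · rw [RingHom.comp_apply, map_C, IsScalarTower.algebraMap_apply F₀ (MvPolynomial σ F₀)]
      rfl
  · intro f hf
    obtain ⟨p, q, hq, rfl⟩ := IsFractionRing.div_surjective (A := MvPolynomial σ L₀) f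
    have hq0 : q ≠ 0 := nonZeroDivisors.ne_zero hq
    have hp0 : p ≠ 0 := by rintro rfl; simp at hf
    obtain ⟨c, s, hc, hs, h1⟩ := exists_scale_mv P₀ hp0
    obtain ⟨c', t, hc', ht, h2⟩ := exists_scale_mv P₀ hq0
    have hinj : Function.Injective (algebraMap (MvPolynomial σ F₀)
      (FractionRing (MvPolynomial σ F₀))) := IsFractionRing.injective _ _
    refine ⟨c / c', s, t, div_ne_zero hc hc', ?_, ?_, ?_⟩
    · rw [RingHom.comp_apply]; exact (map_ne_zero_iff _ hinj).2 hs
    · rw [RingHom.comp_apply]; exact (map_ne_zero_iff _ hinj).2 ht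
    · have hq1 : algebraMap (MvPolynomial σ L₀) (FractionRing (MvPolynomial σ L₀)) q ≠ 0 :=
        (map_ne_zero_iff _ (IsFractionRing.injective _ _)).2 hq0
      have e : ∀ c : L₀, algebraMap L₀ (FractionRing (MvPolynomial σ L₀)) c =
          algebraMap (MvPolynomial σ L₀) (FractionRing (MvPolynomial σ L₀)) (C c) := fun c => by
        rw [IsScalarTower.algebraMap_apply L₀ (MvPolynomial σ L₀)]; rfl
      have h1' := congrArg (algebraMap (MvPolynomial σ L₀) (FractionRing (MvPolynomial σ L₀))) h1
      have h2' := congrArg (algebraMap (MvPolynomial σ L₀) (FractionRing (MvPolynomial σ L₀))) h2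
      rw [map_mul, ← e] at h1' h2'
      have hc1 : algebraMap L₀ (FractionRing (MvPolynomial σ L₀)) c' ≠ 0 := by simpa using hc'
      rw [RingHom.comp_apply, RingHom.comp_apply, map_div₀]
      rw [div_mul_eq_mul_div, div_eq_iff hq1, h1', div_mul_eq_mul_div, div_mul_eq_mul_div,
        eq_div_iff hc1, h2']
      ring

variable {P₀}

lemma irr_of_red {Q : Polynomial P₀.W} (hQ : Q.Monic) (hi : Irreducible (Q.map P₀.ρ)) :
    Irreducible (Q.map (algebraMap P₀.W L₀)) :=
  (hQ.irreducible_iff_irreducible_map_fraction_map).1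
    (hQ.irreducible_of_irreducible_map P₀.ρ Q hi)

/-- Extension of a place along a monic integral polynomial with irreducible reduction. -/
theorem exists_adjoin {Q : Polynomial P₀.W} (hQ : Q.Monic)
    [hi : Fact (Irreducible (Q.map P₀.ρ))] [Fact (Irreducible (Q.map (algebraMap P₀.W L₀)))] :
    ∃ P : Pl (AdjoinRoot (Q.map (algebraMap P₀.W L₀))) (AdjoinRoot (Q.map P₀.ρ)),
      PlExt P₀ P ∧ AdjoinRoot.root (Q.map (algebraMap P₀.W L₀)) ∈ P.W ∧
        P.rd (AdjoinRoot.root (Q.map (algebraMap P₀.W L₀))) = AdjoinRoot.root (Q.map P₀.ρ) := by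
  set iS : Polynomial P₀.W →+* AdjoinRoot (Q.map (algebraMap P₀.W L₀)) :=
    (AdjoinRoot.mk _).comp (Polynomial.mapRingHom (algebraMap P₀.W L₀)) with hiS
  set rS : Polynomial P₀.W →+* AdjoinRoot (Q.map P₀.ρ) :=
    (AdjoinRoot.mk _).comp (Polynomial.mapRingHom P₀.ρ) with hrS
  obtain ⟨P, h1, h2⟩ := exists_place (L := AdjoinRoot (Q.map (algebraMap P₀.W L₀)))
      (F := AdjoinRoot (Q.map P₀.ρ)) P₀ iS rS (by
    intro s hs
    rw [hiS, RingHom.comp_apply, AdjoinRoot.mk_eq_zero, Polynomial.coe_mapRingHom,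
      Polynomial.map_dvd_map _ (FaithfulSMul.algebraMap_injective P₀.W L₀) hQ] at hs
    rw [hrS, RingHom.comp_apply, AdjoinRoot.mk_eq_zero]
    exact Polynomial.map_dvd _ hs) (by
    intro b
    refine ⟨Polynomial.C b, ?_, ?_⟩
    · rw [hiS, RingHom.comp_apply, Polynomial.coe_mapRingHom, Polynomial.map_C]; rfl
    · rw [hrS, RingHom.comp_apply, Polynomial.coe_mapRingHom, Polynomial.map_C]; rfl) (by
    intro f hf
    obtain ⟨g, rfl⟩ := AdjoinRoot.mk_surjective f
    have hQL := hQ.map (algebraMap P₀.W L₀)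
    set g' := g %ₘ Q.map (algebraMap P₀.W L₀) with hg'
    have hmk : AdjoinRoot.mk (Q.map (algebraMap P₀.W L₀)) g = AdjoinRoot.mk _ g' := by
      rw [AdjoinRoot.mk_eq_mk]
      exact ⟨g /ₘ Q.map (algebraMap P₀.W L₀), by
        rw [hg']; linear_combination -Polynomial.modByMonic_add_div g (Q.map (algebraMap P₀.W L₀))⟩
    rw [hmk] at hf ⊢
    have hg0 : g' ≠ 0 := by rintro h; rw [h, map_zero] at hf; exact hf rfl
    obtain ⟨c, s, hc, hs, h⟩ := exists_scale_poly P₀ hg0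
    refine ⟨c, s, 1, hc, ?_, ?_, ?_⟩
    · rw [hrS, RingHom.comp_apply, Ne, AdjoinRoot.mk_eq_zero]
      intro hd
      have hdeg := Polynomial.degree_le_of_dvd hd hs
      have hlt : g'.degree < (Q.map (algebraMap P₀.W L₀)).degree :=
        Polynomial.degree_modByMonic_lt _ hQL
      rw [h, Polynomial.degree_C_mul hc, Polynomial.degree_map_eq_of_injective
        (FaithfulSMul.algebraMap_injective P₀.W L₀), hQ.degree_map] at hlt
      rw [hQ.degree_map] at hdeg
      have := Polynomial.degree_map_le (f := P₀.ρ) (p := s)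
      exact absurd (hdeg.trans this) (not_le.2 hlt)
    · rw [map_one]; exact one_ne_zero
    · rw [map_one, mul_one, h, map_mul]; rfl)
  refine ⟨P, h1, ?_⟩
  have := h2 Polynomial.X
  rw [hiS, hrS, RingHom.comp_apply, RingHom.comp_apply, Polynomial.coe_mapRingHom,
    Polynomial.coe_mapRingHom, Polynomial.map_X, Polynomial.map_X, AdjoinRoot.mk_X,
    AdjoinRoot.mk_X] at this
  exact this

end

/-! ### Separable quadratic extensions -/

/-- The monic quadratic polynomial `X² + b X + c`. -/
def quad {R : Type*} [CommRing R] (b c : R) : Polynomial R :=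
  Polynomial.X ^ 2 + Polynomial.C b * Polynomial.X + Polynomial.C c

lemma quad_natDegree {R : Type*} [CommRing R] [Nontrivial R] (b c : R) :
    (quad b c).natDegree = 2 := by
  unfold quad; compute_degree!

lemma quad_monic {R : Type*} [CommRing R] (b c : R) : (quad b c).Monic := by
  nontriviality R
  unfold quad; monicity!

lemma quad_map {R S : Type*} [CommRing R] [CommRing S] (f : R →+* S) (b c : R) :
    (quad b c).map f = quad (f b) (f c) := by
  simp [quad]

lemma quad_eval {R : Type*} [CommRing R] (b c x : R) :
    (quad b c).eval x = x ^ 2 + b * x + c := by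
  simp [quad]

lemma quad_eval₂ {R S : Type*} [CommRing R] [CommRing S] (f : R →+* S) (b c : R) (x : S) :
    (quad b c).eval₂ f x = x ^ 2 + f b * x + f c := by
  simp [quad]

lemma irr_quad {R K : Type*} [CommRing R] [IsDomain R] [UniqueFactorizationMonoid R] [Field K]
    [Algebra R K] [IsFractionRing R K] {a b c : R} (ha : a ≠ 0)
    (h : ∀ p : R, p ^ 2 + b * p + a * c ≠ 0) :
    Irreducible (quad (algebraMap R K b / algebraMap R K a)
      (algebraMap R K c / algebraMap R K a)) := by
  have ha' : algebraMap R K a ≠ 0 := (map_ne_zero_iff _ (IsFractionRing.injective R K)).2 ha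
  rw [(quad_monic _ _).irreducible_iff_roots_eq_zero_of_degree_le_three
    (by rw [quad_natDegree]) (by rw [quad_natDegree]; norm_num)]
  rw [Multiset.eq_zero_iff_forall_notMem]
  intro r hr
  have hr' := (Polynomial.mem_roots'.1 hr).2
  rw [Polynomial.IsRoot, quad_eval] at hr'
  set α := algebraMap R K with hα
  have h1 : (α a * r) ^ 2 + α b * (α a * r) + α a * α c = 0 := by
    have : (α a * r) ^ 2 + α b * (α a * r) + α a * α c =
        α a ^ 2 * (r ^ 2 + α b / α a * r + α c / α a) := by field_simp
    rw [this, hr', mul_zero]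
  have hInt : IsIntegral R (α a * r) := by
    refine ⟨quad b (a * c), quad_monic _ _, ?_⟩
    rw [quad_eval₂, map_mul]
    exact h1
  obtain ⟨p, hp⟩ := IsIntegrallyClosed.isIntegral_iff.1 hInt
  apply h p
  apply IsFractionRing.injective R K
  rw [map_zero, map_add, map_add, map_mul, map_mul, map_pow, hp]
  exact h1

/-- A derivation and an infinitesimal displacement of `w` define a deformation of `E = K(w)`. -/
lemma exists_der_quad_aux {κ K E : Type} [Field κ] [Field K] [Field E] [Algebra κ K] [Algebra κ E]
    [Algebra K E] [IsScalarTower κ K E] (D : Derivation κ K K) {b c : K} (h2 : (2 : K) = 0)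
    (hb : b ≠ 0) (w : E) (hw0 : w ^ 2 + algebraMap K E b * w + algebraMap K E c = 0)
    (hgen : ∀ e : E, ∃ p : Polynomial K, e = p.aeval w)
    (hlift : ∀ (φ₀ : K →ₐ[κ] DualNumber E) (t : DualNumber E),
      t ^ 2 + φ₀ b * t + φ₀ c = 0 → ∃ φ : E →ₐ[κ] DualNumber E,
        (∀ x, φ (algebraMap K E x) = φ₀ x) ∧ φ w = t) :
    ∃ D' : Derivation κ E E, ∀ x : K, D' (algebraMap K _ x) = algebraMap K _ (D x) := by
  set α := algebraMap K E with hα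
  have h2' : (2 : E) = 0 := by
    have := congrArg α h2
    rwa [map_ofNat, map_zero] at this
  have hb' : α b ≠ 0 := by simpa [hα] using hb
  set v : E := (α (D b) * w + α (D c)) / α b with hv
  have hv' : α b * v = α (D b) * w + α (D c) := by rw [hv, mul_div_cancel₀ _ hb']
  let φ₀ : K →ₐ[κ] DualNumber E := AlgHom.ofLinearMap
    { toFun := fun x => (α x, α (D x))
      map_add' := fun x y => TrivSqZeroExt.ext (map_add α x y)
        ((congrArg α (map_add D x y)).trans (map_add α _ _))
      map_smul' := fun t x => TrivSqZeroExt.ext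
        (by
          change α (t • x) = t • α x
          rw [Algebra.smul_def, Algebra.smul_def, map_mul, IsScalarTower.algebraMap_apply κ K E])
        (by
          change α (D (t • x)) = t • α (D x)
          rw [D.map_smul, Algebra.smul_def, Algebra.smul_def, map_mul,
            IsScalarTower.algebraMap_apply κ K E]) }
    (TrivSqZeroExt.ext (map_one α) ((congrArg α D.map_one_eq_zero).trans (map_zero _)))
    (fun x y => TrivSqZeroExt.ext (map_mul α x y) (by
      change α (D (x * y)) = α x * α (D y) + α (D x) * α y
      simp only [Derivation.leibniz, smul_eq_mul, map_add, map_mul]; ring))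
  obtain ⟨φ, hφ, hφw⟩ := hlift φ₀ (show DualNumber E from (w, v)) (by
    refine (congrArg (fun t : DualNumber E => t + _ + _) (pow_two _)).trans ?_
    apply TrivSqZeroExt.ext
    · change w * w + α b * w + α c = 0
      linear_combination hw0
    · change (w * v + v * w) + (α b * v + α (D b) * w) + α (D c) = 0
      linear_combination hv' + (w * v + α (D b) * w + α (D c)) * h2')
  have hfst : ∀ e, TrivSqZeroExt.fst (φ e) = algebraMap E E e := by
    intro e
    obtain ⟨p, rfl⟩ := hgen e
    induction p using Polynomial.induction_on' with
    | add p q hp hq => rw [map_add, map_add, TrivSqZeroExt.fst_add, hp, hq, map_add]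
    | monomial n x =>
      rw [Polynomial.aeval_monomial, map_mul, map_pow, TrivSqZeroExt.fst_mul,
        TrivSqZeroExt.fst_pow, hφ, hφw]
      rfl
  obtain ⟨D', hD'⟩ := exists_der_frac_of_hom φ hfst
  refine ⟨D', fun x => ?_⟩
  have := hD' (α x)
  rw [hφ] at this
  exact this

/-- Derivations extend to separable quadratic extensions. -/
lemma exists_der_quad {κ K : Type} [Field κ] [Field K] [Algebra κ K] (D : Derivation κ K K)
    {b c : K} {Q : Polynomial K} (hQ : Q = quad b c) [Fact (Irreducible Q)] (h2 : (2 : K) = 0)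
    (hb : b ≠ 0) :
    ∃ D' : Derivation κ (AdjoinRoot Q) (AdjoinRoot Q),
      ∀ x : K, D' (algebraMap K _ x) = algebraMap K _ (D x) := by
  refine exists_der_quad_aux D (b := b) (c := c) h2 hb (AdjoinRoot.root Q) ?_ ?_ ?_
  · have := AdjoinRoot.eval₂_root Q
    have h' := congrArg (Polynomial.eval₂ (AdjoinRoot.of Q) (AdjoinRoot.root Q)) hQ
    rw [this, quad_eval₂] at h'
    exact h'.symm
  · intro e
    obtain ⟨p, rfl⟩ := AdjoinRoot.mk_surjective e
    exact ⟨p, (AdjoinRoot.aeval_eq p).symm⟩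
  · intro φ₀ t ht
    have htw : Polynomial.eval₂ φ₀.toRingHom t Q = 0 := by
      have h' := congrArg (Polynomial.eval₂ φ₀.toRingHom t) hQ
      rw [quad_eval₂] at h'
      exact h'.trans ht
    exact ⟨AdjoinRoot.liftAlgHom Q φ₀ t htw, fun x => AdjoinRoot.lift_of htw,
      AdjoinRoot.lift_root htw⟩

/-! ### The quadratic form in the first fibre variable -/

/-- Index set of the independent variables: auxiliary variables, base variables and all fibre
variables but the first. -/
abbrev Tau (N r m : ℕ) : Type := Fin m ⊕ (Fin (N + 2) ⊕ Fin (r + 1))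

section
variable {N r : ℕ} (m : ℕ)

/-- Inclusion of the base variables. -/
def inc (i : Fin (N + 2)) : Tau N r m := Sum.inr (Sum.inl i)

lemma inc_injective : Function.Injective (inc (N := N) (r := r) m) := fun i j h => by
  simpa [inc] using h

/-- Matrices of polynomials on the base. -/
abbrev Mat (N r : ℕ) (A : Type) [CommRing A] : Type :=
  Fin (r + 2) → Fin (r + 2) → MvPolynomial (Fin (N + 2)) A

variable {A : Type} [CommRing A] (a : Mat N r A)

/-- A fibre variable other than the first one. -/
def zz (A : Type) [CommRing A] (j : Fin (r + 1)) : MvPolynomial (Tau N r m) A :=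
  X (Sum.inr (Sum.inr j))

/-- Leading coefficient of the quadratic form in the first fibre variable. -/
def qa : MvPolynomial (Tau N r m) A := rename (inc m) (a 0 0)

/-- Linear coefficient of the quadratic form in the first fibre variable. -/
def qb : MvPolynomial (Tau N r m) A :=
  ∑ j : Fin (r + 1), rename (inc m) (a 0 j.succ + a j.succ 0) * zz m A j

/-- Constant coefficient of the quadratic form in the first fibre variable. -/
def qc : MvPolynomial (Tau N r m) A :=
  ∑ i : Fin (r + 1), ∑ j : Fin (r + 1),
    rename (inc m) (a i.succ j.succ) * zz m A i * zz m A j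

section
variable {B : Type} [CommRing B] (f : A →+* B)

lemma map_qa : map f (qa m a) = qa m (fun i j => map f (a i j)) := by
  simp [qa, map_rename]

lemma map_qb : map f (qb m a) = qb m (fun i j => map f (a i j)) := by
  simp [qb, map_rename, zz]

lemma map_qc : map f (qc m a) = qc m (fun i j => map f (a i j)) := by
  simp [qc, map_rename, zz]
end

/-- Evaluation at a point of the fibre space. -/
lemma eval_q {S : Type*} [CommRing S] (φ : A →+* S) (y : Fin m → S) (x : Fin (N + 2) → S)
    (z : Fin (r + 1) → S) :
    eval₂ φ (Sum.elim y (Sum.elim x z)) (qa m a) = eval₂ φ x (a 0 0) ∧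
    eval₂ φ (Sum.elim y (Sum.elim x z)) (qb m a) =
      ∑ j : Fin (r + 1), (eval₂ φ x (a 0 j.succ) + eval₂ φ x (a j.succ 0)) * z j ∧
    eval₂ φ (Sum.elim y (Sum.elim x z)) (qc m a) =
      ∑ i : Fin (r + 1), ∑ j : Fin (r + 1), eval₂ φ x (a i.succ j.succ) * z i * z j := by
  have h : ∀ p : MvPolynomial (Fin (N + 2)) A,
      eval₂ φ (Sum.elim y (Sum.elim x z)) (rename (inc m) p) = eval₂ φ x p := by
    intro p
    rw [eval₂_rename]; rfl
  refine ⟨h _, ?_, ?_⟩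
  · simp only [qb, eval₂_sum, eval₂_mul, h, eval₂_add, zz, eval₂_X, Sum.elim_inr]
  · simp only [qc, eval₂_sum, eval₂_mul, h, eval₂_add, zz, eval₂_X, Sum.elim_inr]

/-- The generic fibre of the special quadric bundle has no point with the first coordinate
rational over the field of the other variables. -/
lemma no_root (s : Shape N (Fin (r + 2))) (hs : s.j0 = 0) (κ : Type) [Field κ] [CharP κ 2]
    (p : MvPolynomial (Tau N r m) κ) :
    p ^ 2 + qb m (s.a₀ κ) * p + qa m (s.a₀ κ) * qc m (s.a₀ κ) ≠ 0 := by
  classical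
  intro h
  have hj2 : s.j2 ≠ 0 := by rw [← hs]; exact s.j0_ne_j2.symm
  set k := s.j2.pred hj2 with hk
  have hk' : k.succ = s.j2 := Fin.succ_pred _ _
  have h1 := congrArg (eval₂Hom (C : κ →+* MvPolynomial (Fin (N + 2)) κ)
    (Sum.elim (0 : Fin m → MvPolynomial (Fin (N + 2)) κ)
    (Sum.elim X (Pi.single k 1)))) h
  obtain ⟨e1, e2, e3⟩ := eval_q m (s.a₀ κ) (C : κ →+* MvPolynomial (Fin (N + 2)) κ) 0 X
    (Pi.single k 1)
  rw [map_zero, map_add, map_add, map_mul, map_mul, map_pow] at h1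
  simp only [coe_eval₂Hom] at h1
  rw [e1, e2, e3] at h1
  simp only [eval₂_eta] at h1
  simp only [Pi.single_apply, mul_ite, mul_one, mul_zero, Finset.sum_ite_eq', Finset.mem_univ,
    if_true] at h1
  rw [hk'] at h1
  have b1 : s.a₀ κ 0 s.j2 = 0 := by
    rw [Shape.a₀, if_neg (by rw [← hs]; exact s.j0_ne_j2), if_neg]
    rintro ⟨-, h⟩; exact s.j1_ne_j2 h.symm
  have b2 : s.a₀ κ s.j2 0 = 0 := by
    rw [Shape.a₀, if_neg hj2, if_neg]
    rintro ⟨h, -⟩; exact s.j0_ne_j2 h.symm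
  have b3 : s.a₀ κ s.j2 s.j2 = s.diag κ s.j2 := by rw [Shape.a₀, if_pos rfl]
  have b4 : s.a₀ κ 0 0 = s.diag κ s.j0 := by rw [Shape.a₀, if_pos rfl, hs]
  rw [b1, b2, b3, b4, add_zero, zero_mul, add_zero] at h1
  refine s.diag_mul_not_sq κ (eval₂ C (Sum.elim 0 (Sum.elim X (Pi.single k 1))) p) ?_
  have := CharTwo.add_self_eq_zero (s.diag κ s.j0 * s.diag κ s.j2)
  linear_combination h1 - this

/-- The quadratic form as a polynomial in the first fibre variable. -/
def qX : Polynomial (MvPolynomial (Tau N r m) A) :=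
  Polynomial.C (qa m a) * Polynomial.X ^ 2 + Polynomial.C (qb m a) * Polynomial.X +
    Polynomial.C (qc m a)

/-- The quadratic form as a polynomial in base and fibre variables. -/
def qA : MvPolynomial (Fin (N + 2) ⊕ Fin (r + 2)) A :=
  ∑ i, ∑ j, rename Sum.inl (a i j) * X (Sum.inr i) * X (Sum.inr j)

/-- A nonconstant polynomial in at least two variables has a nonzero root. -/
lemma exists_root_of_not_unit {d : MvPolynomial (Fin (N + 2)) ℂ} (hd : ¬ IsUnit d) (hd0 : d ≠ 0) :
    ∃ c : Fin (N + 2) → ℂ, c ≠ 0 ∧ eval c d = 0 := by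
  by_contra hcon
  push Not at hcon
  have hX : ∀ i : Fin (N + 2), ∃ k : ℕ, d ∣ X i ^ k := by
    intro i
    have : (X i : MvPolynomial (Fin (N + 2)) ℂ) ∈ (Ideal.span {d}).radical := by
      rw [← vanishingIdeal_zeroLocus_eq_radical (K := ℂ), mem_vanishingIdeal_iff]
      intro x hx
      have hx' := mem_zeroLocus_iff.1 hx d (Ideal.mem_span_singleton_self d)
      rw [aeval_X]
      by_contra hxi
      exact hcon x (by rintro rfl; exact hxi rfl) (by simpa [aeval_eq_eval] using hx')
    obtain ⟨k, hk⟩ := this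
    exact ⟨k, Ideal.mem_span_singleton.1 hk⟩
  obtain ⟨k0, h0⟩ := hX 0
  obtain ⟨k1, h1⟩ := hX 1
  rw [X_pow_eq_monomial, dvd_monomial_one_iff_exists] at h0 h1
  obtain ⟨m0, u0, hm0, hu0, e0⟩ := h0
  obtain ⟨m1, u1, hm1, hu1, e1⟩ := h1
  have hm : m0 = m1 := by
    rw [e0] at e1
    rcases (monomial_eq_monomial_iff _ _ _ _).1 e1 with h | h
    · exact h.1
    · exact absurd h.1 hu0.ne_zero
  have hz : m0 = 0 := by
    ext i
    by_cases hi : i = 0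
    · have := hm1 i
      rw [Finsupp.single_apply, if_neg (by rw [hi]; exact one_ne_zero), ← hm] at this
      simpa using this
    · have := hm0 i
      rw [Finsupp.single_apply, if_neg (Ne.symm hi)] at this
      simpa using this
  apply hd
  rw [e0, hz]
  exact hu0.map C

/-- Flatness makes the equation primitive: a common factor divides `a 0 0`, so it involves base
variables only, and at a nonzero root of it the whole matrix would vanish. -/
lemma qX_primitive (a : Mat N r ℂ) (h00 : a 0 0 ≠ 0) (htri : ∀ i j, j < i → a i j = 0)
    (hflat : ∀ c : Fin (N + 2) → ℂ, c ≠ 0 → ∃ i j, eval c (a i j) ≠ 0) :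
    (qX m a).IsPrimitive := by
  classical
  rw [Polynomial.isPrimitive_iff_isUnit_of_C_dvd]
  intro d hd
  rw [Polynomial.C_dvd_iff_dvd_coeff] at hd
  have ha : d ∣ qa m a := by simpa [qX, Polynomial.coeff_X, Polynomial.coeff_C] using hd 2
  have hb : d ∣ qb m a := by simpa [qX, Polynomial.coeff_X, Polynomial.coeff_C] using hd 1
  have hc : d ∣ qc m a := by simpa [qX, Polynomial.coeff_X, Polynomial.coeff_C] using hd 0
  have ha0 : qa m a ≠ 0 := by
    rw [qa, Ne, map_eq_zero_iff _ (rename_injective _ (inc_injective m))]; exact h00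
  obtain ⟨d', rfl⟩ : ∃ d', rename (inc m) d' = d := by
    apply exists_rename_eq_of_vars_subset_range _ _ (inc_injective m)
    obtain ⟨e, he⟩ := ha
    have hd0 : d ≠ 0 := by rintro rfl; rw [zero_mul] at he; exact ha0 he
    have he0 : e ≠ 0 := by rintro rfl; rw [mul_zero] at he; exact ha0 he
    intro v hv
    have hv' : v ∈ (qa m a).vars := by
      rw [mem_vars_iff_degreeOf_ne_zero] at *
      rw [he, degreeOf_mul_eq hd0 he0]
      have : degreeOf v d ≠ 0 := mem_vars_iff_degreeOf_ne_zero.1 hv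
      omega
    have := vars_rename (inc m) (a 0 0) hv'
    obtain ⟨i, -, hi⟩ := Finset.mem_image.1 this
    exact ⟨i, hi⟩
  by_contra hu
  have hd0 : d' ≠ 0 := by
    rintro rfl
    rw [map_zero, zero_dvd_iff] at ha
    exact ha0 ha
  obtain ⟨c, hc0, hcd⟩ := exists_root_of_not_unit (d := d') (fun h => hu (h.map _)) hd0
  have hz : ∀ (z : Fin (r + 1) → ℂ) {p : MvPolynomial (Tau N r m) ℂ}, rename (inc m) d' ∣ p →
      eval₂ (RingHom.id ℂ) (Sum.elim 0 (Sum.elim c z)) p = 0 := by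
    rintro z p ⟨e, rfl⟩
    rw [eval₂_mul, eval₂_rename]
    have : (Sum.elim (0 : Fin m → ℂ) (Sum.elim c z)) ∘ inc m = c := rfl
    rw [this, eval₂_id, hcd, zero_mul]
  have hq := fun z => eval_q m a (RingHom.id ℂ) 0 c z
  simp only [eval₂_id] at hq
  have f0 : eval c (a 0 0) = 0 := by rw [← (hq 0).1]; exact hz 0 ha
  have f1 : ∀ j : Fin (r + 1), eval c (a 0 j.succ) = 0 := by
    intro j
    have h1 := (hq (Pi.single j 1)).2.1
    have h2 := hz (Pi.single j 1) hb
    rw [eval₂_id] at h2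
    rw [h2] at h1
    simpa [Pi.single_apply, htri j.succ 0 (Fin.succ_pos j)] using h1.symm
  have f2 : ∀ i j : Fin (r + 1), ∀ z : Fin (r + 1) → ℂ,
      ∑ i : Fin (r + 1), ∑ j : Fin (r + 1), eval c (a i.succ j.succ) * z i * z j = 0 := by
    intro i j z
    rw [← (hq z).2.2]
    have h2 := hz z hc
    rwa [eval₂_id] at h2
  have f3 : ∀ i : Fin (r + 1), eval c (a i.succ i.succ) = 0 := by
    intro i
    simpa [Pi.single_apply] using f2 i i (Pi.single i 1)
  have f4 : ∀ i j : Fin (r + 1), i < j → eval c (a i.succ j.succ) = 0 := by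
    intro i j hij
    have h1 := f2 i j (Pi.single i 1 + Pi.single j 1)
    simp only [Pi.add_apply, Pi.single_apply, mul_add, add_mul, Finset.sum_add_distrib, mul_ite,
      mul_one, mul_zero, ite_mul, zero_mul, Finset.sum_ite_eq', Finset.mem_univ, if_true, f3,
      Finset.sum_const_zero] at h1
    simpa [f3, htri j.succ i.succ (Fin.succ_lt_succ_iff.2 hij)] using h1
  obtain ⟨i, j, hij⟩ := hflat c hc0
  apply hij
  rcases lt_trichotomy i j with h | h | h
  · induction i using Fin.cases with
    | zero => rw [← Fin.succ_pred j h.ne']; exact f1 _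
    | succ i =>
      induction j using Fin.cases with
      | zero => exact absurd h (Fin.not_lt_zero _)
      | succ j => exact f4 i j (Fin.succ_lt_succ_iff.1 h)
  · subst h
    induction i using Fin.cases with
    | zero => exact f0
    | succ i => exact f3 i
  · rw [htri i j h, map_zero]

end

/-! ### The generic point of the quadric bundle -/

section
variable {N r : ℕ} (m : ℕ)

/-- The point of the total space with coordinates `x`, `z` and auxiliary coordinates `y`. -/
def evTot {A E : Type} [CommRing A] [CommRing E] (φ : A →+* E) (x : Fin (N + 2) → E)
    (z : Fin (r + 2) → E) (y : Fin m → E) :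
    MvPolynomial (Fin m) (MvPolynomial (Fin (N + 2) ⊕ Fin (r + 2)) A) →+* E :=
  eval₂Hom (eval₂Hom φ (Sum.elim x z)) y

/-- Splitting off the first fibre variable. -/
def split (A : Type) [CommRing A] :
    MvPolynomial (Fin m) (MvPolynomial (Fin (N + 2) ⊕ Fin (r + 2)) A) →+*
      Polynomial (MvPolynomial (Tau N r m) A) :=
  evTot m (Polynomial.C.comp C) (fun i => Polynomial.C (X (inc m i)))
    (Fin.cases Polynomial.X fun j => Polynomial.C (zz m A j)) fun i => Polynomial.C (X (Sum.inl i))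

/-- The inverse of `split`. -/
def unsplit (A : Type) [CommRing A] : Polynomial (MvPolynomial (Tau N r m) A) →+*
    MvPolynomial (Fin m) (MvPolynomial (Fin (N + 2) ⊕ Fin (r + 2)) A) :=
  Polynomial.eval₂RingHom (eval₂Hom (C.comp C) (Sum.elim X (Sum.elim (fun i => C (X (Sum.inl i)))
    fun j => C (X (Sum.inr j.succ))))) (C (X (Sum.inr 0)))

lemma unsplit_split (A : Type) [CommRing A]
    (f : MvPolynomial (Fin m) (MvPolynomial (Fin (N + 2) ⊕ Fin (r + 2)) A)) :
    unsplit m A (split m A f) = f := by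
  have : (unsplit m A).comp (split (N := N) (r := r) m A) = RingHom.id _ := by
    refine ringHom_ext (fun p => ?_) fun i => ?_
    · have h2 : ((unsplit m A).comp (split (N := N) (r := r) m A)).comp C = C := by
        refine ringHom_ext (fun c => ?_) fun i => ?_
        · simp [unsplit, split, evTot]
        · rcases i with i | i
          · simp [unsplit, split, evTot, inc]
          · induction i using Fin.cases <;> simp [unsplit, split, evTot, zz]
      exact congrArg (fun g => g p) (congrArg DFunLike.coe h2)
    · simp [unsplit, split, evTot]
  exact congrArg (fun g => g f) (congrArg DFunLike.coe this)

lemma evTot_qA {A E : Type} [CommRing A] [CommRing E] (φ : A →+* E) (x : Fin (N + 2) → E)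
    (z : Fin (r + 2) → E) (y : Fin m → E) (a : Mat N r A) :
    evTot m φ x z y (C (qA a)) = qf φ a x z := by
  rw [evTot, coe_eval₂Hom, eval₂_C, qA, map_sum]
  refine Finset.sum_congr rfl fun i _ => ?_
  rw [map_sum]
  refine Finset.sum_congr rfl fun j _ => ?_
  simp only [coe_eval₂Hom, eval₂_mul, eval₂_rename, eval₂_X, Sum.elim_inr]
  rfl

lemma qf_succ {A E : Type} [CommRing A] [CommRing E] (φ : A →+* E) (x : Fin (N + 2) → E)
    (z : Fin (r + 2) → E) (a : Mat N r A) :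
    qf φ a x z = eval₂ φ x (a 0 0) * z 0 ^ 2 +
      (∑ j : Fin (r + 1), (eval₂ φ x (a 0 j.succ) + eval₂ φ x (a j.succ 0)) * z j.succ) * z 0 +
      ∑ i : Fin (r + 1), ∑ j : Fin (r + 1),
        eval₂ φ x (a i.succ j.succ) * z i.succ * z j.succ := by
  rw [qf, Fin.sum_univ_succ, Fin.sum_univ_succ]
  simp only [Fin.sum_univ_succ (n := r + 1), Finset.sum_add_distrib, add_mul, Finset.sum_mul]
  have : ∑ i : Fin (r + 1), eval₂ φ x (a 0 i.succ) * z 0 * z i.succ =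
      ∑ i : Fin (r + 1), eval₂ φ x (a 0 i.succ) * z i.succ * z 0 :=
    Finset.sum_congr rfl fun i _ => by ring
  rw [this]
  ring

lemma qf_split {A E : Type} [CommRing A] [CommRing E] (g : MvPolynomial (Tau N r m) A →+* E)
    (w : E) (a : Mat N r A) :
    qf (g.comp C) a (fun i => g (X (inc m i))) (Fin.cases w fun j => g (zz m A j)) =
      g (qa m a) * w ^ 2 + g (qb m a) * w + g (qc m a) := by
  rw [qf_succ]
  have h : ∀ p, eval₂ (g.comp C) (fun i => g (X (inc m i))) p = g (rename (inc m) p) := by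
    intro p
    induction p using MvPolynomial.induction_on with
    | C c => simp
    | add p q hp hq => rw [eval₂_add, hp, hq, map_add, map_add]
    | mul_X p i hp => rw [eval₂_mul, hp, eval₂_X, map_mul, map_mul, rename_X]
  simp only [h, Fin.cases_zero, Fin.cases_succ, qa, qb, qc, map_sum, map_mul, map_add]

lemma split_qA (A : Type) [CommRing A] (a : Mat N r A) : split m A (C (qA a)) = qX m a := by
  rw [split, evTot_qA]
  exact qf_split m Polynomial.C Polynomial.X a

/-- The kernel of evaluation at the generic point of the quadric bundle is generated by its
equation. -/
theorem ker_dvd {K E : Type} [Field K] [Field E] [Algebra (MvPolynomial (Tau N r m) ℂ) K]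
    [IsFractionRing (MvPolynomial (Tau N r m) ℂ) K] [Algebra K E] (a : Mat N r ℂ)
    (hprim : (qX m a).IsPrimitive) (h00 : a 0 0 ≠ 0) (w : E)
    (hw : ∀ p : Polynomial K, p.aeval w = 0 →
      quad (algebraMap (MvPolynomial (Tau N r m) ℂ) K (qb m a) / algebraMap _ K (qa m a))
        (algebraMap _ K (qc m a) / algebraMap _ K (qa m a)) ∣ p)
    (g : MvPolynomial (Tau N r m) ℂ →+* E) (hg : ∀ p, g p = algebraMap K E (algebraMap _ K p))
    (f : MvPolynomial (Fin m) (MvPolynomial (Fin (N + 2) ⊕ Fin (r + 2)) ℂ))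
    (hf : evTot m (g.comp C) (fun i => g (X (inc m i))) (Fin.cases w fun j => g (zz m ℂ j))
      (fun i => g (X (Sum.inl i))) f = 0) : C (qA a) ∣ f := by
  have ha0 : algebraMap (MvPolynomial (Tau N r m) ℂ) K (qa m a) ≠ 0 := by
    rw [Ne, map_eq_zero_iff _ (IsFractionRing.injective _ K), qa,
      map_eq_zero_iff _ (rename_injective _ (inc_injective m))]
    exact h00
  have h1 : evTot m (g.comp C) (fun i => g (X (inc m i))) (Fin.cases w fun j => g (zz m ℂ j))
      (fun i => g (X (Sum.inl i))) = (Polynomial.eval₂RingHom g w).comp (split m ℂ) := by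
    refine ringHom_ext (fun p => ?_) fun i => ?_
    · have h2 : (evTot m (g.comp C) (fun i => g (X (inc m i)))
          (Fin.cases w fun j => g (zz m ℂ j)) (fun i => g (X (Sum.inl i)))).comp C =
          ((Polynomial.eval₂RingHom g w).comp (split m ℂ)).comp C := by
        refine ringHom_ext (fun c => ?_) fun i => ?_
        · simp [split, evTot]
        · rcases i with i | i
          · simp [split, evTot]
          · induction i using Fin.cases <;> simp [split, evTot]
      exact congrArg (fun g => g p) (congrArg DFunLike.coe h2)
    · simp [split, evTot]
  rw [h1, RingHom.comp_apply, Polynomial.coe_eval₂RingHom] at hf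
  have h2 : Polynomial.aeval w ((split m ℂ f).map (algebraMap _ K)) = 0 := by
    have h5 : (algebraMap K E).comp (algebraMap (MvPolynomial (Tau N r m) ℂ) K) = g :=
      RingHom.ext fun p => (hg p).symm
    rw [Polynomial.aeval_def, Polynomial.eval₂_map, h5, hf]
  have h3 := hw _ h2
  have h4 : (qX m a).map (algebraMap _ K) ∣ (split m ℂ f).map (algebraMap _ K) := by
    have h5 : (qX m a).map (algebraMap _ K) = Polynomial.C (algebraMap _ K (qa m a)) *
        quad (algebraMap (MvPolynomial (Tau N r m) ℂ) K (qb m a) / algebraMap _ K (qa m a))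
        (algebraMap _ K (qc m a) / algebraMap _ K (qa m a)) := by
      simp only [qX, quad, Polynomial.map_add, Polynomial.map_mul, Polynomial.map_C,
        Polynomial.map_pow, Polynomial.map_X, mul_add, ← mul_assoc, ← Polynomial.C_mul]
      rw [mul_div_cancel₀ _ ha0, mul_div_cancel₀ _ ha0]
    rw [h5]
    exact (Polynomial.isUnit_C.2 ha0.isUnit).mul_left_dvd.2 h3
  -- the Gauss lemma for the primitive polynomial `qX`
  obtain ⟨q, hq⟩ := hprim.dvd_of_fraction_map_dvd_fraction_map h4
  refine ⟨unsplit m ℂ q, ?_⟩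
  rw [← unsplit_split m ℂ f, hq, map_mul, ← split_qA, unsplit_split]

end

/-! ### Models -/

/-- The residue coefficient does not vanish at independent variables with the dual derivations. -/
lemma fval_ne_zero_of_vars {κ F : Type} [Field κ] [Field F] [Algebra κ F] {N : ℕ}
    (D : Fin (N + 1) → Derivation κ F F) (x : Fin (N + 2) → F)
    (hinj : ∀ P : MvPolynomial (Fin (N + 2)) κ, aeval x P = 0 → P = 0)
    (hD0 : ∀ i, D i (x 0) = 0)
    (hD : ∀ i j, D i (x (Fin.succ j)) = if i = j then 1 else 0) : fval D x ≠ 0 := by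
  have hg : Gen κ x := fun e P hP _ h => hP (hinj P h)
  have hx := hg.ne_zero
  rw [fval_of_gen hg, Theta]
  have hj : jac D x = fun j i => if i = j then x 0 else 0 := by
    funext j i
    rw [jac, hD0, hD]
    split_ifs <;> simp
  rw [hj, perm_diag (fun _ => x 0)]
  refine div_ne_zero (mul_ne_zero (Finset.prod_ne_zero_iff.2 fun _ _ => hx 0) ?_)
    (mul_ne_zero (hg.gG_ne_zero zero_ne_lastIx)
      (Finset.prod_ne_zero_iff.2 fun j _ => mul_ne_zero (hx _) (hx _)))
  rw [gB]
  exact mul_ne_zero (mul_ne_zero (hx _) (hx _))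
    (Finset.prod_ne_zero_iff.2 fun j _ => pow_ne_zero _ (hx _))

/-- A field `L` over `ℂ` containing a generic point `(x, z, y)` of (the cone over) the quadric
bundle with matrix `a`, times an affine space, together with a place `P` of `L` extending `P₀`
at whose residue field the residue coefficient of the reduction of `x` does not vanish. -/
structure Model {κ : Type} [Field κ] {N r : ℕ} (m : ℕ) (P₀ : Pl ℂ κ) (a : Mat N r P₀.W) where
  /-- the big field -/
  L : Type
  /-- its residue field -/
  F : Type
  [fL : Field L]
  [fF : Field F]
  [aL : Algebra ℂ L]
  [aF : Algebra κ F]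
  /-- the place -/
  P : Pl L F
  ext : PlExt P₀ P
  /-- base coordinates -/
  x : Fin (N + 2) → L
  /-- fibre coordinates -/
  z : Fin (r + 2) → L
  /-- auxiliary coordinates -/
  y : Fin m → L
  hx : ∀ i, x i ∈ P.W
  hz : z ≠ 0
  /-- derivations of the residue field -/
  D : Fin (N + 1) → Derivation κ F F
  hD : fval D (fun i => P.rd (x i)) ≠ 0
  qf_eq : qf (algebraMap ℂ L) (fun i j => map (algebraMap P₀.W ℂ) (a i j)) x z = 0
  ker : ∀ f, evTot m (algebraMap ℂ L) x z y f = 0 →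
    C (qA fun i j => map (algebraMap P₀.W ℂ) (a i j)) ∣ f

attribute [instance] Model.fL Model.fF Model.aL Model.aF

section
variable {κ : Type} [Field κ] [CharP κ 2] {N r : ℕ} (m : ℕ) (P₀ : Pl ℂ κ)

lemma qb_ne_zero (s : Shape N (Fin (r + 2))) (hs : s.j0 = 0) : qb m (s.a₀ κ) ≠ 0 := by
  classical
  intro h
  have hj1 : s.j1 ≠ 0 := by rw [← hs]; exact s.j0_ne_j1.symm
  obtain ⟨k, hk⟩ := Fin.exists_succ_eq.2 hj1
  obtain ⟨-, e2, -⟩ := eval_q m (s.a₀ κ) (C : κ →+* MvPolynomial (Fin (N + 2)) κ) 0 X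
    (Pi.single k 1)
  rw [h, eval₂_zero] at e2
  simp only [eval₂_eta, Pi.single_apply, mul_ite, mul_one, mul_zero, Finset.sum_ite_eq',
    Finset.mem_univ, if_true] at e2
  rw [hk, Shape.a₀, if_neg (Ne.symm hj1), if_pos ⟨hs.symm, rfl⟩, Shape.a₀, if_neg hj1,
    if_neg (fun h => s.j0_ne_j1 h.1.symm), add_zero] at e2
  exact s.off_ne_zero κ e2.symm

/-- The field is obtained from the rational function field in all variables but the first fibre
variable, with the Gauss extension of `P₀`, by adjoining a root of the quadratic equation for the
first fibre variable.  The equation is irreducible because its reduction is. -/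
theorem exists_model (s : Shape N (Fin (r + 2))) (hs : s.j0 = 0) (a : Mat N r P₀.W)
    (ha : ∀ i j, map P₀.ρ (a i j) = s.a₀ κ i j) (htri : ∀ i j, j < i → a i j = 0)
    (hflat : ∀ c : Fin (N + 2) → ℂ, c ≠ 0 →
      ∃ i j, eval c (map (algebraMap P₀.W ℂ) (a i j)) ≠ 0) : Nonempty (Model m P₀ a) := by
  classical
  obtain ⟨P₁, hP₁, hι⟩ := exists_gauss P₀ (Tau N r m)
  set aC : Mat N r ℂ := fun i j => map (algebraMap P₀.W ℂ) (a i j) with haC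
  have haκ : (fun i j => map P₀.ρ (a i j)) = s.a₀ κ := by funext i j; exact ha i j
  let α := algebraMap (MvPolynomial (Tau N r m) ℂ) (FractionRing (MvPolynomial (Tau N r m) ℂ))
  let β := algebraMap (MvPolynomial (Tau N r m) κ) (FractionRing (MvPolynomial (Tau N r m) κ))
  let ι : MvPolynomial (Tau N r m) P₀.W →+* P₁.W :=
    (α.comp (map (algebraMap P₀.W ℂ))).codRestrict P₁.W.toSubring fun q => (hι q).1
  have hιc : ∀ q, algebraMap P₁.W _ (ι q) = α (map (algebraMap P₀.W ℂ) q) := fun q => rfl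
  have hιρ : ∀ q, P₁.ρ (ι q) = β (map P₀.ρ q) := fun q => by
    rw [← P₁.rd_coe]; exact (hι q).2
  have hβ : Function.Injective β := IsFractionRing.injective _ _
  have hα : Function.Injective α := IsFractionRing.injective _ _
  have ha00 : s.a₀ κ 0 0 ≠ 0 := by rw [Shape.a₀, if_pos rfl]; exact s.diag_ne_zero κ 0
  have hqaκ : qa m (s.a₀ κ) ≠ 0 := by
    rw [qa, Ne, map_eq_zero_iff _ (rename_injective _ (inc_injective m))]; exact ha00
  obtain ⟨u, hu⟩ : IsUnit (ι (qa m a)) := by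
    apply P₁.hρ
    rw [hιρ, map_qa, haκ]
    exact (map_ne_zero_iff _ hβ).2 hqaκ
  have haC00 : aC 0 0 ≠ 0 := by
    intro h
    apply ha00
    rw [← ha]
    have : a 0 0 = 0 := map_injective _ (IsFractionRing.injective P₀.W ℂ) (by rw [map_zero]; exact h)
    rw [this, map_zero]
  let Q : Polynomial P₁.W := quad (ι (qb m a) * (u⁻¹ : P₁.Wˣ)) (ι (qc m a) * (u⁻¹ : P₁.Wˣ))
  have hQ : Q.Monic := quad_monic _ _
  have hui : ∀ {T : Type} [Field T] (f : P₁.W →+* T), f ((u⁻¹ : P₁.Wˣ) : P₁.W) = (f (ι (qa m a)))⁻¹ := by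
    intro T _ f
    apply eq_inv_of_mul_eq_one_left
    rw [← hu, ← map_mul, Units.inv_mul, map_one]
  have hQρ : Q.map P₁.ρ = quad (β (qb m (s.a₀ κ)) / β (qa m (s.a₀ κ)))
      (β (qc m (s.a₀ κ)) / β (qa m (s.a₀ κ))) := by
    rw [quad_map, map_mul, map_mul, hui, hιρ, hιρ, hιρ, map_qa, map_qb, map_qc, haκ,
      div_eq_mul_inv, div_eq_mul_inv]
  have hQα : Q.map (algebraMap P₁.W (FractionRing (MvPolynomial (Tau N r m) ℂ))) = quad (α (qb m aC) / α (qa m aC))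
      (α (qc m aC) / α (qa m aC)) := by
    rw [quad_map, map_mul, map_mul, hui, hιc, hιc, hιc, map_qa, map_qb, map_qc,
      div_eq_mul_inv, div_eq_mul_inv]
  haveI f1 : Fact (Irreducible (Q.map P₁.ρ)) := ⟨by
    rw [hQρ]; exact irr_quad hqaκ (no_root m s hs κ)⟩
  haveI f2 : Fact (Irreducible (Q.map (algebraMap P₁.W (FractionRing (MvPolynomial (Tau N r m) ℂ))))) := ⟨irr_of_red hQ f1.out⟩
  obtain ⟨P, hP, hroot, -⟩ := exists_adjoin hQ
  have h2 : (2 : FractionRing (MvPolynomial (Tau N r m) κ)) = 0 := by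
    haveI : CharP (FractionRing (MvPolynomial (Tau N r m) κ)) 2 := inferInstance
    exact CharTwo.two_eq_zero
  have hb : β (qb m (s.a₀ κ)) / β (qa m (s.a₀ κ)) ≠ 0 :=
    div_ne_zero ((map_ne_zero_iff _ hβ).2 (qb_ne_zero m s hs)) ((map_ne_zero_iff _ hβ).2 hqaκ)
  -- the partial derivatives extend to the quadratic extension, which is separable as `qb ≠ 0`
  have hDex : ∀ i : Fin (N + 1), ∃ D : Derivation κ (AdjoinRoot (Q.map P₁.ρ))
      (AdjoinRoot (Q.map P₁.ρ)), ∀ p : MvPolynomial (Tau N r m) κ,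
        D (algebraMap _ _ (β p)) = algebraMap _ _ (β (pderiv (inc m i.succ) p)) := by
    intro i
    obtain ⟨D₁, hD₁⟩ := exists_der_frac (κ := κ)
      (K := FractionRing (MvPolynomial (Tau N r m) κ)) (pderiv (inc (N := N) (r := r) m i.succ))
    obtain ⟨D₂, hD₂⟩ := exists_der_quad D₁ hQρ h2 hb
    exact ⟨D₂, fun p => by rw [hD₂, hD₁]⟩
  choose D hD using hDex
  let g : MvPolynomial (Tau N r m) ℂ →+* AdjoinRoot (Q.map (algebraMap P₁.W (FractionRing (MvPolynomial (Tau N r m) ℂ)))) :=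
    (algebraMap _ _).comp α
  have hg : Function.Injective g := by
    intro p q h
    exact hα ((algebraMap (FractionRing (MvPolynomial (Tau N r m) ℂ)) _).injective h)
  let gκ : MvPolynomial (Tau N r m) κ →+* AdjoinRoot (Q.map P₁.ρ) := (algebraMap _ _).comp β
  have hgκ : Function.Injective gκ := by
    intro p q h
    exact hβ ((algebraMap (FractionRing (MvPolynomial (Tau N r m) κ)) _).injective h)
  have hgC : g.comp C = algebraMap ℂ _ := rfl
  have hgX : ∀ i, g (X i) ∈ P.W ∧ P.rd (g (X i)) = gκ (X i) := by
    intro i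
    have h := hι (X i)
    rw [map_X, map_X] at h
    exact ⟨hP.mem _ h.1, (hP.rd_eq _ h.1).trans (congrArg _ h.2)⟩
  refine ⟨{
    L := AdjoinRoot (Q.map (algebraMap P₁.W (FractionRing (MvPolynomial (Tau N r m) ℂ))))
    F := AdjoinRoot (Q.map P₁.ρ)
    P := P
    ext := hP₁.trans hP
    x := fun i => g (X (inc m i))
    z := Fin.cases (AdjoinRoot.root _) fun j => g (zz m ℂ j)
    y := fun i => g (X (Sum.inl i))
    hx := fun i => (hgX _).1
    hz := fun h => X_ne_zero (R := ℂ) (Sum.inr (Sum.inr 0) : Tau N r m)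
      (hg (((congrFun h (Fin.succ 0) : _)).trans (map_zero g).symm))
    D := D
    hD := ?_
    qf_eq := ?_
    ker := ?_ }⟩
  · have hx : (fun i => P.rd (g (X (inc m i)))) = fun i => gκ (X (inc m i)) :=
      funext fun i => (hgX _).2
    rw [hx]
    refine fval_ne_zero_of_vars _ _ ?_ ?_ ?_
    · intro p hp
      have h3 : aeval (fun i => gκ (X (inc m i))) p = gκ (rename (inc m) p) := by
        clear hp
        induction p using MvPolynomial.induction_on with
        | C c => rw [rename_C, aeval_C]; rfl
        | add p q hp hq => rw [map_add, map_add, map_add, hp, hq]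
        | mul_X p i hp => rw [map_mul, map_mul, map_mul, hp, aeval_X, rename_X]
      rw [h3, map_eq_zero_iff _ hgκ, map_eq_zero_iff _ (rename_injective _ (inc_injective m))] at hp
      exact hp
    · intro i
      refine (hD i _).trans ?_
      rw [pderiv_X_of_ne, map_zero, map_zero]
      exact fun h => Fin.succ_ne_zero _ (inc_injective m h).symm
    · intro i j
      refine (hD i _).trans ?_
      split_ifs with hij
      · rw [hij, pderiv_X_self, map_one, map_one]
      · rw [pderiv_X_of_ne, map_zero, map_zero]
        exact fun h => hij (Fin.succ_injective _ (inc_injective m h)).symm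
  · rw [← hgC, qf_split]
    have h3 := AdjoinRoot.eval₂_root
      (Q.map (algebraMap P₁.W (FractionRing (MvPolynomial (Tau N r m) ℂ))))
    have h4 := congrArg (Polynomial.eval₂ (AdjoinRoot.of (Q.map (algebraMap P₁.W _)))
      (AdjoinRoot.root (Q.map (algebraMap P₁.W _)))) hQα
    rw [h3, quad_eval₂] at h4
    have h5 : α (qa m aC) ≠ 0 := by
      rw [Ne, map_eq_zero_iff _ hα, qa,
        map_eq_zero_iff _ (rename_injective _ (inc_injective m))]
      exact haC00
    have h6 := congrArg (fun t => g (qa m aC) * t) h4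
    simp only [mul_zero, mul_add] at h6
    have h7 : ∀ t, g (qa m aC) * AdjoinRoot.of _ (α t / α (qa m aC)) = g t := by
      intro t
      change AdjoinRoot.of _ (α (qa m aC)) * _ = AdjoinRoot.of _ (α t)
      rw [← map_mul, mul_div_cancel₀ _ h5]
    rw [← mul_assoc, h7, h7] at h6
    exact h6.symm
  · intro f hf
    refine ker_dvd (K := FractionRing (MvPolynomial (Tau N r m) ℂ)) m aC (qX_primitive m aC haC00 ?_ hflat) haC00
      (AdjoinRoot.root (Q.map (algebraMap P₁.W (FractionRing (MvPolynomial (Tau N r m) ℂ))))) ?_ g (fun p => rfl) f hf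
    · intro i j hij
      rw [haC]; simp only [htri i j hij, map_zero]
    · intro p hp
      rw [AdjoinRoot.aeval_eq, AdjoinRoot.mk_eq_zero, hQα] at hp
      exact hp

end

/-! ### No parametrisation by a rational function field -/

lemma qf_map {ι J R R' S : Type*} [Fintype J] [CommRing R] [CommRing R'] [CommRing S] (φ : R' →+* S)
    (f : R →+* R') (a : J → J → MvPolynomial ι R) (x : ι → S) (z : J → S) :
    qf φ (fun i j => map f (a i j)) x z = qf (φ.comp f) a x z := by
  simp only [qf, eval₂_map]

/-- A vector with coordinates in the constant field is not generic. -/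
lemma not_gen_const {κ F : Type} [Field κ] [Field F] [Algebra κ F] {N : ℕ} (k : Fin (N + 2) → κ) :
    ¬ Gen κ (fun i => algebraMap κ F (k i)) := by
  intro h
  have h0 : k 0 ≠ 0 := fun h0 => h.ne_zero 0 (by rw [h0, map_zero])
  refine h 1 (C (k 1) * X 0 - C (k 0) * X 1) ?_ ?_ ?_
  · intro h1
    have h2 := congrArg (eval (fun i : Fin (N + 2) => if i = 1 then (1 : κ) else 0)) h1
    simp only [map_sub, map_mul, eval_C, eval_X, map_zero, if_true] at h2
    rw [if_neg (by exact zero_ne_one)] at h2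
    simp at h2
    exact h0 h2
  · refine IsHomogeneous.sub ?_ ?_
    · simpa using (isHomogeneous_C (Fin (N + 2)) (k 1)).mul (isHomogeneous_X κ (0 : Fin (N + 2)))
    · simpa using (isHomogeneous_C (Fin (N + 2)) (k 0)).mul (isHomogeneous_X κ (1 : Fin (N + 2)))
  · simp [mul_comm]

lemma PlExt.divisible {κ L F : Type} [Field κ] [Field L] [Field F] [Algebra ℂ L] [Algebra κ F]
    {P₀ : Pl ℂ κ} {P : Pl L F} (h : PlExt P₀ P) (γ : P.W.ValueGroup) (n : ℕ) (hn : 0 < n) :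
    ∃ δ, δ ^ n = γ := by
  by_cases hγ : γ = 0
  · exact ⟨0, by rw [hγ, zero_pow hn.ne']⟩
  obtain ⟨f, rfl⟩ := P.W.valuation_surjective γ
  obtain ⟨c, hc, hv⟩ := h.val f (fun h0 => hγ (by rw [h0, map_zero]))
  obtain ⟨b, hb⟩ := IsAlgClosed.exists_pow_nat_eq c hn
  exact ⟨P.W.valuation (algebraMap ℂ L b), by rw [hv, ← map_pow, ← map_pow, hb]⟩

/-- The generic point of the quadric bundle cannot be rational over a purely transcendental
extension of `ℂ`: a line through a complex point would connect it to a constant point. -/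
theorem no_param {κ : Type} [Field κ] [CharP κ 2] (hperf : ∀ c : κ, ∃ b, b ^ 2 = c) {N r m : ℕ}
    {P₀ : Pl ℂ κ} {a : Mat N r P₀.W} (M : Model m P₀ a) (s : Shape N (Fin (r + 2)))
    (ha : ∀ i j, map P₀.ρ (a i j) = s.a₀ κ i j) (hom : HomogMat s.l s.l₀ a) {d : ℕ}
    (Ψ : RatFF d →ₐ[ℂ] M.L) (xr : Fin (N + 2) → RatFF d) (zr : Fin (r + 2) → RatFF d)
    (hxr : ∀ i, Ψ (xr i) = M.x i) (hzr : ∀ i, Ψ (zr i) = M.z i) : False := by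
  classical
  haveI : CharP M.F 2 := charP_of_injective_algebraMap (algebraMap κ M.F).injective 2
  set W := M.P.W with hW
  let iW : P₀.W →+* W := ((algebraMap ℂ M.L).comp P₀.W.subtype).codRestrict W.toSubring
    fun b => M.ext.mem _ b.2
  have hiρ : M.P.ρ.comp iW = (algebraMap κ M.F).comp P₀.ρ := by
    ext b
    have := M.ext.rd_eq b b.2
    rw [P₀.rd_coe] at this
    rw [RingHom.comp_apply, RingHom.comp_apply, ← this]
    exact (M.P.rd_coe (iW b)).symm
  set aW : Mat N r W := fun i j => map iW (a i j) with haW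
  set aC : Mat N r ℂ := fun i j => map (algebraMap P₀.W ℂ) (a i j) with haC
  have homW : HomogMat s.l s.l₀ aW := by
    intro i j h0
    obtain ⟨e, he, h⟩ := hom i j (fun h => h0 (by rw [haW]; simp only [h, map_zero]))
    exact ⟨e, he, h.map _⟩
  have homC : HomogMat s.l s.l₀ aC := by
    intro i j h0
    obtain ⟨e, he, h⟩ := hom i j (fun h => h0 (by rw [haC]; simp only [h, map_zero]))
    exact ⟨e, he, h.map _⟩
  have hΨi : Function.Injective Ψ := (Ψ : RatFF d →+* M.L).injective
  -- clearing denominators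
  obtain ⟨b, hb⟩ := IsLocalization.exist_integer_multiples_of_finite
    (nonZeroDivisors (MvPolynomial (Fin d) ℂ)) xr
  choose p hp using hb
  set β : RatFF d := algebraMap (MvPolynomial (Fin d) ℂ) _ b.1 with hβ
  have hβ0 : β ≠ 0 := IsFractionRing.to_map_ne_zero_of_mem_nonZeroDivisors b.2
  have hp' : ∀ i, algebraMap _ (RatFF d) (p i) = β * xr i := fun i => by
    rw [hp i, Algebra.smul_def]
  obtain ⟨b', hb'⟩ := IsLocalization.exist_integer_multiples_of_finite
    (nonZeroDivisors (MvPolynomial (Fin d) ℂ)) (fun i => β ^ (-s.l i) * zr i)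
  choose w hw using hb'
  set β' : RatFF d := algebraMap (MvPolynomial (Fin d) ℂ) _ b'.1 with hβ'
  have hβ'0 : β' ≠ 0 := IsFractionRing.to_map_ne_zero_of_mem_nonZeroDivisors b'.2
  have hw' : ∀ i, algebraMap _ (RatFF d) (w i) = β' * (β ^ (-s.l i) * zr i) := fun i => by
    rw [hw i, Algebra.smul_def]
  have hq1 : qf (algebraMap ℂ (RatFF d)) aC xr zr = 0 := by
    apply (Ψ : RatFF d →+* M.L).injective
    rw [map_zero, map_qf]
    have h1 : (Ψ : RatFF d →+* M.L).comp (algebraMap ℂ (RatFF d)) = algebraMap ℂ M.L :=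
      Ψ.comp_algebraMap
    rw [h1]
    simp only [RingHom.coe_coe, hxr, hzr]
    exact M.qf_eq
  have hq2 : qf (C : ℂ →+* MvPolynomial (Fin d) ℂ) aC p w = 0 := by
    apply IsFractionRing.injective (MvPolynomial (Fin d) ℂ) (RatFF d)
    rw [map_zero, map_qf]
    simp only [hp', hw']
    rw [qf_smul]
    have h1 := qf_scale (algebraMap ℂ (RatFF d)) homC xr zr hβ0
    simp only [Algebra.algebraMap_self, RingHom.id_apply] at h1
    have h2 : (algebraMap (MvPolynomial (Fin d) ℂ) (RatFF d)).comp C = algebraMap ℂ (RatFF d) := rfl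
    rw [h2, h1, hq1, mul_zero, mul_zero]
  have hx0 : ∀ i, M.x i ≠ 0 := by
    intro i h
    by_cases hg : Gen κ (fun i => M.P.rd (M.x i))
    · apply hg.ne_zero i
      have := M.P.rd_coe 0
      rw [ZeroMemClass.coe_zero, map_zero] at this
      rw [h, this]
    · exact M.hD (fval_of_not_gen hg)
  -- a complex point
  have hp0 : p 0 ≠ 0 := by
    intro h
    have h1 := hp' 0
    rw [h, map_zero] at h1
    rcases mul_eq_zero.1 h1.symm with h2 | h2
    · exact hβ0 h2
    · exact hx0 0 (by rw [← hxr, h2, map_zero])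
  obtain ⟨c, hc⟩ : ∃ c : Fin d → ℂ, eval c (p 0) ≠ 0 := by
    by_contra hcon
    push Not at hcon
    exact hp0 (MvPolynomial.funext fun c => by rw [hcon c, map_zero])
  let τ : Fin d → M.L := fun k => Ψ (algebraMap (MvPolynomial (Fin d) ℂ) (RatFF d) (X k))
  let ct : Fin d → M.L := fun k => algebraMap ℂ M.L (c k)
  -- the line through the complex point and the generic point
  let Λ : MvPolynomial (Fin d) ℂ →+* Polynomial M.L := eval₂Hom (Polynomial.C.comp (algebraMap ℂ M.L))
    fun k => Polynomial.C (ct k) + Polynomial.C (τ k - ct k) * Polynomial.X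
  have hΛ0 : ∀ f, (Λ f).eval 0 = algebraMap ℂ M.L (eval c f) := by
    intro f
    have : (Polynomial.evalRingHom 0).comp Λ = (algebraMap ℂ M.L).comp (eval c) := by
      refine ringHom_ext (fun t => ?_) fun k => ?_
      · simp [Λ]
      · simp [Λ, ct]
    exact congrArg (fun g => g f) (congrArg DFunLike.coe this)
  have hΛ1 : ∀ f, (Λ f).eval 1 = Ψ (algebraMap _ _ f) := by
    intro f
    have : (Polynomial.evalRingHom 1).comp Λ =
        (Ψ : RatFF d →+* M.L).comp (algebraMap (MvPolynomial (Fin d) ℂ) (RatFF d)) := by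
      refine ringHom_ext (fun t => ?_) fun k => ?_
      · have : Ψ (algebraMap (MvPolynomial (Fin d) ℂ) (RatFF d) (C t)) = algebraMap ℂ M.L t :=
          Ψ.commutes t
        simp [Λ, this]
      · simp [Λ, τ]
    exact congrArg (fun g => g f) (congrArg DFunLike.coe this)
  have hpath : ∀ Λ' : MvPolynomial (Fin d) ℂ →+* Polynomial M.L,
      Λ'.comp C = Polynomial.C.comp (algebraMap ℂ M.L) → (fun i => Λ' (w i)) ≠ 0 →
      EdgeConst W M.P.ρ (fval M.D) (fun i => Λ' (p i)) := by
    intro Λ' hΛ' hne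
    refine edgeConst_of_path hperf s.k M.D homW ?_ _ (fun i => Λ' (w i)) hne ?_
    · intro x z hz hx hg hq
      refine s.isoAt ((algebraMap M.F (RatFunc M.F)).comp (algebraMap κ M.F)) x z hz hx hg ?_
      rw [haW, qf_map, RingHom.comp_assoc, hiρ, ← RingHom.comp_assoc, ← qf_map] at hq
      simpa only [ha] using hq
    · rw [haW, qf_map]
      have h1 : (Polynomial.C.comp (algebraMap W M.L)).comp iW =
          (Polynomial.C.comp (algebraMap ℂ M.L)).comp (algebraMap P₀.W ℂ) := rfl
      rw [h1, ← qf_map, ← hΛ', ← map_qf]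
      exact (congrArg Λ' hq2).trans (map_zero _)
  have hΛC : Λ.comp C = Polynomial.C.comp (algebraMap ℂ M.L) := by
    ext t; simp [Λ]
  have hw1 : (fun i => Λ (w i)) ≠ 0 := by
    intro h
    apply M.hz
    funext i
    have h1 := congrArg (Polynomial.eval 1) (congrFun h i)
    simp only [Pi.zero_apply, Polynomial.eval_zero] at h1
    rw [hΛ1, map_eq_zero_iff Ψ hΨi, hw'] at h1
    have h2 : zr i = 0 := by
      rcases mul_eq_zero.1 h1 with h | h
      · exact absurd h hβ'0
      · exact (mul_eq_zero.1 h).resolve_left (zpow_ne_zero _ hβ0)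
    rw [← hzr, h2, map_zero, Pi.zero_apply]
  have hE := hpath Λ hΛC hw1
  have hE' := hpath ((Polynomial.taylorAlgHom (1 : M.L) : Polynomial M.L →+* Polynomial M.L).comp Λ)
    (by rw [RingHom.comp_assoc, hΛC]; ext t; simp) (by
      intro h
      apply hw1
      funext i
      have := congrFun h i
      exact Polynomial.taylor_injective (1 : M.L) (by simpa using this))
  have e0 : (fun i => (Λ (p i)).eval 0) = fun i => algebraMap ℂ M.L (eval c (p i)) :=
    funext fun i => hΛ0 _
  have e1 : (fun i => (Λ (p i)).eval 1) = fun i => Ψ β * M.x i := by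
    funext i
    rw [hΛ1, hp', map_mul, hxr]
  have hΨβ : Ψ β ≠ 0 := by
    rw [Ne, map_eq_zero_iff Ψ hΨi]; exact hβ0
  have h0 : (fun i => (Λ (p i)).eval 0) ≠ 0 := by
    rw [e0]; intro h
    have := congrFun h 0
    simp at this
    exact hc this
  have h1 : (fun i => (Λ (p i)).eval 1) ≠ 0 := by
    rw [e1]; intro h
    rcases mul_eq_zero.1 (congrFun h 0) with h | h
    · exact hΨβ h
    · exact hx0 0 h
  have key := endpoints W M.P.ρ M.P.hρ M.ext.divisible (fun c x hc => fval_smul M.D hc x)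
    (fun i => Λ (p i)) hE hE' h0 h1
  -- the complex end
  have k0 : fval M.D (red W M.P.ρ fun i => (Λ (p i)).eval 0) = 0 := by
    apply fval_of_not_gen
    set V : Fin (N + 2) → M.L := fun i => (Λ (p i)).eval 0 with hV
    have hVi : ∀ i, V i / V (mx W V) =
        algebraMap ℂ M.L (eval c (p i) / eval c (p (mx W V))) := fun i => by
      rw [map_div₀, ← hΛ0, ← hΛ0]
    have : red W M.P.ρ V = fun i => algebraMap κ M.F
        (P₀.rd (eval c (p i) / eval c (p (mx W V)))) := by
      funext i
      have hm := div_mx_mem W h0 i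
      rw [hVi] at hm
      rw [red, hVi]
      exact M.ext.rd_eq _ (Pl.mem_or_of_rd M.ext hm)
    rw [this]
    exact not_gen_const _
  -- the generic end
  have k1 : fval M.D (red W M.P.ρ fun i => (Λ (p i)).eval 1) ≠ 0 := by
    have hcV : (fun i => M.P.rd (M.x i)) =
        fun i => rd W M.P.ρ ((Ψ β)⁻¹ * (Λ (p i)).eval 1) := by
      funext i
      rw [congrFun e1 i, inv_mul_cancel_left₀ hΨβ]
      rfl
    have hD := M.hD
    rw [hcV] at hD
    obtain ⟨t, ht, h⟩ := exists_smul_red W M.P.ρ h1 (Ψ β)⁻¹ (fun i => by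
      rw [congrFun e1 i, inv_mul_cancel_left₀ hΨβ]; exact M.hx i) (by
        intro h
        rw [h] at hD
        refine hD (fval_of_not_gen fun hg => hg.ne_zero 0 rfl))
    rwa [h, fval_smul M.D ht] at hD
  exact k1 (key.symm.trans k0)

/-! ### Cone rings -/

section
variable {N r : ℕ} {l : Fin (r + 2) → ℤ} {l₀ : ℤ}

/-- The upper triangular matrix of the quadratic form defined by a symmetric matrix. -/
def tri (A : QB.SymMat (N + 1) r l l₀) : Mat N r ℂ := fun i j =>
  if i = j then A.1 i i else if i < j then 2 * A.1 i j else 0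

lemma sum_tri {M : Type*} [CommRing M] {k : ℕ} (S : Fin k → Fin k → M) (hS : ∀ i j, S i j = S j i) :
    ∑ i, ∑ j, (if i = j then S i i else if i < j then 2 * S i j else 0) = ∑ i, ∑ j, S i j := by
  have h1 : ∑ i, ∑ j, S i j = ∑ i, ∑ j, (if i = j then S i i else 0) +
      ∑ i, ∑ j, (if i < j then S i j else 0) + ∑ i, ∑ j, (if j < i then S i j else 0) := by
    simp only [← Finset.sum_add_distrib]
    refine Finset.sum_congr rfl fun i _ => Finset.sum_congr rfl fun j _ => ?_
    rcases lt_trichotomy i j with h | rfl | h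
    · simp [h, h.ne, h.not_gt]
    · simp
    · simp [h, h.ne', h.not_gt]
  have h2 : ∑ i, ∑ j, (if j < i then S i j else 0) = ∑ i, ∑ j, (if i < j then S i j else 0) := by
    rw [Finset.sum_comm]
    refine Finset.sum_congr rfl fun i _ => Finset.sum_congr rfl fun j _ => ?_
    rw [hS]
  rw [h1, h2]
  simp only [← Finset.sum_add_distrib]
  refine Finset.sum_congr rfl fun i _ => Finset.sum_congr rfl fun j _ => ?_
  rcases lt_trichotomy i j with h | rfl | h
  · simp [h, h.ne, two_mul]
  · simp
  · simp [h.ne', h.not_gt]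

lemma qA_tri (A : QB.SymMat (N + 1) r l l₀) : qA (tri A) = QB.qpoly A := by
  rw [qA, QB.qpoly, ← sum_tri (fun i j => rename Sum.inl (A.1 i j) * X (Sum.inr i) * X (Sum.inr j))]
  · refine Finset.sum_congr rfl fun i _ => Finset.sum_congr rfl fun j _ => ?_
    rw [tri]
    split_ifs with h1 h2
    · subst h1; rfl
    · rw [map_mul, map_ofNat]; ring
    · rw [map_zero, zero_mul, zero_mul]
  · intro i j
    simp only [A.2.1 i j]; ring

/-- A homomorphism whose kernel is generated by `q` embeds polynomials over `R₀ / (q)`. -/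
lemma cone_embed {R₀ E : Type} [CommRing R₀] [CommRing E] {m : ℕ} (q : R₀)
    (f : MvPolynomial (Fin m) R₀ →+* E) (hq : f (C q) = 0) (hker : ∀ g, f g = 0 → C q ∣ g) :
    ∃ F : MvPolynomial (Fin m) (R₀ ⧸ Ideal.span {q}) →+* E, Function.Injective F ∧
      ∀ g, F (map (Ideal.Quotient.mk (Ideal.span {q})) g) = f g := by
  have hs : Function.Surjective (map (σ := Fin m) (Ideal.Quotient.mk (Ideal.span {q}))) :=
    map_surjective _ Ideal.Quotient.mk_surjective
  have hk : RingHom.ker (map (σ := Fin m) (Ideal.Quotient.mk (Ideal.span {q}))) =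
      Ideal.span {C q} := by
    rw [ker_map, Ideal.mk_ker, Ideal.map_span, Set.image_singleton]
  have hle : RingHom.ker (map (σ := Fin m) (Ideal.Quotient.mk (Ideal.span {q}))) ≤
      RingHom.ker f := by
    rw [hk, Ideal.span_singleton_le_iff_mem]; exact hq
  let F := RingHom.liftOfSurjective _ hs ⟨f, hle⟩
  have hF : ∀ g, F (map (Ideal.Quotient.mk (Ideal.span {q})) g) = f g := fun g =>
    RingHom.liftOfRightInverse_comp_apply _ _ _ ⟨f, hle⟩ g
  refine ⟨F, ?_, hF⟩
  rw [injective_iff_map_eq_zero]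
  intro g hg
  obtain ⟨g, rfl⟩ := hs g
  rw [hF] at hg
  have : g ∈ RingHom.ker (map (σ := Fin m) (Ideal.Quotient.mk (Ideal.span {q}))) := by
    rw [hk]; exact Ideal.mem_span_singleton.2 (hker g hg)
  exact this

/-- If the quadratic form reduces to that of the special quadric bundle at some place of `ℂ`, then
the cone ring is a domain, as it embeds into the field of a `Model`, and the bundle is not stably
rational, as a rational parametrisation would contradict `no_param`. -/
theorem geom {κ : Type} [Field κ] [CharP κ 2] (hperf : ∀ c : κ, ∃ b, b ^ 2 = c)
    (A : QB.SymMat (N + 1) r l l₀) (hflat : ∀ c : Fin (N + 2) → ℂ, c ≠ 0 → ∃ i j, eval c (A.1 i j) ≠ 0)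
    {P₀ : Pl ℂ κ} (a : Mat N r P₀.W) (s : Shape N (Fin (r + 2))) (hs : s.j0 = 0)
    (hl : s.l = l) (hl₀ : s.l₀ = l₀)
    (haA : ∀ i j, map (algebraMap P₀.W ℂ) (a i j) = tri A i j)
    (ha : ∀ i j, map P₀.ρ (a i j) = s.a₀ κ i j) :
    IsDomain (QB.ConeRing A) ∧ ¬ QB.IsStablyRationalQB A := by
  have hinj : Function.Injective (map (σ := Fin (N + 2)) (algebraMap P₀.W ℂ)) :=
    map_injective _ Subtype.val_injective
  have htri : ∀ i j, j < i → a i j = 0 := fun i j h => by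
    apply hinj
    rw [haA, map_zero, tri, if_neg h.ne', if_neg h.not_gt]
  have hfl : ∀ c : Fin (N + 2) → ℂ, c ≠ 0 →
      ∃ i j, eval c (map (algebraMap P₀.W ℂ) (a i j)) ≠ 0 := by
    intro c hc
    obtain ⟨i, j, hij⟩ := hflat c hc
    rcases lt_trichotomy i j with h | rfl | h
    · refine ⟨i, j, ?_⟩
      rw [haA, tri, if_neg h.ne, if_pos h, map_mul, map_ofNat]
      exact mul_ne_zero two_ne_zero hij
    · refine ⟨i, i, ?_⟩
      rw [haA, tri, if_pos rfl]; exact hij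
    · refine ⟨j, i, ?_⟩
      rw [haA, tri, if_neg h.ne, if_pos h, map_mul, map_ofNat, A.2.1]
      exact mul_ne_zero two_ne_zero hij
  have hom : HomogMat s.l s.l₀ a := by
    intro i j h0
    have hne : tri A i j ≠ 0 := by rw [← haA]; exact fun h => h0 (hinj (by rw [h, map_zero]))
    have hA := A.2.2 i j
    rw [QB.homComp] at hA
    have hAne : A.1 i j ≠ 0 := by
      intro h; apply hne; rw [tri]
      split_ifs with h1
      · subst h1; exact h
      · rw [h, mul_zero]
      · rfl
    split_ifs at hA with hnn
    · refine ⟨(l i + l j + l₀).toNat, by rw [hl, hl₀]; exact Int.toNat_of_nonneg hnn, ?_⟩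
      have h2 : (tri A i j).IsHomogeneous (l i + l j + l₀).toNat := by
        rw [tri]
        split_ifs with h1
        · subst h1; exact hA
        · rw [← map_ofNat (C : ℂ →+* _)]
          simpa using (isHomogeneous_C (Fin (N + 2)) (2 : ℂ)).mul hA
        · exact isHomogeneous_zero _ _ _
      rw [← haA] at h2
      exact h2.of_map Subtype.val_injective
    · exact absurd ((Submodule.mem_bot ℂ).1 hA) hAne
  have haC : (fun i j => map (algebraMap P₀.W ℂ) (a i j)) = tri A := by
    funext i j; exact haA i j
  have key : ∀ m (M : Model m P₀ a), ∃ F : MvPolynomial (Fin m) (QB.ConeRing A) →ₐ[ℂ] M.L,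
      Function.Injective F ∧
      (∀ i, F (C (Ideal.Quotient.mk (Ideal.span {QB.qpoly A}) (X (Sum.inl i)))) = M.x i) ∧
      (∀ i, F (C (Ideal.Quotient.mk (Ideal.span {QB.qpoly A}) (X (Sum.inr i)))) = M.z i) := by
    intro m M
    obtain ⟨F, hF, hFe⟩ := cone_embed (QB.qpoly A) (evTot m (algebraMap ℂ M.L) M.x M.z M.y)
      (by
        rw [← qA_tri, evTot_qA, ← haC]; exact M.qf_eq)
      (by
        intro g hg
        have := M.ker g hg
        rwa [haC, qA_tri] at this)
    refine ⟨{ F with commutes' := ?_ }, hF, ?_, ?_⟩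
    · intro c
      have h := hFe (C (C c))
      rw [map_C] at h
      refine h.trans ?_
      simp [evTot]
    · intro i
      have h := hFe (C (X (Sum.inl i)))
      rw [map_C] at h
      refine h.trans ?_
      simp [evTot]
    · intro i
      have h := hFe (C (X (Sum.inr i)))
      rw [map_C] at h
      refine h.trans ?_
      simp [evTot]
  have hdom : IsDomain (QB.ConeRing A) := by
    obtain ⟨M⟩ := exists_model 0 P₀ s hs a ha htri hfl
    obtain ⟨F, hF, -⟩ := key 0 M
    exact Function.Injective.isDomain (F.toRingHom.comp C) (hF.comp (C_injective _ _))
  refine ⟨hdom, ?_⟩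
  rintro ⟨m, d, ⟨e⟩⟩
  obtain ⟨M⟩ := exists_model m P₀ s hs a ha htri hfl
  obtain ⟨F, hF, hx, hz⟩ := key m M
  let G : FractionRing (MvPolynomial (Fin m) (QB.ConeRing A)) →ₐ[ℂ] M.L :=
    IsFractionRing.liftAlgHom (g := F) hF
  have hG : ∀ g, G (algebraMap _ (FractionRing (MvPolynomial (Fin m) (QB.ConeRing A))) g) = F g :=
    fun g => IsFractionRing.lift_algebraMap (g := F.toRingHom) hF g
  refine no_param hperf M s ha hom (G.comp (e.symm : RatFF d →ₐ[ℂ] _))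
    (fun i => e (algebraMap (MvPolynomial (Fin m) (QB.ConeRing A)) _
      (C (Ideal.Quotient.mk (Ideal.span {QB.qpoly A}) (X (Sum.inl i))))))
    (fun i => e (algebraMap (MvPolynomial (Fin m) (QB.ConeRing A)) _
      (C (Ideal.Quotient.mk (Ideal.span {QB.qpoly A}) (X (Sum.inr i))))))
    ?_ ?_
  · intro i
    rw [← hx, ← hG]
    simp
  · intro i
    rw [← hz, ← hG]
    simp
end

/-! ### Very general points -/

/-- Algebraically independent complex numbers can be specialised to any prescribed elements of
`𝔽_p` by a place of `ℂ`. -/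
theorem exists_special_place (p : ℕ) [Fact p.Prime] {σ : Type} (θ : σ → ℂ) (hθ : AlgebraicIndependent ℤ θ)
    (v : σ → ZMod p) :
    ∃ (κ : Type) (_ : Field κ) (_ : CharP κ p) (P₀ : Pl ℂ κ), (∀ c : κ, ∃ b, b ^ p = c) ∧
      ∃ t : σ → P₀.W, (∀ i, (t i : ℂ) = θ i) ∧
        ∀ i, P₀.ρ (t i) = ZMod.castHom (dvd_refl p) κ (v i) := by
  let g : MvPolynomial σ ℤ →+* ℂ := (aeval θ : MvPolynomial σ ℤ →ₐ[ℤ] ℂ).toRingHom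
  have hg : Function.Injective g := hθ
  let A : Subring ℂ := g.range
  let G : MvPolynomial σ ℤ ≃+* A := RingEquiv.ofBijective g.rangeRestrict
    ⟨fun a b h => hg (congrArg Subtype.val h), g.rangeRestrict_surjective⟩
  have hG : ∀ f, (G f : ℂ) = g f := fun f => rfl
  let π : MvPolynomial σ ℤ →+* ZMod p := eval₂Hom (Int.castRingHom _) v
  let I : Ideal A := RingHom.ker (π.comp (G.symm : A →+* MvPolynomial σ ℤ))
  have hI : ∀ f, π f = 0 → G f ∈ I := by
    intro f hf
    rw [RingHom.mem_ker, RingHom.comp_apply]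
    simpa using hf
  obtain ⟨B, hAB, hB⟩ := Ideal.image_subset_nonunits_valuationSubring I (RingHom.ker_ne_top _)
  let ρ : B →+* IsLocalRing.ResidueField B := IsLocalRing.residue B
  have hGB : ∀ f, g f ∈ B := fun f => hAB (G f).2
  have key : ∀ f, π f = 0 → ρ ⟨g f, hGB f⟩ = 0 := by
    intro f hf
    have h1 : (G f : ℂ) ∈ B.nonunits := hB ⟨G f, hI f hf, rfl⟩
    obtain ⟨ha, h2⟩ := B.mem_nonunits_iff_exists_mem_maximalIdeal.1 h1
    exact (IsLocalRing.residue_eq_zero_iff _).2 h2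
  have hp0 : ((p : ℕ) : IsLocalRing.ResidueField B) = 0 := by
    have h := key (p : MvPolynomial σ ℤ) (by simp [π])
    have h2 : (⟨g (p : MvPolynomial σ ℤ), hGB _⟩ : B) = (p : B) := by
      apply Subtype.ext
      simp
    rwa [h2, map_natCast] at h
  haveI hch : CharP (IsLocalRing.ResidueField B) p :=
    (CharP.charP_iff_prime_eq_zero (Fact.out : p.Prime)).2 hp0
  refine ⟨IsLocalRing.ResidueField B, inferInstance, hch, ⟨B, ρ, ?_⟩, ?_, fun i => ⟨θ i, ?_⟩, fun i => rfl, ?_⟩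
  · intro b hb
    exact (IsLocalRing.residue_ne_zero_iff_isUnit _).1 hb
  · intro c
    obtain ⟨b, rfl⟩ := IsLocalRing.residue_surjective c
    obtain ⟨z, hz⟩ := IsAlgClosed.exists_pow_nat_eq (b : ℂ) (Fact.out : p.Prime).pos
    have hzB : z ∈ B := by
      rw [← B.valuation_le_one_iff]
      have h1 : B.valuation z ^ p ≤ 1 := by
        rw [← map_pow, hz]; exact (B.valuation_le_one_iff _).2 b.2
      exact (pow_le_one_iff (Fact.out : p.Prime).ne_zero).1 h1
    refine ⟨ρ ⟨z, hzB⟩, ?_⟩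
    rw [← map_pow]
    congr 1
    exact Subtype.ext hz
  · have := hGB (X i)
    simpa [g] using this
  · intro i
    have h := key (X i - ((v i).val : MvPolynomial σ ℤ)) (by
      haveI : NeZero p := ⟨(Fact.out : p.Prime).ne_zero⟩
      rw [map_sub, map_natCast, ZMod.natCast_zmod_val]
      simp [π])
    have h2 : (⟨g (X i - ((v i).val : MvPolynomial σ ℤ)), hGB _⟩ : B) =
        ⟨θ i, by simpa [g] using hGB (X i)⟩ - ((v i).val : B) := by
      apply Subtype.ext
      change g _ = θ i - (((v i).val : B) : ℂ)
      have hgX : g (X i) = θ i := aeval_X θ i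
      have hc : (((v i).val : B) : ℂ) = ((v i).val : ℂ) := map_natCast B.subtype _
      rw [map_sub, map_natCast, hgX, hc]
    rw [h2, map_sub, map_natCast, sub_eq_zero] at h
    haveI : NeZero p := ⟨(Fact.out : p.Prime).ne_zero⟩
    refine h.trans ?_
    conv_rhs => rw [← ZMod.natCast_zmod_val (v i), map_natCast]

/-- A property holding at all points with algebraically independent coordinates is very general. -/
theorem veryGen {V σ : Type} [Countable σ] {coords : Set (V → ℂ)} (θ : σ → V → ℂ)
    (hθ : ∀ i, θ i ∈ Algebra.adjoin ℂ coords) (hsurj : ∀ w : σ → ℂ, ∃ v, ∀ i, θ i v = w i)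
    {P : V → Prop} (h : ∀ v, AlgebraicIndependent ℤ (fun i => θ i v) → P v) :
    VeryGenerallyOn coords P := by
  haveI : Countable (MvPolynomial σ ℤ) := 
    (basisMonomials σ ℤ).repr.injective.countable
  haveI : Nonempty {f : MvPolynomial σ ℤ // f ≠ 0} := ⟨⟨1, one_ne_zero⟩⟩
  obtain ⟨F, hF⟩ := exists_surjective_nat {f : MvPolynomial σ ℤ // f ≠ 0}
  have hev : ∀ (f : MvPolynomial σ ℤ) v, (aeval θ f : V → ℂ) v = aeval (fun i => θ i v) f := by
    intro f v
    have := map_aeval (θ) (Pi.evalRingHom (fun _ : V => ℂ) v) f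
    rw [Pi.evalRingHom_apply] at this
    rw [this, aeval_def, coe_eval₂Hom]
    congr 1
  refine ⟨fun m => {v | aeval (fun i => θ i v) (F m).1 = 0}, fun m => ⟨⟨{aeval θ (F m).1}, ?_, ?_⟩, ?_⟩, ?_⟩
  · rw [Set.singleton_subset_iff]
    have h1 : aeval θ (F m).1 ∈ Algebra.adjoin ℤ (Set.range θ) := by
      rw [Algebra.adjoin_range_eq_range_aeval]; exact ⟨_, rfl⟩
    have h2 : Algebra.adjoin ℤ (Set.range θ) ≤ (Algebra.adjoin ℂ coords).restrictScalars ℤ := by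
      refine Algebra.adjoin_le ?_
      rintro _ ⟨i, rfl⟩
      exact hθ i
    exact h2 h1
  · ext v
    simp [hev]
  · intro hu
    have hne : map (Int.castRingHom ℂ) (F m).1 ≠ 0 := by
      intro h0
      exact (F m).2 (map_injective _ Int.cast_injective (by rw [h0, map_zero]))
    apply hne
    refine MvPolynomial.funext fun w => ?_
    obtain ⟨v, hv⟩ := hsurj w
    have h1 : v ∈ {v | aeval (fun i => θ i v) (F m).1 = 0} := by
      have : v ∈ (Set.univ : Set V) := trivial
      rwa [← hu] at this
    have h2 : (fun i => θ i v) = w := funext hv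
    rw [Set.mem_setOf_eq, h2] at h1
    rw [map_zero, eval_map]
    exact h1
  · intro v hv
    apply h
    rw [algebraicIndependent_iff]
    intro f hf
    by_contra h0
    obtain ⟨m, hm⟩ := hF ⟨f, h0⟩
    apply hv m
    rw [Set.mem_setOf_eq, hm]
    exact hf

lemma exists_poly {R : Type} [CommRing R] {k : ℕ} (e : ℕ) (w : (Fin k →₀ ℕ) → R) :
    ∃ p : MvPolynomial (Fin k) R, p.IsHomogeneous e ∧ ∀ mon, mon.degree = e → coeff mon p = w mon := by
  classical
  have hdeg : ∀ mon : Fin k →₀ ℕ, mon ∈ Finset.univ.finsuppAntidiag e ↔ mon.degree = e := by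
    intro mon
    rw [Finset.mem_finsuppAntidiag, Finsupp.degree_eq_sum]
    simp
  refine ⟨∑ mon ∈ Finset.univ.finsuppAntidiag e, monomial mon (w mon), ?_, ?_⟩
  · refine IsHomogeneous.sum _ _ _ fun mon hm => isHomogeneous_monomial _ ((hdeg mon).1 hm)
  · intro mon hm
    rw [coeff_sum]
    simp only [coeff_monomial]
    rw [Finset.sum_ite_eq', if_pos ((hdeg mon).2 hm)]

/-! ### Specialising a very general matrix -/

section
variable {N r : ℕ} {l : Fin (r + 2) → ℤ} {l₀ : ℤ}

/-- Index set of the coefficients of the upper triangular matrix. -/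
def Par (N r : ℕ) (l : Fin (r + 2) → ℤ) (l₀ : ℤ) : Type :=
  {q : Fin (r + 2) × Fin (r + 2) × (Fin (N + 2) →₀ ℕ) //
    q.1 ≤ q.2.1 ∧ q.2.2.degree = (l q.1 + l q.2.1 + l₀).toNat}

instance : Countable (Par N r l l₀) := by unfold Par; infer_instance

/-- The coefficients of the upper triangular matrix. -/
def par (A : QB.SymMat (N + 1) r l l₀) (q : Par N r l l₀) : ℂ :=
  coeff q.1.2.2 (tri A q.1.1 q.1.2.1)

lemma par_eq (A : QB.SymMat (N + 1) r l l₀) (q : Par N r l l₀) :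
    par A q = if q.1.1 = q.1.2.1 then coeff q.1.2.2 (A.1 q.1.1 q.1.2.1)
      else 2 * coeff q.1.2.2 (A.1 q.1.1 q.1.2.1) := by
  rw [par, tri]
  split_ifs with h1 h2
  · rw [← h1]
  · rw [← map_ofNat (C : ℂ →+* _), coeff_C_mul]
  · exact absurd (lt_of_le_of_ne q.2.1 h1) h2

lemma homog_of_mem (hnn : ∀ i j, 0 ≤ l i + l j + l₀) (A : QB.SymMat (N + 1) r l l₀) (i j) :
    (A.1 i j).IsHomogeneous (l i + l j + l₀).toNat := by
  have h := A.2.2 i j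
  rw [QB.homComp, if_pos (hnn i j)] at h
  exact h

lemma tri_homog (hnn : ∀ i j, 0 ≤ l i + l j + l₀) (A : QB.SymMat (N + 1) r l l₀) (i j) :
    (tri A i j).IsHomogeneous (l i + l j + l₀).toNat := by
  have hA := homog_of_mem hnn A i j
  rw [tri]
  split_ifs with h1
  · subst h1; exact hA
  · rw [← map_ofNat (C : ℂ →+* _)]
    simpa using (isHomogeneous_C (Fin (N + 2)) (2 : ℂ)).mul hA
  · exact isHomogeneous_zero _ _ _

lemma par_surj (hnn : ∀ i j, 0 ≤ l i + l j + l₀) (w : Par N r l l₀ → ℂ) :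
    ∃ A : QB.SymMat (N + 1) r l l₀, ∀ q, par A q = w q := by
  classical
  let w' : Fin (r + 2) → Fin (r + 2) → (Fin (N + 2) →₀ ℕ) → ℂ := fun i j mon =>
    if h : i ≤ j ∧ mon.degree = (l i + l j + l₀).toNat then
      (if i = j then w ⟨(i, j, mon), h⟩ else w ⟨(i, j, mon), h⟩ / 2) else 0
  choose p hp hpc using fun i j => exists_poly (l i + l j + l₀).toNat (w' i j)
  refine ⟨⟨fun i j => if i ≤ j then p i j else p j i, ?_, ?_⟩, ?_⟩
  · intro i j
    beta_reduce
    rcases lt_trichotomy i j with h | rfl | h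
    · rw [if_pos h.le, if_neg h.not_ge]
    · rfl
    · rw [if_pos h.le, if_neg h.not_ge]
  · intro i j
    rw [QB.homComp, if_pos (hnn i j)]
    change IsHomogeneous (if i ≤ j then p i j else p j i) _
    split_ifs with h
    · exact hp i j
    · have := hp j i
      rwa [add_comm (l j)] at this
  · rintro ⟨⟨i, j, mon⟩, h⟩
    refine (par_eq _ _).trans ?_
    have h' : i ≤ j ∧ mon.degree = (l i + l j + l₀).toNat := h
    change (if i = j then coeff mon (if i ≤ j then p i j else p j i)
      else 2 * coeff mon (if i ≤ j then p i j else p j i)) = _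
    rw [if_pos h'.1, hpc i j mon h'.2]
    simp only [w', dif_pos h']
    split_ifs with h1
    · rfl
    · field_simp

lemma par_mem (q : Par N r l l₀) :
    (fun A => par A q) ∈ Algebra.adjoin ℂ (QB.symMatCoords (N + 1) r l l₀) := by
  have h1 : (fun A : QB.SymMat (N + 1) r l l₀ => coeff q.1.2.2 (A.1 q.1.1 q.1.2.1)) ∈
      Algebra.adjoin ℂ (QB.symMatCoords (N + 1) r l l₀) :=
    Algebra.subset_adjoin ⟨_, _, _, rfl⟩
  by_cases h : q.1.1 = q.1.2.1
  · convert h1 using 2 with A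
    rw [par_eq, if_pos h]
  · convert Subalgebra.smul_mem _ h1 (2 : ℂ) using 1
    funext A
    rw [par_eq, if_neg h]
    rfl

/-- Lifting a matrix over `𝔽_p` along a place of `ℂ` to the given very general matrix. -/
lemma exists_special (p : ℕ) [Fact p.Prime] (hnn : ∀ i j, 0 ≤ l i + l j + l₀)
    (A : QB.SymMat (N + 1) r l l₀) (hA : AlgebraicIndependent ℤ (par A)) (T : Mat N r (ZMod p))
    (hT : ∀ i j, (T i j).IsHomogeneous (l i + l j + l₀).toNat) (hTt : ∀ i j, j < i → T i j = 0) :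
    ∃ (κ : Type) (_ : Field κ) (_ : CharP κ p) (P₀ : Pl ℂ κ), (∀ c : κ, ∃ b, b ^ p = c) ∧
      ∃ a : Mat N r P₀.W, (∀ i j, map (algebraMap P₀.W ℂ) (a i j) = tri A i j) ∧
        ∀ i j, map P₀.ρ (a i j) = map (ZMod.castHom (dvd_refl p) κ) (T i j) := by
  classical
  obtain ⟨κ, i1, i2, P₀, hperf, t, ht, htv⟩ :=
    exists_special_place p (par A) hA (fun q => coeff q.1.2.2 (T q.1.1 q.1.2.1))
  refine ⟨κ, i1, i2, P₀, hperf, ?_⟩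
  let w' : Fin (r + 2) → Fin (r + 2) → (Fin (N + 2) →₀ ℕ) → P₀.W := fun i j mon =>
    if h : i ≤ j ∧ mon.degree = (l i + l j + l₀).toNat then t ⟨(i, j, mon), h⟩ else 0
  choose a ha hac using fun i j => exists_poly (l i + l j + l₀).toNat (w' i j)
  have hz : ∀ {R : Type} [CommRing R] {e : ℕ} {f : MvPolynomial (Fin (N + 2)) R},
      f.IsHomogeneous e → ∀ mon, mon.degree ≠ e → coeff mon f = 0 :=
    fun hf mon hm => hf.coeff_eq_zero hm
  refine ⟨a, fun i j => ?_, fun i j => ?_⟩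
  · ext mon
    by_cases hm : mon.degree = (l i + l j + l₀).toNat
    · rw [coeff_map, hac i j mon hm]
      by_cases hij : i ≤ j
      · simp only [w', dif_pos (And.intro hij hm)]
        exact ht ⟨(i, j, mon), hij, hm⟩
      · simp only [w', dif_neg (fun h : i ≤ j ∧ _ => hij h.1), map_zero]
        rw [tri, if_neg (fun h => hij h.le), if_neg (fun h => hij h.le), coeff_zero]
    · rw [hz ((ha i j).map _) mon hm, hz (tri_homog hnn A i j) mon hm]
  · ext mon
    by_cases hm : mon.degree = (l i + l j + l₀).toNat
    · rw [coeff_map, coeff_map, hac i j mon hm]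
      by_cases hij : i ≤ j
      · simp only [w', dif_pos (And.intro hij hm)]
        exact htv ⟨(i, j, mon), hij, hm⟩
      · simp only [w', dif_neg (fun h : i ≤ j ∧ _ => hij h.1), map_zero]
        rw [hTt i j (not_le.1 hij), coeff_zero, map_zero]
    · rw [hz ((ha i j).map _) mon hm, hz ((hT i j).map _) mon hm]

/-- A very general matrix defines a flat quadric bundle with smooth generic fibre, by
specialisation to a diagonal form in characteristic three. -/
theorem isQuadricBundle_of_indep (hNr : N ≤ r) (hnn : ∀ i j, 0 ≤ l i + l j + l₀)
    (A : QB.SymMat (N + 1) r l l₀) (hA : AlgebraicIndependent ℤ (par A)) :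
    QB.IsQuadricBundle A := by
  classical
  haveI : Fact (Nat.Prime 3) := ⟨Nat.prime_three⟩
  let ix : Fin (r + 2) → Fin (N + 2) := fun i => if h : (i : ℕ) < N + 2 then ⟨i, h⟩ else 0
  have hix : ∀ k, ∃ i, ix i = k := fun k =>
    ⟨⟨k, by omega⟩, by simp [ix]⟩
  let T : Mat N r (ZMod 3) := fun i j => if i = j then X (ix i) ^ (l i + l i + l₀).toNat else 0
  obtain ⟨κ, i1, i2, P₀, -, a, ha, haρ⟩ := exists_special 3 hnn A hA T (by
      intro i j
      simp only [T]
      split_ifs with h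
      · subst h
        simpa using (isHomogeneous_X (ZMod 3) (ix i)).pow (l i + l i + l₀).toNat
      · exact isHomogeneous_zero _ _ _) (fun i j h => if_neg h.ne')
  have hd : ∀ i, map P₀.ρ (a i i) = X (ix i) ^ (l i + l i + l₀).toNat := fun i => by
    rw [haρ]; simp [T]
  have ho : ∀ i j, i ≠ j → map P₀.ρ (a i j) = 0 := fun i j h => by
    rw [haρ]; simp [T, h]
  have h2 : (2 : κ) ≠ 0 := by
    intro h
    have := (CharP.cast_eq_zero_iff κ 3 2).1 (by exact_mod_cast h)
    omega
  refine ⟨?_, ?_⟩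
  · intro hdet
    let B : Matrix (Fin (r + 2)) (Fin (r + 2)) (MvPolynomial (Fin (N + 2)) P₀.W) :=
      Matrix.of fun i j => a i j + a j i
    have hB : (map (algebraMap P₀.W ℂ)).mapMatrix B =
        (2 : MvPolynomial (Fin (N + 2)) ℂ) • Matrix.of fun i j => A.1 i j := by
      ext1 i j
      rw [RingHom.mapMatrix_apply, Matrix.map_apply, Matrix.smul_apply, Matrix.of_apply,
        show B i j = a i j + a j i from rfl, map_add, ha, ha, smul_eq_mul]
      rcases lt_trichotomy i j with h | rfl | h
      · simp [tri, h, h.ne, h.ne', h.not_gt]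
      · simp [tri, two_mul]
      · simp [tri, h, h.ne, h.ne', h.not_gt, A.2.1 i j]
    have hB0 : B.det = 0 := by
      apply map_injective (algebraMap P₀.W ℂ) Subtype.val_injective
      rw [RingHom.map_det, hB, Matrix.det_smul, hdet, mul_zero, map_zero]
    have hBρ : (map P₀.ρ).mapMatrix B =
        Matrix.diagonal fun i => C 2 * X (ix i) ^ (l i + l i + l₀).toNat := by
      ext1 i j
      rw [RingHom.mapMatrix_apply, Matrix.map_apply, show B i j = a i j + a j i from rfl, map_add]
      by_cases h : i = j
      · subst h
        rw [hd, Matrix.diagonal_apply_eq, ← two_mul, map_ofNat]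
      · rw [ho i j h, ho j i (Ne.symm h), Matrix.diagonal_apply_ne _ h, add_zero]
    have h3 := congrArg (map P₀.ρ) hB0
    rw [RingHom.map_det, hBρ, Matrix.det_diagonal, map_zero] at h3
    refine Finset.prod_ne_zero_iff.2 (fun i _ => ?_) h3
    exact mul_ne_zero ((map_ne_zero_iff _ (C_injective _ _)).2 h2) (pow_ne_zero _ (X_ne_zero _))
  · intro c hc
    by_contra hcon
    push Not at hcon
    obtain ⟨k₀, hk₀⟩ := Function.ne_iff.1 hc
    obtain ⟨m, hm, hmax⟩ := exists_max_val P₀ (Finset.univ.filter fun k => c k ≠ 0)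
      ⟨k₀, by simpa using hk₀⟩ c (fun k hk => (Finset.mem_filter.1 hk).2)
    have hcm : c m ≠ 0 := (Finset.mem_filter.1 hm).2
    have hmem : ∀ k, (c m)⁻¹ * c k ∈ P₀.W := by
      intro k
      by_cases hk : c k = 0
      · rw [hk, mul_zero]; exact zero_mem _
      · have := hmax k (Finset.mem_filter.2 ⟨Finset.mem_univ _, hk⟩)
        rwa [div_eq_inv_mul] at this
    let c' : Fin (N + 2) → P₀.W := fun k => ⟨(c m)⁻¹ * c k, hmem k⟩
    have hev : ∀ i, eval c' (a i i) = 0 := by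
      intro i
      apply Subtype.val_injective
      have h1 : ((eval c' (a i i) : P₀.W) : ℂ) = eval₂ (algebraMap P₀.W ℂ) (fun k => (c m)⁻¹ * c k) (a i i) := by
        have := eval₂_comp_left (algebraMap P₀.W ℂ) (RingHom.id _) c' (a i i)
        exact this
      have h3 := hcon i i
      rw [h1, ← eval_map, ha, tri, if_pos rfl, eval,
        coe_eval₂Hom, eval₂_smul_homog _ (homog_of_mem hnn A i i)]
      have h4 : eval₂ (RingHom.id ℂ) c (A.1 i i) = 0 := h3
      rw [h4, mul_zero]; rfl
    have hzero : ∀ k, P₀.ρ (c' k) = 0 := by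
      intro k
      obtain ⟨i, rfl⟩ := hix k
      have h1 := congrArg P₀.ρ (hev i)
      have h5 : P₀.ρ (eval c' (a i i)) = eval (fun k => P₀.ρ (c' k)) (map P₀.ρ (a i i)) := by
        rw [eval_map]
        exact eval₂_comp_left P₀.ρ (RingHom.id _) c' (a i i)
      rw [h5, hd, map_pow, eval_X, map_zero] at h1
      exact eq_zero_of_pow_eq_zero h1
    have h1 : c' m = 1 := Subtype.ext (inv_mul_cancel₀ hcm)
    have := hzero m
    rw [h1, map_one] at this
    exact one_ne_zero this
end

/-! ### From degree conditions to the special bundle -/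

section
variable {N r : ℕ} {l : Fin (r + 2) → ℤ} {l₀ : ℤ}

lemma map_gGpoly {κ κ' : Type} [Field κ] [Field κ'] (f : κ →+* κ') (j : Fin (N + 2)) :
    map f (gGpoly κ j) = gGpoly κ' j := by
  have := map_gG (map f : MvPolynomial (Fin (N + 2)) κ →+* MvPolynomial (Fin (N + 2)) κ') j X
  refine this.trans ?_
  rw [gGpoly]
  congr 1
  funext i
  simp

lemma Shape.map_a₀ {J : Type} (s : Shape N J) {κ κ' : Type} [Field κ] [Field κ'] (f : κ →+* κ')
    (i j : J) : map f (s.a₀ κ i j) = s.a₀ κ' i j := by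
  have hg : ∀ b, map f (s.gfac κ b) = s.gfac κ' b := by
    intro b
    unfold Shape.gfac
    cases s.tp <;> cases b <;> simp [map_gGpoly]
  unfold Shape.a₀
  split_ifs
  · simp only [Shape.diag, map_mul, hg, map_pow, map_prod, map_X]
  · simp only [Shape.off, map_mul, map_gGpoly, map_pow, map_X]
  · exact map_zero _

/-- Algebraic independence of the coefficients allows two specialisations: to characteristic three
for the quadric bundle property, and to the special bundle in characteristic two for the rest. -/
theorem veryGen_of_shape (hNr : N ≤ r) (hnn : ∀ i j, 0 ≤ l i + l j + l₀)
    (s : Shape N (Fin (r + 2))) (hs : s.j0 = 0) (hl : s.l = l) (hl₀ : s.l₀ = l₀) :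
    VeryGenerallyOn (QB.symMatCoords (N + 1) r l l₀) fun A =>
      QB.IsQuadricBundle A ∧ IsDomain (QB.ConeRing A) ∧ ¬ QB.IsStablyRationalQB A := by
  refine veryGen (fun q A => par A q) par_mem (par_surj hnn) fun A hA => ?_
  have hQ := isQuadricBundle_of_indep hNr hnn A hA
  refine ⟨hQ, ?_⟩
  haveI : Fact (Nat.Prime 2) := ⟨Nat.prime_two⟩
  obtain ⟨κ, i1, i2, P₀, hperf, a, ha, haρ⟩ := exists_special 2 hnn A hA (s.a₀ (ZMod 2)) (by
      intro i j
      have h1 : s.e i j = (l i + l j + l₀).toNat := by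
        have := s.he i j
        rw [hl, hl₀] at this
        omega
      rw [← h1]
      exact s.a₀_homog _ i j) (by
      intro i j hij
      rw [Shape.a₀, if_neg hij.ne', if_neg]
      rintro ⟨rfl, -⟩
      rw [hs] at hij
      exact absurd hij (Fin.not_lt_zero j))
  exact geom hperf A hQ.2 a s hs hl hl₀ ha (fun i j => by rw [haρ, s.map_a₀])

/-- The enumeration of `{0,1}ⁿ` orders the fibre coordinates as required of a `Shape`. -/
theorem exists_shape (hN : 1 ≤ N) (hr1 : 2 ^ N ≤ r + 1) (hr2 : r + 2 ≤ 2 ^ (N + 1))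
    (φ : (Fin N → Bool) ≃ Fin (2 ^ N))
    (hφ : ∀ ε δ : Fin N → Bool, boolWeight ε < boolWeight δ → φ ε < φ δ)
    (hnn : ∀ i j, 0 ≤ l i + l j + l₀) (tp : Bool)
    (hd : ∀ (i : Fin (r + 2)) (ε : Fin N → Bool) (b : Bool),
      (i : ℕ) = φ ε + 2 ^ N * (if b then 1 else 0) →
      ((boolWeight ε + (bif tp then 2 * (N + 1) else bif b then 4 * (N + 1) else 0) : ℕ) : ℤ) ≤
        2 * l i + l₀) :
    ∃ s : Shape N (Fin (r + 2)), s.j0 = 0 ∧ s.l = l ∧ s.l₀ = l₀ := by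
  classical
  have hpos : 0 < 2 ^ N := Nat.two_pow_pos N
  have hpow : 2 ^ (N + 1) = 2 * 2 ^ N := by rw [pow_succ, mul_comm]
  let ε : Fin (r + 2) → Fin N → Bool := fun i => φ.symm ⟨i % 2 ^ N, Nat.mod_lt _ hpos⟩
  let b : Fin (r + 2) → Bool := fun i => decide (2 ^ N ≤ (i : ℕ))
  let S : (Fin N → Bool) → Finset (Fin N) := fun ε => Finset.univ.filter fun k => ε k = true
  have hS : Function.Injective S := by
    intro ε δ h
    funext k
    have h1 := Finset.ext_iff.1 h k
    simp only [S, Finset.mem_filter, Finset.mem_univ, true_and] at h1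
    exact Bool.eq_iff_iff.2 h1
  have hφε : ∀ i, (φ (ε i) : ℕ) = i % 2 ^ N := fun i => by simp [ε]
  have hi : ∀ i : Fin (r + 2), (i : ℕ) = φ (ε i) + 2 ^ N * (if b i then 1 else 0) := by
    intro i
    rw [hφε]
    have h1 := i.2
    by_cases h : 2 ^ N ≤ (i : ℕ)
    · have h2 : (i : ℕ) % 2 ^ N = i - 2 ^ N := by
        rw [Nat.mod_eq_sub_mod h, Nat.mod_eq_of_lt (by omega)]
      simp only [b, h, decide_true, if_true]
      omega
    · simp only [b, h, decide_false, Bool.false_eq_true, if_false]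
      rw [Nat.mod_eq_of_lt (by omega)]; omega
  have hw0 : boolWeight (fun _ : Fin N => false) = 0 := by simp [boolWeight]
  have hφ0 : (φ (fun _ => false) : ℕ) = 0 := by
    by_contra h
    have hne : φ.symm ⟨0, hpos⟩ ≠ fun _ => false := by
      intro h1
      apply h
      rw [← h1]; simp
    have hlt : boolWeight (fun _ : Fin N => false) < boolWeight (φ.symm ⟨0, hpos⟩) := by
      rw [hw0]
      obtain ⟨k, hk⟩ := Function.ne_iff.1 hne
      exact Finset.card_pos.2 ⟨k, Finset.mem_filter.2 ⟨Finset.mem_univ _, by simpa using hk⟩⟩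
    have := hφ _ _ hlt
    rw [Equiv.apply_symm_apply, Fin.lt_def] at this
    simp at this
  -- the index of a pair `(δ, b)` determines the labels
  have hlab : ∀ (i : Fin (r + 2)) δ, (i : ℕ) % 2 ^ N = φ δ → ε i = δ := by
    intro i δ h
    simp only [ε]
    rw [Equiv.symm_apply_eq]
    exact Fin.ext h
  let k : Fin N := ⟨0, hN⟩
  let δ : Fin N → Bool := fun j => decide (j = k)
  have hδ := (φ δ).2
  let s : Shape N (Fin (r + 2)) :=
  { ψ := fun i => (S (ε i), b i)
    inj := by
      intro i j h
      have h1 : ε i = ε j := hS (congrArg Prod.fst h)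
      have h2 : b i = b j := congrArg Prod.snd h
      apply Fin.ext
      rw [hi i, hi j, h1, h2]
    j0 := 0
    j1 := ⟨2 ^ N, by omega⟩
    j2 := ⟨φ δ, by omega⟩
    k := k
    h0 := by
      have h1 : ε 0 = fun _ => false := hlab _ _ (by rw [hφ0]; simp)
      have h2 : b 0 = false := by simp [b]
      rw [h1, h2]
      simp [S]
    h1 := by
      have h1 : ε ⟨2 ^ N, by omega⟩ = fun _ => false := hlab _ _ (by rw [hφ0]; simp)
      have h2 : b ⟨2 ^ N, by omega⟩ = true := by simp [b]
      rw [h1, h2]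
      simp [S]
    h2 := by
      have h1 : ε ⟨φ δ, by omega⟩ = δ := hlab _ _ (Nat.mod_eq_of_lt hδ)
      have h2 : b ⟨φ δ, by omega⟩ = false := by simp [b]
      rw [h1, h2]
      simp [S, δ, Finset.filter_eq']
    tp := tp
    l := l
    l₀ := l₀
    e := fun i j => (l i + l j + l₀).toNat
    he := fun i j => Int.toNat_of_nonneg (hnn i j)
    hdeg := by
      intro i
      have h := hd i (ε i) (b i) (hi i)
      have h2 := hnn i i
      change boolWeight (ε i) + (bif tp then 2 * (N + 1) else bif b i then 4 * (N + 1) else 0) ≤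
        (l i + l i + l₀).toNat
      omega
    hdeg1 := by
      have h1 := hd 0 (fun _ => false) false (by rw [hφ0]; simp)
      have h2 := hd ⟨2 ^ N, by omega⟩ (fun _ => false) true (by rw [hφ0]; simp)
      rw [hw0] at h1 h2
      have h3 := hnn 0 ⟨2 ^ N, by omega⟩
      cases tp
      · simp only [cond_false, cond_true] at h1 h2
        push_cast at h1 h2
        omega
      · simp only [cond_true] at h1 h2
        push_cast at h1 h2
        omega }
  exact ⟨s, rfl, rfl, rfl⟩

lemma two_mul_le_two_pow {n : ℕ} (hn : 2 ≤ n) : 2 * n ≤ 2 ^ n := by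
  induction n, hn using Nat.le_induction with
  | base => norm_num
  | succ k hk ih => rw [pow_succ]; omega

/-- Each of the four degree conditions leaves room for a special bundle: the first two for the family
with `tp = false`, the last two for the family with `tp = true`.  The special bundle uses forms
`g_j` of degree `2 n`, which is at most `2 ^ n`. -/
theorem final_aux (hN : 1 ≤ N) (hr1 : 2 ^ N - 1 ≤ r) (hr2 : r ≤ 2 ^ (N + 1) - 2)
    (d : Fin (r + 2) → ℤ) (hdpos : ∀ i, 0 ≤ d i)
    (φ : (Fin N → Bool) ≃ Fin (2 ^ N))
    (hφ : ∀ ε δ : Fin N → Bool, boolWeight ε < boolWeight δ → φ ε < φ δ)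
    (m m' mt mt' : ℕ → ℕ)
    (hm : ∀ (ε : Fin N → Bool) (b : Bool), m ((φ ε : ℕ) + 2 ^ N * (if b then 1 else 0)) =
        2 * boolWeight ε + 2 ^ (N + 1 + 1) * (if b then 1 else 0))
    (hm' : ∀ (ε : Fin N → Bool) (b : Bool), m' ((φ ε : ℕ) + 2 ^ N * (if b then 1 else 0)) =
        if ε ⟨0, hN⟩ then 2 * boolWeight ε + 2 ^ (N + 1 + 1) * (if b then 1 else 0) - 1
        else 2 * boolWeight ε + 2 ^ (N + 1 + 1) * (if b then 1 else 0) + 1)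
    (hmt : ∀ (ε : Fin N → Bool) (b : Bool),
      mt ((φ ε : ℕ) + 2 ^ N * (if b then 1 else 0)) = 2 ^ (N + 1) + (N + 1) - 1)
    (hmt' : ∀ (ε : Fin N → Bool) (b : Bool),
      mt' ((φ ε : ℕ) + 2 ^ N * (if b then 1 else 0)) =
        if ε ⟨0, hN⟩ then 2 ^ (N + 1) + (N + 1) else 2 ^ (N + 1) + (N + 1) - 2)
    (hcase :
      (∀ i : Fin (r + 2), (m i.val : ℤ) ≤ d i) ∨ (∀ i : Fin (r + 2), (m' i.val : ℤ) ≤ d i) ∨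
      (∀ i : Fin (r + 2), (mt i.val : ℤ) ≤ d i) ∨ (∀ i : Fin (r + 2), (mt' i.val : ℤ) ≤ d i))
    (hl : ∀ i, d i = 2 * l i + l₀) :
    VeryGenerallyOn (QB.symMatCoords (N + 1) r l l₀) fun A =>
      QB.IsQuadricBundle A ∧ IsDomain (QB.ConeRing A) ∧ ¬ QB.IsStablyRationalQB A := by
  classical
  have hnn : ∀ i j, 0 ≤ l i + l j + l₀ := by
    intro i j
    have := hdpos i
    have := hdpos j
    have := hl i
    have := hl j
    omega
  have hNp : N < 2 ^ N := Nat.lt_two_pow_self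
  have hpow : 2 ^ (N + 1) = 2 * 2 ^ N := by rw [pow_succ, mul_comm]
  have hpow2 : 2 ^ (N + 1 + 1) = 4 * 2 ^ N := by rw [pow_succ, pow_succ]; ring
  have hn := two_mul_le_two_pow (n := N + 1) (by omega)
  have hle : ∀ ε : Fin N → Bool, boolWeight ε ≤ N := fun ε => by
    simpa [boolWeight] using Finset.card_filter_le (Finset.univ : Finset (Fin N)) (fun i => ε i = true)
  have hge : ∀ ε : Fin N → Bool, ε ⟨0, hN⟩ = true → 1 ≤ boolWeight ε := fun ε h =>
    Finset.card_pos.2 ⟨⟨0, hN⟩, by simpa using h⟩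
  have hlt : ∀ ε : Fin N → Bool, ε ⟨0, hN⟩ ≠ true → boolWeight ε + 1 ≤ N := fun ε h => by
    have : boolWeight ε < (Finset.univ : Finset (Fin N)).card := by
      refine Finset.card_lt_card ?_
      rw [Finset.ssubset_iff_of_subset (Finset.filter_subset _ _)]
      exact ⟨⟨0, hN⟩, Finset.mem_univ _, by simpa using h⟩
    simpa using this
  have main : ∃ tp : Bool, ∀ (i : Fin (r + 2)) (ε : Fin N → Bool) (b : Bool),
      (i : ℕ) = φ ε + 2 ^ N * (if b then 1 else 0) →
      ((boolWeight ε + (bif tp then 2 * (N + 1) else bif b then 4 * (N + 1) else 0) : ℕ) : ℤ) ≤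
        2 * l i + l₀ := by
    rcases hcase with h | h | h | h
    · refine ⟨false, fun i ε b hi => ?_⟩
      have h1 := h i
      rw [hi, hm, hl] at h1
      refine le_trans ?_ h1
      rw [Nat.cast_le]
      cases b <;> simp <;> omega
    · refine ⟨false, fun i ε b hi => ?_⟩
      have h1 := h i
      rw [hi, hm', hl] at h1
      refine le_trans ?_ h1
      rw [Nat.cast_le]
      by_cases h0 : ε ⟨0, hN⟩ = true
      · have := hge ε h0
        rw [if_pos h0]
        cases b <;> simp <;> omega
      · rw [if_neg h0]
        cases b <;> simp <;> omega
    · refine ⟨true, fun i ε b hi => ?_⟩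
      have h1 := h i
      rw [hi, hmt, hl] at h1
      refine le_trans ?_ h1
      rw [Nat.cast_le]
      have := hle ε
      simp only [cond_true]
      omega
    · refine ⟨true, fun i ε b hi => ?_⟩
      have h1 := h i
      rw [hi, hmt', hl] at h1
      refine le_trans ?_ h1
      rw [Nat.cast_le]
      simp only [cond_true]
      by_cases h0 : ε ⟨0, hN⟩ = true
      · have := hle ε
        rw [if_pos h0]
        omega
      · have := hlt ε h0
        rw [if_neg h0]
        omega
  obtain ⟨tp, htp⟩ := main
  obtain ⟨s, hs, hsl, hsl₀⟩ := exists_shape (l := l) (l₀ := l₀) hN (by omega) (by omega) φ hφ hnn tp htp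
  exact veryGen_of_shape (by omega) hnn s hs hsl hsl₀
end

end QBProof

/-- **Theorem 7.1 (Schreieder).**  Let `n, r` be positive integers with
`2^{n-1} - 1 ≤ r ≤ 2ⁿ - 2` and let `(d_i)_{0 ≤ i ≤ r+1}` be non-negative integers of the
same parity.  Let `m_i, m_i', m̃_i, m̃_i'` be the degrees of the polynomials
`c_i, c_i', c̃_i, c̃_i'` of the CTO-type construction (enumerated through a bijection
`φ' : {0,1}^{n-1} ≃ {0,…,2^{n-1}-1}` monotone for the number of nonzero entries, via
`i = φ'(ε') + 2^{n-1} εₙ`; explicitly `m_ε = 2|ε'| + 2^{n+1} εₙ`,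
`m_ε' = m_ε ∓ 1` according to whether `ε₁ = 1` or not, `m̃_ε = 2ⁿ + n - 1` and
`m̃_ε' = m̃_ε ± 1` according to whether `ε₁ = 1` or not).  Suppose that one of the
following holds:
(1) `d₀` is even and `d_i ≥ m_i` for all `i`;
(2) `d₀` is odd and `d_i ≥ m_i'` for all `i`;
(3) `d₀` has the same parity as `m̃₀` and `d_i ≥ m̃_i` for all `i`;
(4) `d₀` has the same parity as `m̃₀'` and `d_i ≥ m̃_i'` for all `i`.
Then a very general complex `r`-fold quadric bundle of type `(d_i)` over `ℙⁿ` is not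
stably rational. -/
theorem very_general_quadric_bundle_of_type_d_not_stably_rational
    (n r : ℕ) (hn : 2 ≤ n) (hr : 0 < r)
    (hr1 : 2^(n-1) - 1 ≤ r) (hr2 : r ≤ 2^n - 2)
    (d : Fin (r+2) → ℤ)
    (hdpos : ∀ i, 0 ≤ d i)
    (hparity : ∀ i j, Even (d i - d j))
    (φ : (Fin (n-1) → Bool) ≃ Fin (2^(n-1)))
    (hφ : ∀ ε δ : Fin (n-1) → Bool, boolWeight ε < boolWeight δ → φ ε < φ δ)
    (m m' mt mt' : ℕ → ℕ)
    (hm : ∀ (ε : Fin (n-1) → Bool) (b : Bool),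
      m ((φ ε : ℕ) + 2^(n-1) * (if b then 1 else 0)) =
        2 * boolWeight ε + 2^(n+1) * (if b then 1 else 0))
    (hm' : ∀ (ε : Fin (n-1) → Bool) (b : Bool),
      m' ((φ ε : ℕ) + 2^(n-1) * (if b then 1 else 0)) =
        if ε ⟨0, by omega⟩ then
          2 * boolWeight ε + 2^(n+1) * (if b then 1 else 0) - 1
        else 2 * boolWeight ε + 2^(n+1) * (if b then 1 else 0) + 1)
    (hmt : ∀ (ε : Fin (n-1) → Bool) (b : Bool),
      mt ((φ ε : ℕ) + 2^(n-1) * (if b then 1 else 0)) = 2^n + n - 1)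
    (hmt' : ∀ (ε : Fin (n-1) → Bool) (b : Bool),
      mt' ((φ ε : ℕ) + 2^(n-1) * (if b then 1 else 0)) =
        if ε ⟨0, by omega⟩ then 2^n + n else 2^n + n - 2)
    (hcase :
      (Even (d 0) ∧ ∀ i : Fin (r+2), (m i.val : ℤ) ≤ d i) ∨
      (Odd (d 0) ∧ ∀ i : Fin (r+2), (m' i.val : ℤ) ≤ d i) ∨
      (Even (d 0 - (mt 0 : ℤ)) ∧ ∀ i : Fin (r+2), (mt i.val : ℤ) ≤ d i) ∨
      (Even (d 0 - (mt' 0 : ℤ)) ∧ ∀ i : Fin (r+2), (mt' i.val : ℤ) ≤ d i))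
    (l : Fin (r+2) → ℤ) (l₀ : ℤ) (hl : ∀ i, d i = 2 * l i + l₀) :
    VeryGenerallyOn (QB.symMatCoords n r l l₀) fun A =>
      QB.IsQuadricBundle A ∧ IsDomain (QB.ConeRing A) ∧ ¬ QB.IsStablyRationalQB A := by
  obtain ⟨N, rfl⟩ : ∃ N, n = N + 1 := ⟨n - 1, by omega⟩
  refine QBProof.final_aux (N := N) (by omega) hr1 hr2 d hdpos φ hφ m m' mt mt' hm hm' hmt hmt'
    ?_ hl
  rcases hcase with h | h | h | h
  · exact Or.inl h.2
  · exact Or.inr (Or.inl h.2)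
  · exact Or.inr (Or.inr (Or.inl h.2))
  · exact Or.inr (Or.inr (Or.inr h.2))
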